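/- There exist a constant c > 0 and a positive integer k such that for every positive integer n there exist partial maps f₁, …, f_k, each defined on a subset of {1,…,n} with values in {1,…,n} and each strictly increasing on its domain (x < y implies f_i(x) < f_i(y)), such that for every A ⊆ {1,…,n} with |A| ≤ n/2, the image set f₁(A ∩ dom f₁) ∪ … ∪ f_k(A ∩ dom f_k) has cardinality at least (1+c)·|A|. -/

import Mathlib

/-!
Expansion of sets under finitely many Möbius maps near the identity is deduced from a spectral gap for
an averaging operator on `L²(ℝ)`.

**The representation.** Matrices act on the functions on the plane that are homogeneous of degree `-1`
by `(rho g f) w = √|det g| f (g w)`. Restricting to the line `y = 1` identifies these functions with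
`L²(ℝ)`; the action is isometric, depends on `g` only up to scalars, and is the action by Möbius maps
with its natural weight. For a large prime `p` there is a set `S` of at least `c₀ p` integer matrices of
determinant `p` all of whose quotients `p⁻¹ s adj(s')` are near the identity (`exists_good_set`). The
operator studied is the average `U` of the `rho (s adj s')`; it has the form `TᵀT` (`ip_UU_one`), so it
is positive semidefinite.

**The gap at one scale** (`mixing`). Let `G` be a step function of mesh comparable to `1 / N` with zero
mean on the cells of length `1 / N`. The number `⟨Uⁿ G, G⟩` is the average of the matrix coefficients of
`G` over words of length `n` in the `s adj(s')`. By unique factorization a matrix not divisible by `p`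
is represented by few words (`count_pw_le`), and by the divisor bound there are few integer matrices
of determinant `P²` near the scalar matrix `P` (`card_near_scalar`). Hence the words are equidistributed
at a fine scale, up to a factor exponential in `n` and a small power of `pⁿ` (`card_near_pw`). Over a box
of real matrices the mean square of the matrix coefficients is small, because of the zero means of `G`
(`mix_box`). A large sieve inequality transfers this to the words (`large_sieve`, `UU_le`). With
`X = p ^ (1 / 128)` and `n` a power of two such that `N` lies between `(Xⁿ)¹⁶` and `(Xⁿ)³²`, the outcome is
`⟨Uⁿ G, G⟩ ≤ κⁿ ‖G‖²`: the gain is a power of `Xⁿ`, which beats `κ⁻ⁿ` and every constant to the power `n`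
as soon as `p` is large. Log-convexity of moments (`ip_UU_pow`) then gives `⟨U G, G⟩ ≤ κ ‖G‖²`.

**The gap at all scales** (`gap`). A step function with zero mean on `K` coarse cells is a sum of
martingale differences, one for each scale. The quadratic form is small on each of them by `mixing`, and
distant scales are almost orthogonal (`UU_off`); Schur's test sums the contributions.

**Expansion** (`core`). Suppose that `B` contains the images of `A` and has fewer than `11 / 10` times as
many elements. On the partition of `[0, 1)` into `N` cells, where `n` is close to `N`, the Möbius maps send
`A` into `B`, so `⟨U 1_B, 1_A⟩` is at least about `|A| / N`. Write `1_A` as the sum of its averages `E` over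
coarse cells and a function of zero mean on these cells. Translations by multiples of the block length
keep `A` in `B`, so `E` is at most about `|B| / N` pointwise (`block_card`), and it contributes at most
about `(|B| / N)²`; as `|A| ≤ n / 2`, this is well below `|A| / N`. The other part contributes little by
Cauchy–Schwarz for the form of `U` (`UU_cs`) and the gap. This is a contradiction.

**The maps** are the translations by multiples of the block length and the Möbius maps rounded to the
grid. The slope of the latter is at least `1 / 2` (`mob_slope`), so they are strictly increasing on each
of the two parity classes. For bounded `n` all single-point maps are used instead.
-/

/-! ### The divisor bound -/

theorem succ_le_two_rpow (η : ℝ) (hη : 0 < η) (hη1 : η ≤ 1) (e : ℕ) :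
    ((e : ℝ) + 1) ≤ (2 / η) * (2 : ℝ) ^ (η * e) := by
  have hlog : (1 / 2 : ℝ) ≤ Real.log 2 := by have := Real.log_two_gt_d9; linarith
  have h1 : 1 + η * e * Real.log 2 ≤ (2 : ℝ) ^ (η * e) := by
    rw [Real.rpow_def_of_pos (by norm_num)]
    have := Real.add_one_le_exp (Real.log 2 * (η * e))
    linarith
  have he : (0 : ℝ) ≤ e := Nat.cast_nonneg e
  have h2 : 1 + η * e * (1 / 2) ≤ (2 : ℝ) ^ (η * e) := by
    have : η * e * (1 / 2) ≤ η * e * Real.log 2 :=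
      mul_le_mul_of_nonneg_left hlog (by positivity)
    linarith
  rw [div_mul_eq_mul_div, le_div_iff₀ hη]
  nlinarith

/-- The divisor bound `d(n) = O(n ^ η)`: only the primes below `2 ^ (1 / η)` contribute a constant
factor. -/
theorem card_divisors_le_rpow (η : ℝ) (hη : 0 < η) (hη1 : η ≤ 1) :
    ∃ C : ℝ, 1 ≤ C ∧ ∀ n : ℕ, n ≠ 0 → ((n.divisors.card : ℕ) : ℝ) ≤ C * (n : ℝ) ^ η := by
  obtain ⟨P, hP⟩ := exists_nat_ge ((2 : ℝ) ^ (1 / η))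
  have h2η : 1 ≤ 2 / η := by rw [le_div_iff₀ hη]; linarith
  refine ⟨(2 / η) ^ P, one_le_pow₀ h2η, fun n hn => ?_⟩
  have hfac : (n : ℝ) ^ η = ∏ q ∈ n.primeFactors, (q : ℝ) ^ (η * n.factorization q) := by
    conv_lhs => rw [← Nat.prod_factorization_pow_eq_self hn]
    rw [Finsupp.prod, Nat.support_factorization, Nat.cast_prod,
      ← Real.finsetProd_rpow _ _ (fun i _ => by positivity)]
    refine Finset.prod_congr rfl fun q _ => ?_
    rw [Nat.cast_pow, ← Real.rpow_natCast, ← Real.rpow_mul (by positivity), mul_comm]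
  rw [Nat.card_divisors hn, hfac, Nat.cast_prod]
  have hpt : ∀ q ∈ n.primeFactors, (((n.factorization q + 1 : ℕ)) : ℝ) ≤
      (if q < P then 2 / η else 1) * (q : ℝ) ^ (η * n.factorization q) := by
    intro q hq
    have hq2 : (2 : ℝ) ≤ q := by exact_mod_cast (Nat.prime_of_mem_primeFactors hq).two_le
    have hle : (2 : ℝ) ^ (η * n.factorization q) ≤ (q : ℝ) ^ (η * n.factorization q) :=
      Real.rpow_le_rpow (by norm_num) hq2 (by positivity)
    push_cast
    split_ifs with h
    · exact (succ_le_two_rpow η hη hη1 _).trans (mul_le_mul_of_nonneg_left hle (by positivity))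
    · have h3 : (2 : ℝ) ≤ (q : ℝ) ^ η := by
        have : (2 : ℝ) ^ (1 / η) ≤ q := hP.trans (by exact_mod_cast not_lt.mp h)
        calc (2 : ℝ) = ((2 : ℝ) ^ (1 / η)) ^ η := by
              rw [← Real.rpow_mul (by norm_num), one_div_mul_cancel hη.ne', Real.rpow_one]
          _ ≤ _ := Real.rpow_le_rpow (by positivity) this hη.le
      rw [one_mul, Real.rpow_mul (by positivity), Real.rpow_natCast]
      calc ((n.factorization q : ℝ) + 1) ≤ 2 ^ (n.factorization q) := by
            exact_mod_cast Nat.succ_le_of_lt Nat.lt_two_pow_self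
        _ ≤ _ := pow_le_pow_left₀ (by norm_num) h3 _
  refine (Finset.prod_le_prod (fun _ _ => by positivity) hpt).trans ?_
  rw [Finset.prod_mul_distrib]
  refine mul_le_mul_of_nonneg_right ?_ (Finset.prod_nonneg fun _ _ => by positivity)
  rw [Finset.prod_ite, Finset.prod_const_one, mul_one, Finset.prod_const]
  refine pow_le_pow_right₀ h2η ?_
  calc _ ≤ (Finset.range P).card := Finset.card_le_card (fun q hq => by
        simp only [Finset.mem_filter] at hq; simpa using hq.2)
    _ = P := by simp

/-! ### Clusters of integer matrices of determinant `p` -/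

/-- Counts the pairs in `[1, X]²` with a common divisor `d`, summed over `d ≥ 2`; this is the union
bound behind `card_coprime_pairs`. -/
theorem sum_sq_div_le (X : ℕ) :
    4 * ∑ r ∈ Finset.Icc 2 X, (X / r) ^ 2 ≤ 3 * X ^ 2 := by
  have h1 : ∀ Y : ℕ, 1 ≤ Y → ∑ r ∈ Finset.Icc 2 Y, (1 / (r : ℝ)) ^ 2 ≤ 3 / 4 - (if Y = 1 then 3/4 else 1 / (Y : ℝ) - 0) := by
    intro Y hY
    induction Y, hY using Nat.le_induction with
    | base => simp
    | succ n hn ih =>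
      rw [Finset.sum_Icc_succ_top (by omega)]
      rcases Nat.lt_or_ge 1 n with h | h
      · have hn0 : (0 : ℝ) < n := by exact_mod_cast (by omega : 0 < n)
        rw [if_neg (by omega)] at ih ⊢
        push_cast
        have : (1 / ((n : ℝ) + 1)) ^ 2 ≤ 1 / n - 1 / (n + 1) := by
          rw [div_pow, one_pow, div_sub_div _ _ hn0.ne' (by positivity), div_le_div_iff₀ (by positivity) (by positivity)]
          nlinarith
        linarith
      · have : n = 1 := by omega
        subst this
        norm_num
  rcases Nat.eq_zero_or_pos X with rfl | hX
  · simp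
  have h2 := h1 X hX
  have h3 : ∑ r ∈ Finset.Icc 2 X, (1 / (r : ℝ)) ^ 2 ≤ 3 / 4 := by
    refine h2.trans ?_
    split_ifs
    · norm_num
    · have : (0 : ℝ) ≤ 1 / (X : ℝ) := by positivity
      linarith
  have h4 : ((∑ r ∈ Finset.Icc 2 X, (X / r) ^ 2 : ℕ) : ℝ) ≤ (X : ℝ) ^ 2 * ∑ r ∈ Finset.Icc 2 X, (1 / (r : ℝ)) ^ 2 := by
    push_cast
    rw [Finset.mul_sum]
    refine Finset.sum_le_sum fun r _ => ?_
    rw [← mul_pow, mul_one_div]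
    exact pow_le_pow_left₀ (by positivity) Nat.cast_div_le 2
  have h5 : (4 : ℝ) * ((∑ r ∈ Finset.Icc 2 X, (X / r) ^ 2 : ℕ) : ℝ) ≤ 3 * (X : ℝ) ^ 2 := by
    nlinarith [sq_nonneg (X : ℝ)]
  exact_mod_cast h5

/-- At least a quarter of the pairs in `[1, X]²` are coprime. -/
theorem card_coprime_pairs (X : ℕ) :
    X ^ 2 ≤ 4 * ((Finset.Icc 1 X ×ˢ Finset.Icc 1 X).filter fun q => Nat.Coprime q.1 q.2).card := by
  have h := Finset.card_filter_add_card_filter_not (s := Finset.Icc 1 X ×ˢ Finset.Icc 1 X)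
    (fun q => Nat.Coprime q.1 q.2)
  rw [Finset.card_product, Nat.card_Icc, Nat.add_sub_cancel, ← sq] at h
  have h2 : ((Finset.Icc 1 X ×ˢ Finset.Icc 1 X).filter fun q => ¬ Nat.Coprime q.1 q.2).card ≤
      ∑ r ∈ Finset.Icc 2 X, (X / r) ^ 2 := by
    calc _ ≤ ((Finset.Icc 2 X).biUnion fun r =>
          ((Finset.Icc 1 (X / r)) ×ˢ (Finset.Icc 1 (X / r))).image
            fun q => (r * q.1, r * q.2)).card := by
          refine Finset.card_le_card fun q hq => ?_
          simp only [Finset.mem_filter, Finset.mem_product, Finset.mem_Icc] at hq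
          obtain ⟨⟨⟨ha, ha'⟩, hc, hc'⟩, hn⟩ := hq
          have hg : 0 < Nat.gcd q.1 q.2 := Nat.gcd_pos_of_pos_left _ ha
          have hg1 : Nat.gcd q.1 q.2 ≠ 1 := hn
          have hgle : Nat.gcd q.1 q.2 ≤ q.1 := Nat.gcd_le_left _ ha
          obtain ⟨u, hu⟩ := Nat.gcd_dvd_left q.1 q.2
          obtain ⟨v, hv⟩ := Nat.gcd_dvd_right q.1 q.2
          simp only [Finset.mem_biUnion, Finset.mem_image, Finset.mem_product, Finset.mem_Icc]
          refine ⟨Nat.gcd q.1 q.2, by omega, (u, v), ⟨⟨?_, ?_⟩, ?_, ?_⟩, ?_⟩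
          · rcases Nat.eq_zero_or_pos u with h0 | h0
            · rw [h0] at hu; omega
            · exact h0
          · rw [Nat.le_div_iff_mul_le hg, mul_comm]; exact hu ▸ ha'
          · rcases Nat.eq_zero_or_pos v with h0 | h0
            · rw [h0] at hv; omega
            · exact h0
          · rw [Nat.le_div_iff_mul_le hg, mul_comm]; exact hv ▸ hc'
          · exact Prod.ext hu.symm hv.symm
      _ ≤ ∑ r ∈ Finset.Icc 2 X, (X / r) ^ 2 := by
          refine Finset.card_biUnion_le.trans (Finset.sum_le_sum fun r _ => ?_)
          refine Finset.card_image_le.trans ?_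
          simp [sq]
  have h3 := sum_sq_div_le X
  omega

/-- Integer `2 × 2` matrices. -/
abbrev M2Z := Matrix (Fin 2) (Fin 2) ℤ

/-- The matrix with first column `(a, c)`, determinant `p` and `0 ≤ b < a`. -/
theorem exists_completion (p a c : ℕ) (ha : 0 < a) (hac : Nat.Coprime a c) :
    ∃ b d : ℕ, b < a ∧ a * d = p + b * c := by
  obtain ⟨b, hb⟩ : ∃ b : ℕ, a ∣ p + b * c := by
    obtain ⟨m, hm⟩ := Nat.exists_mul_mod_eq_of_coprime ((a - 1) * p) hac.symm ha.ne'
    refine ⟨m, ?_⟩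
    have h1 : (p + m * c) ≡ p + (a - 1) * p [MOD a] := by
      rw [mul_comm m c]; exact Nat.ModEq.add_left p hm.2
    have h2 : p + (a - 1) * p = a * p := by
      obtain ⟨a', rfl⟩ : ∃ a', a = a' + 1 := ⟨a - 1, by omega⟩
      simp; ring
    rw [h2] at h1
    exact (Nat.modEq_zero_iff_dvd.mp (h1.trans (by simp [Nat.ModEq])))
  refine ⟨b % a, (p + (b % a) * c) / a, Nat.mod_lt _ ha, Nat.mul_div_cancel' ?_⟩
  rw [Nat.dvd_iff_mod_eq_zero] at hb ⊢
  rw [← hb]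
  simp [Nat.add_mod, Nat.mul_mod]

/-- For every mesh parameter `M` there are at least `c₀ p` matrices of determinant `p` with entries
`O(√p)` inside a box of side `√p / M`: coprime first columns give many matrices, and some small box
contains a positive proportion of them. -/
theorem exists_cluster (M : ℕ) (hM : 1 ≤ M) :
    ∃ c0 : ℝ, 0 < c0 ∧ c0 ≤ 1 ∧ ∀ p : ℕ, M ^ 2 ≤ p → 
      ∃ S : Finset M2Z, c0 * p ≤ S.card ∧
        (∀ s ∈ S, s.det = p ∧ ∀ i j, 0 ≤ s i j ∧ s i j ≤ 33 * (Nat.sqrt p : ℤ)) ∧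
        ∀ s ∈ S, ∀ s' ∈ S, ∀ i j, |s i j - s' i j| * M ≤ (Nat.sqrt p : ℤ) := by
  refine ⟨1 / (32 * (66 * M + 1) ^ 4), by positivity, ?_, fun p hp => ?_⟩
  · rw [div_le_one (by positivity)]
    have : (1 : ℝ) ≤ (66 * M + 1) ^ 4 := one_le_pow₀ (by linarith [(Nat.cast_nonneg M : (0 : ℝ) ≤ M)])
    linarith
  set X := Nat.sqrt p with hX
  have hMX : M ≤ X := by rw [hX, Nat.le_sqrt, ← sq]; exact hp
  have hX1 : 1 ≤ X := hM.trans hMX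
  have hpX : p < (X + 1) ^ 2 := by rw [sq]; exact Nat.lt_succ_sqrt p
  have hp4 : p ≤ 4 * X ^ 2 := by nlinarith
  set q := X / M with hq
  have hq1 : 1 ≤ q := Nat.div_pos hMX hM
  have hqM : q * M ≤ X := Nat.div_mul_le_self X M
  have hX2 : X ≤ 2 * q * M := by
    have : X < (q + 1) * M := by
      have := Nat.lt_div_mul_add (a := X) hM
      rw [add_mul, one_mul]; exact this
    nlinarith
  set Q := (Finset.Icc 1 X ×ˢ Finset.Icc 1 X).filter
    (fun z => Nat.Coprime z.1 z.2 ∧ X < 8 * z.1) with hQ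
  have hQc : X ^ 2 ≤ 8 * Q.card := by
    have h1 := card_coprime_pairs X
    have h2 : ((Finset.Icc 1 X ×ˢ Finset.Icc 1 X).filter fun q => Nat.Coprime q.1 q.2).card ≤
        Q.card + X / 8 * X := by
      calc _ ≤ (Q ∪ Finset.Icc 1 (X / 8) ×ˢ Finset.Icc 1 X).card := by
            refine Finset.card_le_card fun z hz => ?_
            simp only [hQ, Finset.mem_union, Finset.mem_filter, Finset.mem_product,
              Finset.mem_Icc] at hz ⊢
            by_cases h : X < 8 * z.1
            · exact Or.inl ⟨hz.1, hz.2, h⟩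
            · right; omega
        _ ≤ _ := by
            refine (Finset.card_union_le _ _).trans ?_
            simp
    have h3 : 8 * (X / 8 * X) ≤ X ^ 2 := by
      rw [← mul_assoc, sq]; exact Nat.mul_le_mul_right _ (Nat.mul_div_le X 8)
    omega
  have hex : ∀ z : ℕ × ℕ, ∃ bd : ℕ × ℕ, z ∈ Q → bd.1 < z.1 ∧ z.1 * bd.2 = p + bd.1 * z.2 := by
    intro z
    by_cases hz : z ∈ Q
    · simp only [hQ, Finset.mem_filter, Finset.mem_product, Finset.mem_Icc] at hz
      obtain ⟨b, d, h⟩ := exists_completion p z.1 z.2 hz.1.1.1 hz.2.1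
      exact ⟨(b, d), fun _ => h⟩
    · exact ⟨(0, 0), fun h => absurd h hz⟩
  choose bd hbd using hex
  have hbdd : ∀ z ∈ Q, z.1 ≤ X ∧ z.2 ≤ X ∧ (bd z).1 ≤ X ∧ (bd z).2 ≤ 33 * X := by
    intro z hz
    have h := hbd z hz
    simp only [hQ, Finset.mem_filter, Finset.mem_product, Finset.mem_Icc] at hz
    obtain ⟨⟨⟨h1, h2⟩, h3, h4⟩, h5, h6⟩ := hz
    refine ⟨h2, h4, by omega, ?_⟩
    have h7 : (bd z).1 * z.2 ≤ z.1 * X := Nat.mul_le_mul h.1.le h4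
    by_contra hcon
    push Not at hcon
    have h8 : z.1 * (33 * X + 1) ≤ z.1 * (bd z).2 := Nat.mul_le_mul_left _ hcon
    nlinarith
  let box : ℕ × ℕ → ℕ × ℕ × ℕ × ℕ :=
    fun z => (z.1 / q, z.2 / q, (bd z).1 / q, (bd z).2 / q)
  set T := Finset.range (66 * M + 1) ×ˢ Finset.range (66 * M + 1) ×ˢ
    Finset.range (66 * M + 1) ×ˢ Finset.range (66 * M + 1) with hT
  have hle : ∀ y, y ≤ 33 * X → y / q < 66 * M + 1 := by
    intro y hy
    rw [Nat.lt_succ_iff]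
    refine (Nat.div_le_div_right hy).trans ?_
    refine Nat.div_le_of_le_mul ?_
    nlinarith
  have hmaps : ∀ z ∈ Q, box z ∈ T := by
    intro z hz
    have h := hbdd z hz
    simp only [hT, box, Finset.mem_product, Finset.mem_range]
    exact ⟨hle _ (by omega), hle _ (by omega), hle _ (by omega), hle _ (by omega)⟩
  have hTc : T.card = (66 * M + 1) ^ 4 := by
    simp only [hT, Finset.card_product, Finset.card_range]; ring
  have hTne : T.Nonempty := by
    rw [← Finset.card_pos, hTc]; positivity
  obtain ⟨y, -, hy⟩ := Finset.exists_le_card_fiber_of_nsmul_le_card_of_maps_to hmaps hTne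
    (b := (Q.card : ℝ) / (66 * M + 1) ^ 4)
    (by rw [nsmul_eq_mul, hTc]; push_cast; rw [mul_div_cancel₀ _ (by positivity)])
  let mat : ℕ × ℕ → M2Z := fun z => !![(z.1 : ℤ), ((bd z).1 : ℤ); (z.2 : ℤ), ((bd z).2 : ℤ)]
  have hinj : Function.Injective mat := by
    intro z z' h
    have h1 := congrFun (congrFun h 0) 0
    have h2 := congrFun (congrFun h 1) 0
    simp [mat] at h1 h2
    exact Prod.ext h1 h2
  refine ⟨(Q.filter fun z => box z = y).image mat, ?_, ?_, ?_⟩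
  · rw [Finset.card_image_of_injective _ hinj]
    refine le_trans ?_ hy
    have h1 : (p : ℝ) ≤ 4 * X ^ 2 := by exact_mod_cast hp4
    have h2 : (X : ℝ) ^ 2 ≤ 8 * Q.card := by exact_mod_cast hQc
    rw [div_mul_eq_mul_div, one_mul, div_le_div_iff₀ (by positivity) (by positivity)]
    have : (p : ℝ) ≤ 32 * Q.card := by linarith
    have h5 : (0 : ℝ) ≤ (66 * M + 1) ^ 4 := by positivity
    nlinarith
  · intro s hs
    simp only [Finset.mem_image, Finset.mem_filter] at hs
    obtain ⟨z, ⟨hz, -⟩, rfl⟩ := hs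
    have h := hbd z hz
    have h' := hbdd z hz
    refine ⟨?_, ?_⟩
    · have h2 : (z.1 : ℤ) * (bd z).2 = p + (bd z).1 * z.2 := by exact_mod_cast h.2
      simp only [mat, Matrix.det_fin_two_of]; linarith
    · intro i j
      fin_cases i <;> fin_cases j <;> simp [mat] <;> omega
  · intro s hs s' hs' i j
    simp only [Finset.mem_image, Finset.mem_filter] at hs hs'
    obtain ⟨z, ⟨hz, hzy⟩, rfl⟩ := hs
    obtain ⟨z', ⟨hz', hzy'⟩, rfl⟩ := hs'
    have key : ∀ u v : ℕ, u / q = v / q → |(u : ℤ) - v| * M ≤ X := by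
      intro u v huv
      have h1 : |(u : ℤ) - v| ≤ q := by
        have a1 := Nat.div_add_mod u q
        have a2 := Nat.div_add_mod v q
        have a3 := Nat.mod_lt u hq1
        have a4 := Nat.mod_lt v hq1
        rw [huv] at a1
        rw [abs_le]
        constructor <;> omega
      calc |(u : ℤ) - v| * M ≤ (q : ℤ) * M := by gcongr
        _ ≤ X := by exact_mod_cast hqM
    have hb : box z = box z' := hzy.trans hzy'.symm
    simp only [box, Prod.mk.injEq] at hb
    obtain ⟨b1, b2, b3, b4⟩ := hb
    fin_cases i <;> fin_cases j <;> simp only [mat]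
    · exact key _ _ b1
    · exact key _ _ b3
    · exact key _ _ b2
    · exact key _ _ b4

/-! ### Multiplicities of words -/

/-- The multiset of products of words whose `i`-th letter ranges over `S i`. -/
def wd (S : ℕ → Finset M2Z) : ℕ → Multiset M2Z
  | 0 => {1}
  | n + 1 => (wd S n).bind fun g => (S n).val.map fun s => g * s

theorem det_of_mem_wd (p : ℕ) (S : ℕ → Finset M2Z) (hdet : ∀ n, ∀ s ∈ S n, s.det = p) (n : ℕ) :
    ∀ g ∈ wd S n, g.det = (p : ℤ) ^ n := by
  induction n with
  | zero => intro g hg; simp [wd] at hg; simp [hg]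
  | succ n ih =>
    intro g hg
    simp only [wd, Multiset.mem_bind, Multiset.mem_map] at hg
    obtain ⟨h, hh, s, hs, rfl⟩ := hg
    rw [Matrix.det_mul, ih h hh, hdet n s hs, pow_succ]

theorem count_wd_succ (S : ℕ → Finset M2Z) (n : ℕ) (g : M2Z) :
    (wd S (n + 1)).count g = ∑ s ∈ S n, ((wd S n).map fun h => h * s).count g := by
  rw [wd, Multiset.bind_map_comm, Multiset.count_bind]
  rfl

theorem mul_right_inj_of_det (p : ℕ) (hp : p ≠ 0) (s : M2Z) (hs : s.det = p) :
    Function.Injective fun h : M2Z => h * s := by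
  intro h h' hh
  have h1 : h * s * s.adjugate = h' * s * s.adjugate := by
    simp only at hh; rw [hh]
  rw [mul_assoc, mul_assoc, Matrix.mul_adjugate, hs, Matrix.mul_smul, Matrix.mul_smul, mul_one,
    mul_one] at h1
  exact smul_right_injective _ (by exact_mod_cast hp) h1

/-- If the primitive matrix `g` is a multiple of both letters `s` and `s'` then `p` divides
`s' * adj s`. -/
theorem dvd_of_common (p : ℕ) (hp : p.Prime) (s s' g h h' : M2Z) (hs : s.det = p) (hs' : s'.det = p)
    (hg : ¬ ∃ k : M2Z, g = (p : ℤ) • k) (e : g = h * s) (e' : g = h' * s') :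
    ∃ k : M2Z, s' * s.adjugate = (p : ℤ) • k := by
  have hpz : Prime (p : ℤ) := Nat.prime_iff_prime_int.mp hp
  obtain ⟨i, hi⟩ : ∃ i : Fin 2, ∃ j, ¬ (p : ℤ) ∣ g i j := by
    by_contra hcon
    push Not at hcon
    choose k hk using hcon
    exact hg ⟨Matrix.of k, by ext i j; simpa using hk i j⟩
  have d1 : g * s.adjugate = (p : ℤ) • h := by
    rw [e, mul_assoc, Matrix.mul_adjugate, hs, Matrix.mul_smul, mul_one]
  have d2 : g * s'.adjugate = (p : ℤ) • h' := by
    rw [e', mul_assoc, Matrix.mul_adjugate, hs', Matrix.mul_smul, mul_one]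
  have r1 := congrFun (congrFun d1 i) 0
  have r2 := congrFun (congrFun d1 i) 1
  have r3 := congrFun (congrFun d2 i) 0
  have r4 := congrFun (congrFun d2 i) 1
  rw [Matrix.det_fin_two] at hs hs'
  simp [Matrix.mul_apply, Fin.sum_univ_two, Matrix.adjugate_fin_two] at r1 r2 r3 r4
  have key : ∀ a b, (p : ℤ) ∣ (s' * s.adjugate) a b := by
    obtain ⟨j, hj⟩ := hi
    intro a b
    rw [← hpz.dvd_mul.trans (or_iff_right hj)]
    fin_cases j <;> fin_cases a <;> fin_cases b <;>
      simp [Matrix.mul_apply, Fin.sum_univ_two, Matrix.adjugate_fin_two]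
    · exact ⟨s' 0 0 * h i 0 + s 1 0 * h' i 1, by linear_combination s' 0 0 * r1 + s 1 0 * r4⟩
    · exact ⟨s' 0 0 * h i 1 - s 0 0 * h' i 1, by linear_combination s' 0 0 * r2 - s 0 0 * r4⟩
    · exact ⟨s' 1 0 * h i 0 - s 1 0 * h' i 0, by linear_combination s' 1 0 * r1 - s 1 0 * r3⟩
    · exact ⟨s' 1 0 * h i 1 + s 0 0 * h' i 0, by linear_combination s' 1 0 * r2 + s 0 0 * r3⟩
    · exact ⟨s 1 1 * h' i 1 + s' 0 1 * h i 0, by linear_combination s 1 1 * r4 + s' 0 1 * r1⟩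
    · exact ⟨s' 0 1 * h i 1 - s 0 1 * h' i 1, by linear_combination s' 0 1 * r2 - s 0 1 * r4⟩
    · exact ⟨s' 1 1 * h i 0 - s 1 1 * h' i 0, by linear_combination s' 1 1 * r1 - s 1 1 * r3⟩
    · exact ⟨s 0 1 * h' i 0 + s' 1 1 * h i 1, by linear_combination s 0 1 * r3 + s' 1 1 * r2⟩
  choose k hk using key
  exact ⟨Matrix.of k, by ext a b; simpa using hk a b⟩

/-- Multiplicity of a matrix `g` not divisible by `p ^ (c + 1)` among the words of length `n`. At most
one last letter `s` leaves a quotient `g s⁻¹` that is still divisible by `p ^ c` (`dvd_of_common`);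
for each of the at most `k` others the quotient is not divisible by `p ^ c`, so the bound follows by
induction on `n`. -/
theorem count_wd_le (p k : ℕ) (hp : p.Prime) (hk : 1 ≤ k) (S : ℕ → Finset M2Z)
    (hdet : ∀ n, ∀ s ∈ S n, s.det = p) (hcard : ∀ n, (S n).card ≤ k)
    (hsep : ∀ n, ∀ s ∈ S n, ∀ s' ∈ S n, (∃ h : M2Z, s' * s.adjugate = (p : ℤ) • h) → s = s')
    (n : ℕ) : ∀ (g : M2Z) (c : ℕ), (¬ ∃ h : M2Z, g = ((p : ℤ) ^ (c + 1)) • h) →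
      (wd S n).count g ≤ 2 ^ n * k ^ c := by
  have hp0 : (p : ℤ) ≠ 0 := by exact_mod_cast hp.ne_zero
  induction n with
  | zero =>
    intro g c _
    rw [wd, Multiset.count_singleton, pow_zero, one_mul]
    split_ifs
    · exact Nat.one_le_pow _ _ hk
    · exact Nat.zero_le _
  | succ n ih =>
    intro g c hg
    rw [count_wd_succ]
    classical
    have hterm : ∀ s ∈ S n, (∀ h, g ≠ h * s) → ((wd S n).map fun h => h * s).count g = 0 := by
      intro s _ hno
      rw [Multiset.count_eq_zero, Multiset.mem_map]
      rintro ⟨h, -, rfl⟩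
      exact hno h rfl
    have hterm' : ∀ s ∈ S n, ∀ h, g = h * s →
        ((wd S n).map fun h => h * s).count g = (wd S n).count h := by
      intro s hs h hh
      rw [hh]
      exact Multiset.count_map_eq_count' (fun h => h * s) _
        (mul_right_inj_of_det p hp.ne_zero s (hdet n s hs)) h
    have hdiv : ∀ s h, g = h * s → ∀ m, (∃ h' : M2Z, h = ((p : ℤ) ^ m) • h') →
        ∃ g' : M2Z, g = ((p : ℤ) ^ m) • g' := by
      rintro s h e m ⟨h', rfl⟩
      exact ⟨h' * s, by rw [e, Matrix.smul_mul]⟩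
    set Bad := (S n).filter fun s => ∃ h' : M2Z, g = (((p : ℤ) ^ c) • h') * s with hBad
    have hbadc : Bad.card ≤ 1 := by
      rw [Finset.card_le_one]
      intro s hs s' hs'
      simp only [hBad, Finset.mem_filter] at hs hs'
      obtain ⟨hs, h, e⟩ := hs
      obtain ⟨hs', h', e'⟩ := hs'
      refine hsep n s hs s' hs' ?_
      have e2 : h * s = h' * s' := by
        rw [Matrix.smul_mul] at e e'
        exact smul_right_injective _ (pow_ne_zero c hp0) (e.symm.trans e')
      refine dvd_of_common p hp s s' (h * s) h h' (hdet n s hs) (hdet n s' hs') ?_ rfl e2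
      rintro ⟨k', hk'⟩
      exact hg ⟨k', by rw [e, Matrix.smul_mul, hk', smul_smul, pow_succ]⟩
    have hall : ∀ s ∈ S n, ((wd S n).map fun h => h * s).count g ≤ 2 ^ n * k ^ c := by
      intro s hs
      by_cases hex : ∃ h, g = h * s
      · obtain ⟨h, e⟩ := hex
        rw [hterm' s hs h e]
        exact ih h c fun hh => hg (hdiv s h e _ hh)
      · push Not at hex
        rw [hterm s hs hex]; exact Nat.zero_le _
    have hgood : ∑ s ∈ (S n).filter (fun s => ¬ ∃ h' : M2Z, g = (((p : ℤ) ^ c) • h') * s),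
        ((wd S n).map fun h => h * s).count g ≤ 2 ^ n * k ^ c := by
      rcases c with _ | c
      · refine le_trans (le_of_eq (Finset.sum_eq_zero fun s hs => ?_)) (Nat.zero_le _)
        simp only [Finset.mem_filter] at hs
        refine hterm s hs.1 fun h e => hs.2 ⟨h, by simpa using e⟩
      · calc _ ≤ ∑ s ∈ (S n).filter (fun s => ¬ ∃ h' : M2Z, g = (((p : ℤ) ^ (c+1)) • h') * s),
              2 ^ n * k ^ c := by
              refine Finset.sum_le_sum fun s hs => ?_
              simp only [Finset.mem_filter] at hs
              by_cases hex : ∃ h, g = h * s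
              · obtain ⟨h, e⟩ := hex
                rw [hterm' s hs.1 h e]
                refine ih h c ?_
                rintro ⟨h', rfl⟩
                exact hs.2 ⟨h', e⟩
              · push Not at hex
                rw [hterm s hs.1 hex]; exact Nat.zero_le _
          _ ≤ k * (2 ^ n * k ^ c) := by
              rw [Finset.sum_const, smul_eq_mul]
              exact Nat.mul_le_mul_right _ ((Finset.card_filter_le _ _).trans (hcard n))
          _ = _ := by ring
    rw [← Finset.sum_filter_add_sum_filter_not (S n)
      (fun s => ∃ h' : M2Z, g = (((p : ℤ) ^ c) • h') * s)]
    have hb : ∑ s ∈ Bad, ((wd S n).map fun h => h * s).count g ≤ 1 * (2 ^ n * k ^ c) := by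
      calc _ ≤ ∑ s ∈ Bad, 2 ^ n * k ^ c :=
            Finset.sum_le_sum fun s hs => hall s (Finset.mem_filter.mp hs).1
        _ ≤ _ := by
            rw [Finset.sum_const, smul_eq_mul]
            exact Nat.mul_le_mul_right _ hbadc
    calc _ ≤ 1 * (2 ^ n * k ^ c) + 2 ^ n * k ^ c := Nat.add_le_add hb hgood
      _ = _ := by ring

/-! ### Words in quotients of generators -/

/-- The multiset of products of `n` factors of the form `s * adj s'` with `s, s' ∈ S`. -/
def pw (S : Finset M2Z) : ℕ → Multiset M2Z
  | 0 => {1}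
  | n + 1 => (pw S n).bind fun g => (S ×ˢ S).val.map fun z => g * (z.1 * z.2.adjugate)

theorem pw_add (S : Finset M2Z) (m n : ℕ) :
    pw S (m + n) = (pw S m).bind fun g => (pw S n).map fun h => g * h := by
  induction n with
  | zero =>
    have := Multiset.bind_singleton (pw S m) id
    simpa [pw] using this.symm
  | succ n ih =>
    rw [← add_assoc, pw, ih, Multiset.bind_assoc]
    refine Multiset.bind_congr fun g _ => ?_
    rw [pw, Multiset.bind_map, Multiset.map_bind]
    refine Multiset.bind_congr fun h _ => ?_
    rw [Multiset.map_map]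
    refine Multiset.map_congr rfl fun z _ => ?_
    simp [mul_assoc]

theorem pw_one (S : Finset M2Z) : pw S 1 = (S ×ˢ S).val.map fun z => z.1 * z.2.adjugate := by
  simp [pw]

theorem adj_pair (s s' : M2Z) : (s * s'.adjugate).adjugate = s' * s.adjugate := by
  rw [Matrix.adjugate_mul_distrib, Matrix.adjugate_adjugate' ]
  simp

theorem pw_one_adj (S : Finset M2Z) : (pw S 1).map Matrix.adjugate = pw S 1 := by
  rw [pw_one, Multiset.map_map]
  have h : (S ×ˢ S).val = (S ×ˢ S).val.map Prod.swap := by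
    simp
  conv_rhs => rw [h]
  rw [Multiset.map_map]
  refine Multiset.map_congr rfl fun z _ => ?_
  simp [adj_pair]

theorem pw_adj (S : Finset M2Z) (n : ℕ) : (pw S n).map Matrix.adjugate = pw S n := by
  induction n with
  | zero => simp [pw]
  | succ n ih =>
    conv_rhs => rw [add_comm, pw_add, ← ih, ← pw_one_adj]
    rw [pw_add, Multiset.map_bind, Multiset.bind_map]
    simp only [Multiset.map_map, Function.comp_def]
    rw [Multiset.bind_map_comm]
    refine Multiset.bind_congr fun g _ => ?_
    refine Multiset.map_congr rfl fun h _ => ?_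
    rw [Matrix.adjugate_mul_distrib]

theorem card_pw (S : Finset M2Z) (n : ℕ) : Multiset.card (pw S n) = (S.card ^ 2) ^ n := by
  induction n with
  | zero => simp [pw]
  | succ n ih =>
    rw [pw, Multiset.card_bind]
    simp [Function.comp_def, ih]
    ring

/-- Letters from `S` in even positions and from `adj S` in odd positions. -/
def alt (S : Finset M2Z) (n : ℕ) : Finset M2Z := if Even n then S else S.image Matrix.adjugate

theorem adjugate_inj2 : Function.Injective (Matrix.adjugate : M2Z → M2Z) := by
  intro a b h
  have := congrArg Matrix.adjugate h
  rw [Matrix.adjugate_adjugate', Matrix.adjugate_adjugate'] at this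
  simpa using this

theorem pw_eq_wd (S : Finset M2Z) (n : ℕ) : pw S n = wd (alt S) (2 * n) := by
  induction n with
  | zero => simp [pw, wd]
  | succ n ih =>
    have e1 : alt S (2 * n) = S := by simp [alt]
    have e2 : alt S (2 * n + 1) = S.image Matrix.adjugate := by simp [alt]
    rw [show 2 * (n + 1) = 2 * n + 1 + 1 by ring, wd, wd, e1, e2, ← ih, pw, Multiset.bind_assoc]
    refine Multiset.bind_congr fun g _ => ?_
    rw [Finset.image_val_of_injOn adjugate_inj2.injOn, Multiset.bind_map, Finset.product_val]
    simp only [SProd.sprod, Multiset.product, Multiset.map_bind, Multiset.map_map]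
    refine Multiset.bind_congr fun s _ => ?_
    refine Multiset.map_congr rfl fun z _ => ?_
    simp [mul_assoc]

/-- The data needed for counting: matrices of determinant `p` no two of which differ by an integral
matrix of determinant one, on either side. -/
structure SepSet (p : ℕ) (S : Finset M2Z) : Prop where
  det : ∀ s ∈ S, s.det = p
  left : ∀ s ∈ S, ∀ s' ∈ S, (∃ h : M2Z, s' * s.adjugate = (p : ℤ) • h) → s = s'
  right : ∀ s ∈ S, ∀ s' ∈ S, (∃ h : M2Z, s'.adjugate * s = (p : ℤ) • h) → s = s'

theorem det_pw (p : ℕ) (S : Finset M2Z) (hS : SepSet p S) (n : ℕ) :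
    ∀ g ∈ pw S n, g.det = (p : ℤ) ^ (2 * n) := by
  rw [pw_eq_wd]
  refine det_of_mem_wd p _ (fun n s hs => ?_) _
  unfold alt at hs
  split_ifs at hs
  · exact hS.det s hs
  · obtain ⟨t, ht, rfl⟩ := Finset.mem_image.mp hs
    rw [Matrix.det_adjugate, hS.det t ht]; simp

/-- The case of `count_wd_le` in which the letters alternate between `S` and `adj S`. -/
theorem count_pw_le (p : ℕ) (hp : p.Prime) (S : Finset M2Z) (hS : SepSet p S) (hk : 1 ≤ S.card)
    (n : ℕ) (g : M2Z) (c : ℕ) (hg : ¬ ∃ h : M2Z, g = ((p : ℤ) ^ (c + 1)) • h) :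
    (pw S n).count g ≤ 4 ^ n * S.card ^ c := by
  rw [pw_eq_wd, show (4 : ℕ) = 2 ^ 2 by norm_num, ← pow_mul]
  refine count_wd_le p S.card hp hk _ (fun n s hs => ?_) (fun n => ?_)
    (fun n s hs s' hs' h => ?_) _ g c hg
  · unfold alt at hs
    split_ifs at hs
    · exact hS.det s hs
    · obtain ⟨t, ht, rfl⟩ := Finset.mem_image.mp hs
      rw [Matrix.det_adjugate, hS.det t ht]; simp
  · unfold alt
    split_ifs
    · exact le_rfl
    · exact Finset.card_image_le
  · unfold alt at hs hs'
    split_ifs at hs hs'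
    · exact hS.left s hs s' hs' h
    · obtain ⟨t, ht, rfl⟩ := Finset.mem_image.mp hs
      obtain ⟨t', ht', rfl⟩ := Finset.mem_image.mp hs'
      rw [Matrix.adjugate_adjugate'] at h
      rw [hS.right t ht t' ht' (by simpa using h)]

/-! ### Integer matrices near a scalar -/

/-- A nonzero integer has at most `2 d(|m|)` divisors of either sign. -/
theorem card_fix_mul (m : ℤ) (hm : m ≠ 0) (t : ℕ) (ht : m.natAbs.divisors.card ≤ t)
    (F : Finset ℤ) (hF : ∀ b ∈ F, b ∣ m) : F.card ≤ 2 * t := by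
  have : F ⊆ (m.natAbs.divisors.image fun e : ℕ => (e : ℤ)) ∪
      (m.natAbs.divisors.image fun e : ℕ => -(e : ℤ)) := by
    intro b hb
    have h1 : b.natAbs ∈ m.natAbs.divisors := by
      rw [Nat.mem_divisors]
      exact ⟨Int.natAbs_dvd_natAbs.mpr (hF b hb), by simpa using hm⟩
    rw [Finset.mem_union, Finset.mem_image, Finset.mem_image]
    rcases Int.natAbs_eq b with h | h
    · exact Or.inl ⟨_, h1, h.symm⟩
    · exact Or.inr ⟨_, h1, h.symm⟩
  refine (Finset.card_le_card this).trans ((Finset.card_union_le _ _).trans ?_)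
  have h1 := Finset.card_image_le (s := m.natAbs.divisors) (f := fun e : ℕ => (e : ℤ))
  have h2 := Finset.card_image_le (s := m.natAbs.divisors) (f := fun e : ℕ => -(e : ℤ))
  omega

/-- The matrices with a vanishing off-diagonal entry: the diagonal entries multiply to `D²`, so they
are determined by a divisor of `D²`, and the remaining entry `r` takes at most `2 X + 1` values. -/
theorem card_zero_corner (D X t : ℕ) (hD : 1 ≤ D) (hX : 2 * X ≤ D)
    (ht : ∀ m : ℕ, 1 ≤ m → m ≤ D ^ 2 → m.divisors.card ≤ t) (F : Finset M2Z)
    (r : M2Z → ℤ) (hr : ∀ g ∈ F, |r g| ≤ X)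
    (hinj : ∀ g ∈ F, ∀ g' ∈ F, g 0 0 = g' 0 0 → g 1 1 = g' 1 1 → r g = r g' → g = g')
    (h00 : ∀ g ∈ F, |g 0 0 - D| ≤ X) (hz : ∀ g ∈ F, g 0 0 * g 1 1 = (D : ℤ) ^ 2) :
    F.card ≤ t * (2 * X + 1) := by
  have hpos : ∀ g ∈ F, 0 < g 0 0 := by
    intro g hg
    have := abs_le.mp (h00 g hg)
    omega
  have : (F.image fun g => ((g 0 0).natAbs, r g)) ⊆
      (D ^ 2).divisors ×ˢ Finset.Icc (-(X : ℤ)) X := by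
    intro z hz'
    obtain ⟨g, hg, rfl⟩ := Finset.mem_image.mp hz'
    rw [Finset.mem_product, Nat.mem_divisors, Finset.mem_Icc]
    refine ⟨⟨?_, by positivity⟩, abs_le.mp (hr g hg)⟩
    have h1 : g 0 0 ∣ (D : ℤ) ^ 2 := ⟨_, (hz g hg).symm⟩
    have := Int.natAbs_dvd_natAbs.mpr h1
    simpa [Int.natAbs_pow] using this
  have h2 := Finset.card_le_card this
  rw [Finset.card_image_of_injOn, Finset.card_product, Int.card_Icc] at h2
  · refine h2.trans (Nat.mul_le_mul (ht _ (by nlinarith) le_rfl) ?_)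
    omega
  · intro g hg g' hg' h
    simp only [Prod.mk.injEq] at h
    have e : g 0 0 = g' 0 0 := by
      have := hpos g hg; have := hpos g' hg'; omega
    refine hinj g hg g' hg' e ?_ h.2
    have a := hz g hg
    have a' := hz g' hg'
    rw [← e] at a'
    have hne := (hpos g hg).ne'
    have key := a.trans a'.symm
    exact mul_left_cancel₀ hne key

/-- The number of integer matrices of determinant `D²` within distance `X` of the scalar matrix
`D`, in terms of a bound `t` for the number of divisors of integers up to `D²`. -/
theorem card_near_scalar (D X t : ℕ) (hD : 1 ≤ D) (hX : 2 * X ≤ D)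
    (ht : ∀ m : ℕ, 1 ≤ m → m ≤ D ^ 2 → m.divisors.card ≤ t) (F : Finset M2Z)
    (hdet : ∀ g ∈ F, g.det = (D : ℤ) ^ 2)
    (h00 : ∀ g ∈ F, |g 0 0 - D| ≤ X) (h11 : ∀ g ∈ F, |g 1 1 - D| ≤ X)
    (h01 : ∀ g ∈ F, |g 0 1| ≤ X) (h10 : ∀ g ∈ F, |g 1 0| ≤ X) :
    F.card ≤ t * (2 * X + 1) * (4 * (2 * X ^ 2 / D) + 4) := by
  classical
  simp only [Matrix.det_fin_two] at hdet
  have ext4 : ∀ g g' : M2Z, g 0 0 = g' 0 0 → g 0 1 = g' 0 1 → g 1 0 = g' 1 0 → g 1 1 = g' 1 1 →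
      g = g' := by
    intro g g' e1 e2 e3 e4
    ext i j
    fin_cases i <;> fin_cases j <;> assumption
  set F1 := F.filter fun g => g 0 1 = 0
  set F2 := F.filter fun g => g 1 0 = 0
  set F3 := F.filter fun g => g 0 1 ≠ 0 ∧ g 1 0 ≠ 0
  have hcov : F ⊆ F1 ∪ F2 ∪ F3 := by
    intro g hg
    simp only [F1, F2, F3, Finset.mem_union, Finset.mem_filter]
    by_cases h1 : g 0 1 = 0 <;> by_cases h2 : g 1 0 = 0 <;> simp [hg, h1, h2]
  have c1 : F1.card ≤ t * (2 * X + 1) := by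
    refine card_zero_corner D X t hD hX ht F1 (fun g => g 1 0) ?_ ?_ ?_ ?_
    · intro g hg; exact h10 g (Finset.mem_filter.mp hg).1
    · intro g hg g' hg' e1 e2 e3
      exact ext4 g g' e1 ((Finset.mem_filter.mp hg).2.trans (Finset.mem_filter.mp hg').2.symm) e3 e2
    · intro g hg; exact h00 g (Finset.mem_filter.mp hg).1
    · intro g hg
      have := hdet g (Finset.mem_filter.mp hg).1
      rw [(Finset.mem_filter.mp hg).2] at this
      linarith
  have c2 : F2.card ≤ t * (2 * X + 1) := by
    refine card_zero_corner D X t hD hX ht F2 (fun g => g 0 1) ?_ ?_ ?_ ?_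
    · intro g hg; exact h01 g (Finset.mem_filter.mp hg).1
    · intro g hg g' hg' e1 e2 e3
      exact ext4 g g' e1 e3 ((Finset.mem_filter.mp hg).2.trans (Finset.mem_filter.mp hg').2.symm) e2
    · intro g hg; exact h00 g (Finset.mem_filter.mp hg).1
    · intro g hg
      have := hdet g (Finset.mem_filter.mp hg).1
      rw [(Finset.mem_filter.mp hg).2] at this
      linarith
  have c3 : F3.card ≤ 2 * t * ((2 * (2 * X ^ 2 / D) + 1) * (2 * X + 1)) := by
    set φ : M2Z → ℤ × ℤ := fun g => ((g 0 0 - D) + (g 1 1 - D), g 0 0 - D) with hφ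
    have himg : (F3.image φ).card ≤ (2 * (2 * X ^ 2 / D) + 1) * (2 * X + 1) := by
      have : F3.image φ ⊆ Finset.Icc (-((2 * X ^ 2 / D : ℕ) : ℤ)) ((2 * X ^ 2 / D : ℕ) : ℤ) ×ˢ
          Finset.Icc (-(X : ℤ)) X := by
        intro z hz
        obtain ⟨g, hg, rfl⟩ := Finset.mem_image.mp hz
        have hg := (Finset.mem_filter.mp hg).1
        rw [Finset.mem_product, Finset.mem_Icc, Finset.mem_Icc]
        refine ⟨?_, abs_le.mp (h00 g hg)⟩
        rw [← abs_le]
        simp only [hφ]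
        have e : (D : ℤ) * ((g 0 0 - D) + (g 1 1 - D)) =
            g 0 1 * g 1 0 - (g 0 0 - D) * (g 1 1 - D) := by
          linear_combination (hdet g hg)
        have hb : |(D : ℤ) * ((g 0 0 - D) + (g 1 1 - D))| ≤ 2 * (X : ℤ) ^ 2 := by
          rw [e]
          refine (abs_sub _ _).trans ?_
          rw [abs_mul, abs_mul]
          have a1 := mul_le_mul (h01 g hg) (h10 g hg) (abs_nonneg _) (by positivity)
          have a2 := mul_le_mul (h00 g hg) (h11 g hg) (abs_nonneg _) (by positivity)
          nlinarith
        rw [abs_mul, Nat.abs_cast] at hb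
        have hD' : (0 : ℤ) < D := by exact_mod_cast hD
        push_cast
        rw [Int.le_ediv_iff_mul_le hD']
        linarith
      refine (Finset.card_le_card this).trans ?_
      rw [Finset.card_product, Int.card_Icc, Int.card_Icc]
      refine Nat.mul_le_mul ?_ ?_ <;> omega
    refine (Finset.card_le_mul_card_image F3 (f := φ) (2 * t) ?_).trans
      (Nat.mul_le_mul_left _ himg)
    intro z hz
    obtain ⟨g0, hg0, rfl⟩ := Finset.mem_image.mp hz
    obtain ⟨hg0F, hn1, hn2⟩ := Finset.mem_filter.mp hg0
    have same : ∀ g ∈ F3.filter (fun g => φ g = φ g0), g 0 0 = g0 0 0 ∧ g 1 1 = g0 1 1 ∧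
        g 0 1 * g 1 0 = g0 0 1 * g0 1 0 := by
      intro g hg
      obtain ⟨hg, he⟩ := Finset.mem_filter.mp hg
      simp only [hφ, Prod.mk.injEq] at he
      have e1 : g 0 0 = g0 0 0 := by linarith [he.2]
      have e2 : g 1 1 = g0 1 1 := by linarith [he.1, he.2]
      refine ⟨e1, e2, ?_⟩
      have := hdet g (Finset.mem_filter.mp hg).1
      have := hdet g0 hg0F
      rw [e1, e2] at *
      linarith
    rw [← Finset.card_image_of_injOn (f := fun g : M2Z => g 0 1)]
    · refine card_fix_mul (g0 0 1 * g0 1 0) (mul_ne_zero hn1 hn2) t ?_ _ ?_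
      · refine ht _ (Nat.pos_of_ne_zero (by simpa using ⟨hn1, hn2⟩)) ?_
        have a1 := mul_le_mul (h01 g0 hg0F) (h10 g0 hg0F) (abs_nonneg _) (by positivity)
        rw [← abs_mul, Int.abs_eq_natAbs] at a1
        have a2 : (g0 0 1 * g0 1 0).natAbs ≤ X * X := by exact_mod_cast a1
        nlinarith
      · intro b hb
        obtain ⟨g, hg, rfl⟩ := Finset.mem_image.mp hb
        exact ⟨g 1 0, (same g hg).2.2.symm⟩
    · intro g hg g' hg' e
      have s1 := same g hg
      have s2 := same g' hg'
      simp only at e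
      refine ext4 g g' (s1.1.trans s2.1.symm) e ?_ (s1.2.1.trans s2.2.1.symm)
      have hne : g 0 1 ≠ 0 := (Finset.mem_filter.mp (Finset.mem_filter.mp hg).1).2.1
      refine mul_left_cancel₀ hne ?_
      rw [s1.2.2, e, s2.2.2]
  have := (Finset.card_le_card hcov).trans ((Finset.card_union_le _ _).trans
    (Nat.add_le_add_right (Finset.card_union_le _ _) _))
  calc F.card ≤ _ := this
    _ ≤ t * (2 * X + 1) + t * (2 * X + 1) + 2 * t * ((2 * (2 * X ^ 2 / D) + 1) * (2 * X + 1)) := by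
      omega
    _ = _ := by ring

/-! ### Words near a scalar -/

/-- `g` is entrywise within `δ * P` of the scalar matrix `P`. -/
def NearScalar (P δ : ℝ) (g : M2Z) : Prop :=
  ∀ i j, |(g i j : ℝ) - (if i = j then P else 0)| ≤ δ * P

open Classical in
/-- Dividing by `p ^ c` reduces the count of nearly scalar matrices divisible by `p ^ c` to
`card_near_scalar` with `D = p ^ (L - c)`. -/
theorem card_near_content (p : ℕ) (hp : p.Prime) (L c : ℕ) (hc : c ≤ L) (δ : ℝ) (hδ : 0 < δ)
    (hδ1 : 2 * δ ≤ 1) (t : ℕ)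
    (ht : ∀ m : ℕ, 1 ≤ m → m ≤ p ^ (2 * L) → m.divisors.card ≤ t) (T : Finset M2Z)
    (hdet : ∀ g ∈ T, g.det = (p : ℤ) ^ (2 * L))
    (hT : ∀ g ∈ T, NearScalar ((p : ℝ) ^ L) δ g)
    (hcon : ∀ g ∈ T, ∃ h : M2Z, g = ((p : ℤ) ^ c) • h) :
    (T.card : ℝ) ≤ t * (2 * (δ * p ^ (L - c)) + 1) * (8 * δ ^ 2 * p ^ (L - c) + 4) := by
  have hp0 : (0 : ℝ) < p := by exact_mod_cast hp.pos
  have hpz : (p : ℤ) ≠ 0 := by exact_mod_cast hp.ne_zero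
  have hpc : (0 : ℝ) < (p : ℝ) ^ c := by positivity
  choose! v hv using hcon
  set D := p ^ (L - c) with hD
  have hD1 : 1 ≤ D := Nat.one_le_pow _ _ hp.pos
  set X := ⌊δ * (D : ℝ)⌋₊ with hX
  have hXle : (X : ℝ) ≤ δ * D := Nat.floor_le (by positivity)
  have hDr : (0 : ℝ) < D := by exact_mod_cast hD1
  have hpL : (p : ℝ) ^ L = p ^ c * D := by
    rw [hD]; push_cast; rw [← pow_add]; congr 1; omega
  have hcard : (T.image v).card = T.card := by
    refine Finset.card_image_of_injOn fun a ha b hb hab => ?_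
    rw [hv a ha, hv b hb, hab]
  have key : ∀ g ∈ T, ∀ i j, |v g i j - (if i = j then (D : ℤ) else 0)| ≤ X := by
    intro g hg i j
    have h1 := hT g hg i j
    have h2 : (g i j : ℝ) = p ^ c * (v g i j : ℝ) := by
      conv_lhs => rw [hv g hg]
      simp
    have h3 : |(v g i j : ℝ) - (if i = j then (D : ℝ) else 0)| ≤ δ * D := by
      rw [h2, hpL] at h1
      have : (p : ℝ) ^ c * (v g i j : ℝ) - (if i = j then (p : ℝ) ^ c * D else 0) =
          p ^ c * ((v g i j : ℝ) - (if i = j then (D : ℝ) else 0)) := by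
        split_ifs <;> ring
      rw [this, abs_mul, abs_of_pos hpc] at h1
      have h4 : (p : ℝ) ^ c * |(v g i j : ℝ) - (if i = j then (D : ℝ) else 0)| ≤
        p ^ c * (δ * D) := by linarith
      exact le_of_mul_le_mul_left h4 hpc
    have h5 : ((|v g i j - (if i = j then (D : ℤ) else 0)|).natAbs : ℝ) ≤ δ * D := by
      rw [Nat.cast_natAbs]
      push_cast
      rw [abs_abs]
      convert h3 using 3
    have h6 := Nat.le_floor h5
    rw [← hX] at h6
    omega
  have main := card_near_scalar D X t hD1 (by
      have : (2 * X : ℝ) ≤ D := by nlinarith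
      exact_mod_cast this) (fun m hm1 hm => ht m hm1 (hm.trans (by
        rw [hD, ← pow_mul]
        exact Nat.pow_le_pow_right hp.pos (by omega)))) (T.image v) (by
      simp only [Finset.mem_image]
      rintro _ ⟨g, hg, rfl⟩
      have h1 := hdet g hg
      rw [hv g hg, Matrix.det_smul] at h1
      have h2 : (p : ℤ) ^ (2 * L) = ((p : ℤ) ^ c) ^ 2 * (D : ℤ) ^ 2 := by
        rw [hD]; push_cast; rw [← pow_mul, ← pow_mul, ← pow_add]; congr 1; omega
      rw [h2, Fintype.card_fin] at h1
      exact mul_left_cancel₀ (by positivity) h1)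
      (by simp only [Finset.mem_image]; rintro _ ⟨g, hg, rfl⟩; simpa using key g hg 0 0)
      (by simp only [Finset.mem_image]; rintro _ ⟨g, hg, rfl⟩; simpa using key g hg 1 1)
      (by simp only [Finset.mem_image]; rintro _ ⟨g, hg, rfl⟩; simpa using key g hg 0 1)
      (by simp only [Finset.mem_image]; rintro _ ⟨g, hg, rfl⟩; simpa using key g hg 1 0)
  rw [hcard] at main
  have hdiv : ((2 * X ^ 2 / D : ℕ) : ℝ) ≤ 2 * δ ^ 2 * D := by
    refine (Nat.cast_div_le).trans ?_
    rw [div_le_iff₀ hDr]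
    push_cast
    have : (X : ℝ) ^ 2 ≤ (δ * D) ^ 2 := by gcongr
    nlinarith
  have : (T.card : ℝ) ≤ t * (2 * X + 1) * (4 * ((2 * X ^ 2 / D : ℕ) : ℝ) + 4) := by
    exact_mod_cast main
  have hDp : (D : ℝ) = (p : ℝ) ^ (L - c) := by rw [hD]; push_cast; rfl
  rw [← hDp]
  calc (T.card : ℝ) ≤ t * (2 * X + 1) * (4 * ((2 * X ^ 2 / D : ℕ) : ℝ) + 4) := this
    _ ≤ t * (2 * (δ * D) + 1) * (4 * (2 * δ ^ 2 * D) + 4) := by gcongr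
    _ = _ := by ring

open Classical in
/-- The exact power of `p` dividing `g` is at most `p ^ L`, because `det g = p ^ (2 L)`. -/
theorem exists_content (p : ℕ) (hp : p.Prime) (L : ℕ) (g : M2Z) (hg : g.det = (p : ℤ) ^ (2 * L)) :
    ∃ c, c ≤ L ∧ (∃ h : M2Z, g = ((p : ℤ) ^ c) • h) ∧
      ¬ ∃ h : M2Z, g = ((p : ℤ) ^ (c + 1)) • h := by
  have hle : ∀ c, (∃ h : M2Z, g = ((p : ℤ) ^ c) • h) → c ≤ L := by
    rintro c ⟨h, rfl⟩
    rw [Matrix.det_smul, Fintype.card_fin] at hg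
    have h1 : (p : ℤ) ^ (2 * c) ∣ (p : ℤ) ^ (2 * L) := ⟨h.det, by rw [← hg]; ring⟩
    have h2 : p ^ (2 * c) ∣ p ^ (2 * L) := by exact_mod_cast h1
    have := (Nat.pow_dvd_pow_iff_le_right hp.one_lt).mp h2
    omega
  refine ⟨Nat.findGreatest (fun c => ∃ h : M2Z, g = ((p : ℤ) ^ c) • h) L,
    Nat.findGreatest_le _, ?_, fun hcon => ?_⟩
  · exact Nat.findGreatest_spec (P := fun c => ∃ h : M2Z, g = ((p : ℤ) ^ c) • h) (Nat.zero_le L)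
      ⟨g, by simp⟩
  · exact Nat.findGreatest_is_greatest (P := fun c => ∃ h : M2Z, g = ((p : ℤ) ^ c) • h)
      (Nat.lt_succ_self _) (hle _ hcon) hcon

/-- The lower order terms of the count are dominated by the volume term `δ³ Q D` once `δ³ Q ≥ 1`. -/
theorem near_poly (δ D Q : ℝ) (hδ : 0 < δ) (hδ1 : 2 * δ ≤ 1) (hD1 : 1 ≤ D) (hDQ : D ≤ Q)
    (hδ3 : 1 ≤ δ ^ 3 * Q) :
    (2 * (δ * D) + 1) * (8 * δ ^ 2 * D + 4) ≤ 36 * (δ ^ 3 * Q) * D := by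
  have f2 : δ ^ 2 ≤ 1 * δ := by rw [pow_two]; gcongr; linarith
  have f1 : δ * 1 ≤ 1 * (δ ^ 3 * Q) := by gcongr; linarith
  have f3 : δ ^ 3 * D ≤ δ ^ 3 * Q := by gcongr
  have hD0 : 0 ≤ D := by linarith
  have g1 := mul_le_mul_of_nonneg_right f1 hD0
  have g2 := mul_le_mul_of_nonneg_right f2 hD0
  have g3 := mul_le_mul_of_nonneg_right f3 hD0
  have g4 : 1 * 1 ≤ δ ^ 3 * Q * D := mul_le_mul hδ3 hD1 (by norm_num) (by linarith)
  linarith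

set_option maxHeartbeats 800000 in
open Classical in
/-- Equidistribution of words near the scalars: up to the divisor bound `t` and a factor exponential in
`L`, the proportion of words `δ`-close to the scalar matrix `p ^ L` is `δ³`, which is the order of the
volume of a `δ`-ball in `SL₂(ℝ)`. The words are sorted by the exact power of `p` dividing them; for each
power, the number of matrices (`card_near_content`) is multiplied by their multiplicity
(`count_pw_le`). -/
theorem card_near_pw (p : ℕ) (hp : p.Prime) (S : Finset M2Z) (hS : SepSet p S) (c0 : ℝ)
    (hc0 : 0 < c0) (hc1 : c0 ≤ 1) (hk : c0 * p ≤ S.card) (L : ℕ) (δ : ℝ) (hδ : 0 < δ)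
    (hδ1 : 2 * δ ≤ 1) (hδ3 : 1 ≤ δ ^ 3 * (p : ℝ) ^ L) (t : ℕ)
    (ht : ∀ m : ℕ, 1 ≤ m → m ≤ p ^ (2 * L) → m.divisors.card ≤ t) :
    ((Multiset.card ((pw S L).filter (NearScalar ((p : ℝ) ^ L) δ)) : ℕ) : ℝ) ≤
      36 * t * (8 / c0 ^ 2) ^ L * δ ^ 3 * (S.card : ℝ) ^ (2 * L) := by
  have hp0 : (0 : ℝ) < p := by exact_mod_cast hp.pos
  set k := S.card with hkdef
  have hk0 : (0 : ℝ) < k := lt_of_lt_of_le (by positivity) hk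
  have hk1 : 1 ≤ k := by exact_mod_cast hk0
  set W := (pw S L).filter (NearScalar ((p : ℝ) ^ L) δ) with hW
  have hWdet : ∀ g ∈ W, g.det = (p : ℤ) ^ (2 * L) := fun g hg =>
    det_pw p S hS L g (Multiset.mem_of_mem_filter hg)
  have hex : ∀ g, g ∈ W → ∃ c, c ≤ L ∧ (∃ h : M2Z, g = ((p : ℤ) ^ c) • h) ∧
      ¬ ∃ h : M2Z, g = ((p : ℤ) ^ (c + 1)) • h := fun g hg =>
    exists_content p hp L g (hWdet g hg)
  choose! cont hcont using hex
  have h1 : Multiset.card W = ∑ c ∈ Finset.range (L + 1),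
      ∑ g ∈ W.toFinset with cont g = c, W.count g := by
    rw [← Multiset.toFinset_sum_count_eq]
    refine (Finset.sum_fiberwise_of_maps_to (fun g hg => ?_) _).symm
    rw [Finset.mem_range]
    exact Nat.lt_succ_of_le (hcont g (Multiset.mem_toFinset.mp hg)).1
  have h2 : ∀ c ∈ Finset.range (L + 1),
      ((∑ g ∈ W.toFinset with cont g = c, W.count g : ℕ) : ℝ) ≤
        36 * t * (4 / c0 ^ 2) ^ L * δ ^ 3 * (k : ℝ) ^ (2 * L) := by
    intro c hc
    have hcL : c ≤ L := Nat.lt_succ_iff.mp (Finset.mem_range.mp hc)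
    set T := W.toFinset.filter (fun g => cont g = c) with hT
    have hTmem : ∀ g ∈ T, g ∈ W ∧ cont g = c := fun g hg => by
      rw [hT, Finset.mem_filter, Multiset.mem_toFinset] at hg; exact hg
    have h3 : (∑ g ∈ T, W.count g) ≤ T.card * (4 ^ L * k ^ c) := by
      rw [← smul_eq_mul]
      refine Finset.sum_le_card_nsmul _ _ _ fun g hg => ?_
      obtain ⟨hgW, hgc⟩ := hTmem g hg
      refine (Multiset.count_le_of_le g (Multiset.filter_le _ _)).trans ?_
      refine count_pw_le p hp S hS hk1 L g c ?_
      rw [← hgc]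
      exact (hcont g hgW).2.2
    have h4 := card_near_content p hp L c hcL δ hδ hδ1 t ht T
      (fun g hg => hWdet g (hTmem g hg).1)
      (fun g hg => (Multiset.mem_filter.mp (hTmem g hg).1).2)
      (fun g hg => by rw [← (hTmem g hg).2]; exact (hcont g (hTmem g hg).1).2.1)
    have h5 : ((∑ g ∈ T, W.count g : ℕ) : ℝ) ≤ T.card * (4 ^ L * (k : ℝ) ^ c) := by
      exact_mod_cast h3
    set D := (p : ℝ) ^ (L - c) with hD
    have hD1 : 1 ≤ D := one_le_pow₀ (by exact_mod_cast hp.pos)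
    set Q := (p : ℝ) ^ L with hQ
    have hDQ : D ≤ Q := pow_le_pow_right₀ (by exact_mod_cast hp.pos) (by omega)
    -- `k ^ c * D ≤ k ^ L / c0 ^ L` and `Q ≤ k ^ L / c0 ^ L`
    have hkc : (k : ℝ) ^ c * D * c0 ^ L ≤ k ^ L := by
      have e1 : c0 ^ L ≤ c0 ^ (L - c) := pow_le_pow_of_le_one hc0.le hc1 (by omega)
      have e2 : (c0 * p) ^ (L - c) ≤ (k : ℝ) ^ (L - c) := by gcongr
      calc (k : ℝ) ^ c * D * c0 ^ L ≤ k ^ c * D * c0 ^ (L - c) := by gcongr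
        _ = k ^ c * (c0 * p) ^ (L - c) := by rw [mul_pow, hD]; ring
        _ ≤ k ^ c * k ^ (L - c) := by gcongr
        _ = k ^ L := by rw [← pow_add]; congr 1; omega
    have hkQ : Q * c0 ^ L ≤ k ^ L := by
      calc Q * c0 ^ L = (c0 * p) ^ L := by rw [mul_pow, hQ]; ring
        _ ≤ _ := by gcongr
    have hpoly := near_poly δ D Q hδ hδ1 hD1 hDQ hδ3
    have e0 : (T.card : ℝ) ≤ t * (36 * (δ ^ 3 * Q) * D) := by
      refine h4.trans ?_
      rw [mul_assoc]
      gcongr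
    refine h5.trans ?_
    calc (T.card : ℝ) * (4 ^ L * (k : ℝ) ^ c) ≤ t * (36 * (δ ^ 3 * Q) * D) * (4 ^ L * (k : ℝ) ^ c) := by
          gcongr
      _ = 36 * t * 4 ^ L * δ ^ 3 * ((k ^ c * D * c0 ^ L) * (Q * c0 ^ L)) / (c0 ^ 2) ^ L := by
          rw [← pow_mul, mul_comm 2 L, pow_mul]; field_simp
      _ ≤ 36 * t * 4 ^ L * δ ^ 3 * (k ^ L * k ^ L) / (c0 ^ 2) ^ L := by gcongr
      _ = _ := by rw [div_pow, two_mul L, pow_add]; ring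
  rw [h1]
  push_cast at h2 ⊢
  refine (Finset.sum_le_sum h2).trans ?_
  rw [Finset.sum_const, Finset.card_range, nsmul_eq_mul]
  have hL : ((L + 1 : ℕ) : ℝ) ≤ 2 ^ L := by
    exact_mod_cast Nat.succ_le_of_lt Nat.lt_two_pow_self
  calc ((L + 1 : ℕ) : ℝ) * (36 * t * (4 / c0 ^ 2) ^ L * δ ^ 3 * (k : ℝ) ^ (2 * L))
      ≤ 2 ^ L * (36 * t * (4 / c0 ^ 2) ^ L * δ ^ 3 * (k : ℝ) ^ (2 * L)) := by gcongr
    _ = 36 * t * (2 ^ L * (4 / c0 ^ 2) ^ L) * δ ^ 3 * (k : ℝ) ^ (2 * L) := by ring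
    _ = _ := by rw [← mul_pow]; congr 4; ring

/-! ### The choice of the generators -/

theorem entry_bound (A B : M2Z) (a b : ℤ) (hA : ∀ i j, |A i j| ≤ a) (hB : ∀ i j, |B i j| ≤ b)
    (i j : Fin 2) : |(A * B) i j| ≤ 2 * (a * b) := by
  rw [Matrix.mul_apply, Fin.sum_univ_two]
  have h : ∀ l, |A i l * B l j| ≤ a * b := fun l => by
    rw [abs_mul]
    exact mul_le_mul (hA i l) (hB l j) (abs_nonneg _) ((abs_nonneg _).trans (hA i l))
  have := abs_add_le (A i 0 * B 0 j) (A i 1 * B 1 j)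
  linarith [h 0, h 1]

theorem adjugate_abs_le (B : M2Z) (b : ℤ) (hB : ∀ i j, |B i j| ≤ b) (i j : Fin 2) :
    |B.adjugate i j| ≤ b := by
  rw [Matrix.adjugate_fin_two]
  fin_cases i <;> fin_cases j <;> simp [hB]

/-- A set of at least `c₀ p` integer matrices of determinant `p` whose pairwise quotients are within
`66 / M` of the identity. -/
theorem exists_good_set (M : ℕ) (hM : 67 ≤ M) : ∃ c0 : ℝ, 0 < c0 ∧ c0 ≤ 1 ∧
    ∀ p : ℕ, p.Prime → M ^ 2 ≤ p → ∃ S : Finset M2Z, SepSet p S ∧ c0 * p ≤ S.card ∧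
      ∀ s ∈ S, ∀ s' ∈ S, ∀ i j,
        |(s * s'.adjugate) i j - (if i = j then (p : ℤ) else 0)| * M ≤ 66 * p := by
  obtain ⟨c0, h0, h1, H⟩ := exists_cluster M (by omega)
  refine ⟨c0, h0, h1, fun p hp hMp => ?_⟩
  obtain ⟨S, hc, hS, hcl⟩ := H p hMp
  have hpz : (p : ℤ) ≠ 0 := by exact_mod_cast hp.ne_zero
  have hsq : (Nat.sqrt p : ℤ) * Nat.sqrt p ≤ p := by exact_mod_cast Nat.sqrt_le p
  have hM0 : (0 : ℤ) < M := by exact_mod_cast (by omega : 0 < M)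
  have hE : ∀ s ∈ S, ∀ i j, |s i j| ≤ 33 * (Nat.sqrt p : ℤ) := fun s hs i j => by
    rw [abs_of_nonneg ((hS s hs).2 i j).1]; exact ((hS s hs).2 i j).2
  have hsub : ∀ s ∈ S, ∀ s' ∈ S, ∀ i j, |((M : ℤ) • (s - s')) i j| ≤ (Nat.sqrt p : ℤ) := by
    intro s hs s' hs' i j
    simp only [Matrix.smul_apply, Matrix.sub_apply, smul_eq_mul, abs_mul, abs_of_pos hM0]
    rw [mul_comm]; exact hcl s hs s' hs' i j
  have near : ∀ s ∈ S, ∀ s' ∈ S, ∀ i j,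
        |(s * s'.adjugate) i j - (if i = j then (p : ℤ) else 0)| * M ≤ 66 * p := by
    intro s hs s' hs' i j
    have e : (M : ℤ) • (s - s') * s'.adjugate = (M : ℤ) • (s * s'.adjugate - (p : ℤ) • 1) := by
      rw [smul_mul_assoc, sub_mul, Matrix.mul_adjugate, (hS s' hs').1]
    have := entry_bound _ _ _ _ (hsub s hs s' hs') (adjugate_abs_le s' _ (hE s' hs')) i j
    rw [e] at this
    simp only [Matrix.smul_apply, Matrix.sub_apply, smul_eq_mul, abs_mul, abs_of_pos hM0,
      Matrix.one_apply, mul_ite, mul_one, mul_zero] at this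
    nlinarith
  have near' : ∀ s ∈ S, ∀ s' ∈ S, ∀ i j,
        |(s'.adjugate * s) i j - (if i = j then (p : ℤ) else 0)| * M ≤ 66 * p := by
    intro s hs s' hs' i j
    have e : s'.adjugate * ((M : ℤ) • (s - s')) = (M : ℤ) • (s'.adjugate * s - (p : ℤ) • 1) := by
      rw [mul_smul_comm, mul_sub, Matrix.adjugate_mul, (hS s' hs').1]
    have := entry_bound _ _ _ _ (adjugate_abs_le s' _ (hE s' hs')) (hsub s hs s' hs') i j
    rw [e] at this
    simp only [Matrix.smul_apply, Matrix.sub_apply, smul_eq_mul, abs_mul, abs_of_pos hM0,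
      Matrix.one_apply, mul_ite, mul_one, mul_zero] at this
    nlinarith
  have one : ∀ (g h : M2Z), g = (p : ℤ) • h →
      (∀ i j, |g i j - (if i = j then (p : ℤ) else 0)| * M ≤ 66 * p) → h = 1 := by
    intro g h hg hn
    ext i j
    have h1 := hn i j
    rw [hg, Matrix.smul_apply, smul_eq_mul] at h1
    have h2 : (p : ℤ) * h i j - (if i = j then (p : ℤ) else 0) = p * (h i j - (1 : M2Z) i j) := by
      rw [Matrix.one_apply]; split_ifs <;> ring
    rw [h2, abs_mul, Nat.abs_cast] at h1
    have hp0 : (0 : ℤ) < p := by exact_mod_cast hp.pos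
    have h3 : |h i j - (1 : M2Z) i j| * M ≤ 66 := by
      by_contra hcon
      push Not at hcon
      nlinarith
    have h4 : |h i j - (1 : M2Z) i j| < 1 := by
      by_contra hcon
      push Not at hcon
      have : (67 : ℤ) ≤ M := by exact_mod_cast hM
      nlinarith
    have := Int.abs_lt_one_iff.mp h4
    linarith
  have hcancel : ∀ s s' : M2Z, (p : ℤ) • s = (p : ℤ) • s' → s = s' := by
    intro s s' h
    ext i j
    have := congrFun (congrFun h i) j
    simpa [hp.ne_zero] using this
  refine ⟨S, ⟨fun s hs => (hS s hs).1, ?_, ?_⟩, hc, near⟩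
  · rintro s hs s' hs' ⟨h, hh⟩
    have h1 := one _ _ hh (near s' hs' s hs)
    rw [h1] at hh
    have h2 := congrArg (· * s) hh
    simp only [mul_assoc, Matrix.adjugate_mul, (hS s hs).1] at h2
    refine (hcancel _ _ ?_).symm
    simpa [zsmul_eq_mul, (Nat.cast_commute p _).eq] using h2
  · rintro s hs s' hs' ⟨h, hh⟩
    have h1 := one _ _ hh (near' s hs s' hs')
    rw [h1] at hh
    have h2 := congrArg (s' * ·) hh
    simp only [← mul_assoc, Matrix.mul_adjugate, (hS s' hs').1] at h2
    refine (hcancel _ _ ?_)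
    simpa [zsmul_eq_mul, (Nat.cast_commute p _).eq] using h2

/-! ### Change of variables -/

open MeasureTheory

theorem pole_null (c d : ℝ) (h : c ≠ 0 ∨ d ≠ 0) : volume {x : ℝ | c * x + d ≠ 0}ᶜ = 0 := by
  refine Set.Subsingleton.measure_zero (fun x hx y hy => ?_) _
  simp only [Set.mem_compl_iff, Set.mem_ofPred_eq, not_not] at hx hy
  rcases eq_or_ne c 0 with rfl | hc
  · simp_all
  · exact mul_left_cancel₀ hc (by linarith)

/-- Change of variables under a fractional linear map, for functions homogeneous of degree `-2`. -/
theorem cv_hom (a b c d : ℝ) (hD : a * d - b * c ≠ 0) (q : ℝ × ℝ → ℝ)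
    (hq : ∀ t : ℝ, t ≠ 0 → ∀ u v, q (t * u, t * v) = (t ^ 2)⁻¹ * q (u, v)) :
    (Integrable (fun x : ℝ => q (x, 1)) → Integrable (fun x : ℝ => q (a * x + b, c * x + d))) ∧
      |a * d - b * c| * ∫ x : ℝ, q (a * x + b, c * x + d) = ∫ x : ℝ, q (x, 1) := by
  set s : Set ℝ := {x | c * x + d ≠ 0} with hs
  have hcd : c ≠ 0 ∨ d ≠ 0 := by
    by_contra! h; obtain ⟨rfl, rfl⟩ := h; simp at hD
  have hca : -c ≠ 0 ∨ a ≠ 0 := by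
    by_contra! h
    obtain ⟨h1, rfl⟩ := h
    have : c = 0 := by linarith
    subst this; simp at hD
  have hsm : MeasurableSet s := (measurableSet_eq_fun (by fun_prop) (by fun_prop)).compl
  have hs0 : volume sᶜ = 0 := pole_null c d hcd
  set φ : ℝ → ℝ := fun x => (a * x + b) / (c * x + d) with hφ
  have hder : ∀ x ∈ s, HasDerivWithinAt φ ((a * d - b * c) / (c * x + d) ^ 2) s x := by
    intro x hx
    have h1 : HasDerivAt (fun x : ℝ => a * x + b) a x := by
      simpa using ((hasDerivAt_id x).const_mul a).add_const b
    have h2 : HasDerivAt (fun x : ℝ => c * x + d) c x := by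
      simpa using ((hasDerivAt_id x).const_mul c).add_const d
    have := (h1.div h2 hx).hasDerivWithinAt (s := s)
    rwa [show a * (c * x + d) - (a * x + b) * c = a * d - b * c by ring] at this
  have hinj : Set.InjOn φ s := by
    intro x hx y hy hxy
    simp only [hφ] at hxy
    rw [div_eq_div_iff hx hy] at hxy
    exact mul_left_cancel₀ hD (by linarith)
  have him : volume (φ '' s)ᶜ = 0 := by
    refine measure_mono_null ?_ (pole_null (-c) a hca)
    refine Set.compl_subset_compl.mpr fun y hy => ?_
    have hy' : a - c * y ≠ 0 := by
      intro h; exact hy (by linarith)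
    have hx : c * ((d * y - b) / (a - c * y)) + d = (a * d - b * c) / (a - c * y) := by
      field_simp; ring
    refine ⟨(d * y - b) / (a - c * y), ?_, ?_⟩
    · rw [hs, Set.mem_ofPred_eq, hx]; exact div_ne_zero hD hy'
    · simp only [hφ]
      have hw : (d * y - b) / (a - c * y) * (a - c * y) = d * y - b := div_mul_cancel₀ _ hy'
      rw [div_eq_iff (by rw [hx]; exact div_ne_zero hD hy')]
      linarith
  have hpt : ∀ x ∈ s, |(a * d - b * c) / (c * x + d) ^ 2| • q (φ x, 1) =
      |a * d - b * c| * q (a * x + b, c * x + d) := by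
    intro x hx
    have := hq (c * x + d) hx (φ x) 1
    rw [mul_one, show (c * x + d) * φ x = a * x + b from mul_div_cancel₀ _ hx] at this
    rw [this, smul_eq_mul, abs_div, abs_of_nonneg (sq_nonneg (c * x + d))]
    ring
  have e1 : volume.restrict s = volume := Measure.restrict_eq_self_of_ae_mem
    (by rw [ae_iff]; exact hs0)
  have e2 : volume.restrict (φ '' s) = volume := Measure.restrict_eq_self_of_ae_mem
    (by rw [ae_iff]; exact him)
  constructor
  · intro hint
    have h1 := (integrableOn_image_iff_integrableOn_abs_deriv_smul hsm hder hinj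
      (fun y => q (y, 1))).mp hint.integrableOn
    have h2 := h1.congr_fun hpt hsm
    rw [IntegrableOn, e1] at h2
    have h3 := h2.const_mul (|a * d - b * c|)⁻¹
    refine h3.congr (Filter.Eventually.of_forall fun x => ?_)
    have : |a * d - b * c| ≠ 0 := abs_ne_zero.mpr hD
    simp only
    field_simp
  · have h1 := integral_image_eq_integral_abs_deriv_smul hsm hder hinj (fun y => q (y, 1))
    rw [setIntegral_congr_fun hsm hpt, e1, e2, integral_const_mul] at h1
    exact h1.symm

/-! ### The representation on homogeneous functions -/

/-- Real `2 × 2` matrices. -/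
abbrev M2R := Matrix (Fin 2) (Fin 2) ℝ

/-- The space of measurable functions on the plane, homogeneous of degree `-1` in the sense
`f (t w) = |t|⁻¹ f w`, whose restriction to the line `y = 1` is square integrable. -/
def HV : Submodule ℝ (ℝ × ℝ → ℝ) where
  carrier := {f | Measurable f ∧ (∀ t : ℝ, t ≠ 0 → ∀ u v, f (t * u, t * v) = |t|⁻¹ * f (u, v)) ∧
    MemLp (fun x : ℝ => f (x, 1)) 2 volume}
  add_mem' := by
    rintro f g ⟨f1, f2, f3⟩ ⟨g1, g2, g3⟩
    refine ⟨f1.add g1, fun t ht u v => ?_, f3.add g3⟩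
    simp only [Pi.add_apply, f2 t ht, g2 t ht]; ring
  zero_mem' := ⟨measurable_const, fun t ht u v => by simp, by simp⟩
  smul_mem' := by
    rintro r f ⟨f1, f2, f3⟩
    refine ⟨f1.const_smul r, fun t ht u v => ?_, f3.const_smul r⟩
    simp only [Pi.smul_apply, f2 t ht, smul_eq_mul]; ring

theorem hv_meas (f : HV) : Measurable f.1 := f.2.1
theorem hv_hom (f : HV) {t : ℝ} (ht : t ≠ 0) (u v : ℝ) :
    f.1 (t * u, t * v) = |t|⁻¹ * f.1 (u, v) := f.2.2.1 t ht u v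
theorem hv_memLp (f : HV) : MemLp (fun x : ℝ => f.1 (x, 1)) 2 volume := f.2.2.2
theorem hv_int_mul (f h : HV) : Integrable (fun x : ℝ => f.1 (x, 1) * h.1 (x, 1)) :=
  (hv_memLp f).integrable_mul (hv_memLp h)

/-- The inner product on `HV`: the `L²` pairing on the line `y = 1`. -/
noncomputable def ip : HV →ₗ[ℝ] HV →ₗ[ℝ] ℝ :=
  LinearMap.mk₂ ℝ (fun f h => ∫ x : ℝ, f.1 (x, 1) * h.1 (x, 1))
    (fun f f' h => by
      rw [← integral_add (hv_int_mul f h) (hv_int_mul f' h)]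
      congr 1; ext x; simp [add_mul])
    (fun r f h => by
      rw [smul_eq_mul, ← integral_const_mul]
      congr 1; ext x; simp [mul_assoc])
    (fun f h h' => by
      rw [← integral_add (hv_int_mul f h) (hv_int_mul f h')]
      congr 1; ext x; simp [mul_add])
    (fun r f h => by
      rw [smul_eq_mul, ← integral_const_mul]
      congr 1; ext x; simp; ring)

theorem ip_def (f h : HV) : ip f h = ∫ x : ℝ, f.1 (x, 1) * h.1 (x, 1) := rfl

theorem ip_comm (f h : HV) : ip f h = ip h f := by
  simp only [ip_def, mul_comm]

theorem ip_nonneg (f : HV) : 0 ≤ ip f f := integral_nonneg fun _ => mul_self_nonneg _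

theorem ip_cs (f h : HV) : ip f h ^ 2 ≤ ip f f * ip h h := by
  have := LinearMap.BilinForm.apply_mul_apply_le_of_forall_zero_le ip ip_nonneg f h
  rwa [ip_comm h f, ← sq] at this

theorem ip_abs_le (f h : HV) : |ip f h| ≤ √(ip f f) * √(ip h h) := by
  rw [← Real.sqrt_mul (ip_nonneg f)]
  exact Real.abs_le_sqrt (ip_cs f h)

theorem hv_comp_mem (g : M2R) (f : HV) :
    (fun w : ℝ × ℝ => √|g.det| * f.1 (g 0 0 * w.1 + g 0 1 * w.2, g 1 0 * w.1 + g 1 1 * w.2)) ∈ HV := by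
  by_cases hg : g.det = 0
  · have : (fun w : ℝ × ℝ => √|g.det| * f.1 (g 0 0 * w.1 + g 0 1 * w.2, g 1 0 * w.1 + g 1 1 * w.2))
      = 0 := by ext w; simp [hg]
    rw [this]; exact HV.zero_mem
  · refine ⟨((hv_meas f).comp (by fun_prop)).const_mul _, fun t ht u v => ?_, ?_⟩
    · have := hv_hom f ht (g 0 0 * u + g 0 1 * v) (g 1 0 * u + g 1 1 * v)
      simp only
      rw [show g 0 0 * (t * u) + g 0 1 * (t * v) = t * (g 0 0 * u + g 0 1 * v) by ring,
        show g 1 0 * (t * u) + g 1 1 * (t * v) = t * (g 1 0 * u + g 1 1 * v) by ring, this]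
      ring
    · refine MemLp.const_mul ?_ _
      rw [memLp_two_iff_integrable_sq]
      · simp only [mul_one]
        refine (cv_hom (g 0 0) (g 0 1) (g 1 0) (g 1 1) ?_ (fun w => f.1 w ^ 2) ?_).1 ?_
        · rwa [Matrix.det_fin_two] at hg
        · intro t ht u v
          rw [hv_hom f ht, mul_pow, inv_pow, sq_abs]
        · exact (memLp_two_iff_integrable_sq (hv_memLp f).1).mp (hv_memLp f)
      · exact ((hv_meas f).comp (by fun_prop)).aestronglyMeasurable

/-- The normalised action of a matrix by substitution. It is an isometry when the determinant is
nonzero, depends on the matrix only up to nonzero scalars, and is zero for singular matrices. -/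
noncomputable def rho (g : M2R) : Module.End ℝ HV where
  toFun f := ⟨_, hv_comp_mem g f⟩
  map_add' f h := by ext w; simp [mul_add]
  map_smul' r f := by ext w; simp; ring

theorem rho_apply (g : M2R) (f : HV) (w : ℝ × ℝ) : (rho g f).1 w =
    √|g.det| * f.1 (g 0 0 * w.1 + g 0 1 * w.2, g 1 0 * w.1 + g 1 1 * w.2) := rfl

theorem rho_mul (g h : M2R) : rho (g * h) = rho h * rho g := by
  ext f w
  rw [Module.End.mul_apply, rho_apply, rho_apply, rho_apply, Matrix.det_mul, abs_mul,
    Real.sqrt_mul (abs_nonneg _)]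
  simp only [Matrix.mul_apply, Fin.sum_univ_two]
  rw [mul_comm √|g.det|, mul_assoc]
  refine congrArg _ (congrArg _ (congrArg _ ?_))
  refine Prod.ext ?_ ?_
  · simp only; ring
  · simp only; ring

theorem rho_smul (t : ℝ) (ht : t ≠ 0) (g : M2R) : rho (t • g) = rho g := by
  ext f w
  rw [rho_apply, rho_apply, Matrix.det_smul, abs_mul, Real.sqrt_mul (abs_nonneg _)]
  simp only [Matrix.smul_apply, smul_eq_mul, Fintype.card_fin, abs_pow, Real.sqrt_sq_eq_abs, abs_abs]
  rw [show t * g 0 0 * w.1 + t * g 0 1 * w.2 = t * (g 0 0 * w.1 + g 0 1 * w.2) by ring,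
    show t * g 1 0 * w.1 + t * g 1 1 * w.2 = t * (g 1 0 * w.1 + g 1 1 * w.2) by ring, hv_hom f ht]
  have : |t| ≠ 0 := abs_ne_zero.mpr ht
  field_simp

theorem rho_one : rho 1 = 1 := by
  ext f w
  simp [rho_apply]

theorem ip_rho (g : M2R) (hg : g.det ≠ 0) (f h : HV) : ip (rho g f) (rho g h) = ip f h := by
  have key := (cv_hom (g 0 0) (g 0 1) (g 1 0) (g 1 1) (by rwa [Matrix.det_fin_two] at hg)
    (fun w => f.1 w * h.1 w) (fun t ht u v => by
      rw [hv_hom f ht, hv_hom h ht, ← sq_abs t]; ring)).2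
  rw [← Matrix.det_fin_two] at key
  rw [ip_def, ip_def, ← key, ← integral_const_mul]
  congr 1; ext x
  simp only [rho_apply, mul_one]
  have := Real.mul_self_sqrt (abs_nonneg g.det)
  calc _ = (√|g.det| * √|g.det|) * (f.1 (g 0 0 * x + g 0 1, g 1 0 * x + g 1 1) *
    h.1 (g 0 0 * x + g 0 1, g 1 0 * x + g 1 1)) := by ring
    _ = _ := by rw [this]

theorem rho_adj_mul (g : M2R) (hg : g.det ≠ 0) : rho g.adjugate * rho g = 1 := by
  rw [← rho_mul, Matrix.mul_adjugate, rho_smul _ hg, rho_one]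

theorem ip_rho_left (g : M2R) (hg : g.det ≠ 0) (f h : HV) :
    ip (rho g f) h = ip f (rho g.adjugate h) := by
  have hg' : g.adjugate.det ≠ 0 := by
    rw [Matrix.det_adjugate]; simpa using hg
  rw [← ip_rho g.adjugate hg', ← Module.End.mul_apply, rho_adj_mul g hg, Module.End.one_apply]

/-- The function of the plane with prescribed restriction to the line `y = 1`. -/
noncomputable def lift (G : ℝ → ℝ) (hG : Measurable G) (hG2 : MemLp G 2 volume) : HV :=
  ⟨fun w => |w.2|⁻¹ * G (w.1 / w.2), by
    refine ⟨?_, fun t ht u v => ?_, ?_⟩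
    · exact (continuous_abs.measurable.comp measurable_snd).inv.mul
        (hG.comp (measurable_fst.div measurable_snd))
    · simp only
      rw [mul_div_mul_left _ _ ht, abs_mul, mul_inv, mul_assoc]
    · simpa using hG2⟩

theorem lift_apply (G : ℝ → ℝ) (hG : Measurable G) (hG2 : MemLp G 2 volume) (w : ℝ × ℝ) :
    (lift G hG hG2).1 w = |w.2|⁻¹ * G (w.1 / w.2) := rfl

theorem ip_lift (G : ℝ → ℝ) (hG : Measurable G) (hG2 : MemLp G 2 volume)
    (H : ℝ → ℝ) (hH : Measurable H) (hH2 : MemLp H 2 volume) :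
    ip (lift G hG hG2) (lift H hH hH2) = ∫ x, G x * H x := by
  simp [ip_def, lift_apply]

/-- Integer matrices viewed as real matrices. -/
noncomputable def toR : M2Z →+* M2R := (Int.castRingHom ℝ).mapMatrix

theorem det_toR (g : M2Z) : (toR g).det = (g.det : ℝ) := by
  simp [toR, Matrix.det_fin_two]

theorem toR_adj (g : M2Z) : toR g.adjugate = (toR g).adjugate := by
  ext i j
  fin_cases i <;> fin_cases j <;> simp [toR, Matrix.adjugate_fin_two]

/-- The average of `rho` over the words `pw S n`, counted with multiplicity; it is the `n`-th power of
`UU S 1` (`UU_eq_pow`). -/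
noncomputable def UU (S : Finset M2Z) (n : ℕ) : Module.End ℝ HV :=
  (((S.card : ℝ) ^ 2) ^ n)⁻¹ • ((pw S n).map fun g => rho (toR g)).sum

/-- The average of `rho s` over `s ∈ S`; the operator `UU S 1` is `TT Sᵀ TT S` (`ip_UU_one`). -/
noncomputable def TT (S : Finset M2Z) : Module.End ℝ HV :=
  (S.card : ℝ)⁻¹ • ∑ s ∈ S, rho (toR s)

theorem UU_succ (S : Finset M2Z) (n : ℕ) : UU S (n + 1) = UU S 1 * UU S n := by
  simp only [UU]
  rw [pw_add, Multiset.map_bind, Multiset.sum_bind]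
  simp only [Multiset.map_map, Function.comp_def, map_mul, rho_mul]
  simp only [Multiset.sum_map_mul_right, Multiset.sum_map_mul_left]
  rw [smul_mul_smul_comm, ← mul_inv, pow_succ']
  simp

theorem UU_zero (S : Finset M2Z) : UU S 0 = 1 := by
  simp [UU, pw, rho_one]

theorem UU_eq_pow (S : Finset M2Z) (n : ℕ) : UU S n = UU S 1 ^ n := by
  induction n with
  | zero => rw [UU_zero, pow_zero]
  | succ n ih => rw [UU_succ, ih, pow_succ']

theorem ip_UU_left (S : Finset M2Z) (n : ℕ) (f h : HV) : ip (UU S n f) h =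
    (((S.card : ℝ) ^ 2) ^ n)⁻¹ * ((pw S n).map fun g => ip (rho (toR g) f) h).sum := by
  have h1 : ∀ W : Multiset M2Z, ip ((W.map fun g => rho (toR g)).sum f) h =
      (W.map fun g => ip (rho (toR g) f) h).sum := by
    intro W
    induction W using Multiset.induction_on with
    | empty => simp
    | cons a s ih =>
      rw [Multiset.map_cons, Multiset.sum_cons, LinearMap.add_apply, map_add, LinearMap.add_apply, ih,
        Multiset.map_cons, Multiset.sum_cons]
  rw [UU, LinearMap.smul_apply, map_smul, LinearMap.smul_apply, h1, smul_eq_mul]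

theorem ip_UU_symm (p : ℕ) (hp : p ≠ 0) (S : Finset M2Z) (hS : SepSet p S) (n : ℕ) (f h : HV) :
    ip (UU S n f) h = ip f (UU S n h) := by
  rw [ip_comm f, ip_UU_left, ip_UU_left]
  congr 2
  conv_rhs => rw [← pw_adj, Multiset.map_map]
  refine Multiset.map_congr rfl fun g hg => ?_
  have hd := det_pw p S hS n g hg
  have : (toR g).det ≠ 0 := by
    rw [det_toR, hd]; exact_mod_cast pow_ne_zero _ (by exact_mod_cast hp)
  rw [ip_rho_left _ this, ip_comm, Function.comp, toR_adj]

/-- The quadratic form of `UU S 1` is positive semidefinite, being `‖TT S f‖²`. -/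
theorem ip_UU_one (p : ℕ) (hp : p ≠ 0) (S : Finset M2Z) (hS : SepSet p S) (f h : HV) :
    ip (UU S 1 f) h = ip (TT S f) (TT S h) := by
  rw [ip_UU_left, pw_one, Multiset.map_map]
  have : ∀ z ∈ (S ×ˢ S).val, ((fun g => ip (rho (toR g) f) h) ∘ fun z : M2Z × M2Z =>
      z.1 * z.2.adjugate) z = ip (rho (toR z.1) f) (rho (toR z.2) h) := by
    intro z hz
    have hz2 : z.2 ∈ S := (Finset.mem_product.mp hz).2
    have hd : (toR z.2).det ≠ 0 := by
      rw [det_toR, hS.det _ hz2]; exact_mod_cast hp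
    simp only [Function.comp]
    rw [map_mul, rho_mul, toR_adj, Module.End.mul_apply, ip_comm, ip_comm (rho (toR z.1) f),
      ip_rho_left _ hd]
  rw [Multiset.map_congr rfl this]
  change _ * ∑ z ∈ S ×ˢ S, _ = _
  rw [Finset.sum_product_right]
  simp only [TT, LinearMap.smul_apply, map_smul, LinearMap.sum_apply, map_sum, smul_eq_mul,
    Finset.mul_sum]
  refine Finset.sum_congr rfl fun s _ => Finset.sum_congr rfl fun s' _ => ?_
  ring

/-- Log-convexity of the moments `⟨U ^ n f, f⟩`, by repeated Cauchy–Schwarz: a bound for a high power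
of the averaging operator yields one for the operator itself. -/
theorem ip_UU_pow (p : ℕ) (hp : p ≠ 0) (S : Finset M2Z) (hS : SepSet p S) (f : HV) (j : ℕ) :
    ip (UU S 1 f) f ^ 2 ^ j ≤ ip (UU S (2 ^ j) f) f * ip f f ^ (2 ^ j - 1) := by
  induction j with
  | zero => simp
  | succ j ih =>
    set n := 2 ^ j with hn
    have hn1 : 1 ≤ n := Nat.one_le_two_pow
    have h0 : 0 ≤ ip (UU S 1 f) f := by
      rw [ip_UU_one p hp S hS]; exact ip_nonneg _
    have h1 : ip (UU S n f) f ^ 2 ≤ ip (UU S (2 * n) f) f * ip f f := by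
      refine (ip_cs _ _).trans (le_of_eq ?_)
      rw [← ip_UU_symm p hp S hS, two_mul, UU_eq_pow S (n + n), pow_add, ← UU_eq_pow,
        Module.End.mul_apply]
    rw [show 2 ^ (j + 1) = 2 * n by rw [pow_succ, hn, mul_comm]]
    calc ip (UU S 1 f) f ^ (2 * n) = (ip (UU S 1 f) f ^ n) ^ 2 := by rw [← pow_mul, mul_comm]
      _ ≤ (ip (UU S n f) f * ip f f ^ (n - 1)) ^ 2 := by
          gcongr
      _ = ip (UU S n f) f ^ 2 * ip f f ^ (2 * (n - 1)) := by rw [mul_pow, ← pow_mul, mul_comm 2 (n-1)]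
      _ ≤ (ip (UU S (2 * n) f) f * ip f f) * ip f f ^ (2 * (n - 1)) := by
          have := ip_nonneg f
          gcongr
      _ = ip (UU S (2 * n) f) f * ip f f ^ (2 * n - 1) := by
          rw [mul_assoc, mul_comm (ip f f) (_ ^ _), ← pow_succ, show 2 * (n - 1) + 1 = 2 * n - 1 by omega]

/-! ### Step functions -/

theorem floor_cell (N : ℕ) (hN : 0 < N) (x : ℝ) (k : ℤ) :
    ⌊(N : ℝ) * x⌋ = k ↔ x ∈ Set.Ico ((k : ℝ) / N) ((k + 1) / N) := by
  have hN' : (0 : ℝ) < N := by exact_mod_cast hN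
  rw [Int.floor_eq_iff, Set.mem_Ico, div_le_iff₀ hN', lt_div_iff₀ hN', mul_comm x]

/-- Integrating a function of the cell index against a weight. -/
theorem cell_integral (N : ℕ) (hN : 0 < N) (s : Finset ℤ) (φ : ℤ → ℝ) (hφ : ∀ k, k ∉ s → φ k = 0)
    (F : ℝ → ℝ) (hF : ∀ k ∈ s, IntegrableOn F (Set.Ico ((k : ℝ) / N) ((k + 1) / N))) :
    Integrable (fun x : ℝ => φ ⌊(N : ℝ) * x⌋ * F x) ∧
      ∫ x : ℝ, φ ⌊(N : ℝ) * x⌋ * F x =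
        ∑ k ∈ s, φ k * ∫ x in Set.Ico ((k : ℝ) / N) ((k + 1) / N), F x := by
  have h1 : (fun x : ℝ => φ ⌊(N : ℝ) * x⌋ * F x) = fun x => ∑ k ∈ s,
      φ k * (Set.Ico ((k : ℝ) / N) ((k + 1) / N)).indicator F x := by
    ext x
    by_cases h : ⌊(N : ℝ) * x⌋ ∈ s
    · rw [Finset.sum_eq_single_of_mem _ h]
      · rw [Set.indicator_of_mem ((floor_cell N hN x _).mp rfl)]
      · intro k _ hk
        rw [Set.indicator_of_notMem (fun hx => hk ((floor_cell N hN x k).mpr hx).symm), mul_zero]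
    · rw [hφ _ h, zero_mul]
      refine (Finset.sum_eq_zero fun k hk => ?_).symm
      rw [Set.indicator_of_notMem (fun hx => ?_), mul_zero]
      exact h (((floor_cell N hN x k).mpr hx) ▸ hk)
  have h2 : ∀ k ∈ s, Integrable (fun x => φ k *
      (Set.Ico ((k : ℝ) / N) ((k + 1) / N)).indicator F x) := fun k hk =>
    ((integrable_indicator_iff measurableSet_Ico).mpr (hF k hk)).const_mul _
  constructor
  · rw [h1]; exact integrable_finsetSum _ h2
  · rw [h1, integral_finsetSum _ h2]
    refine Finset.sum_congr rfl fun k _ => ?_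
    rw [integral_const_mul, integral_indicator measurableSet_Ico]

/-- `G` vanishes off `[0, 1)` and is constant on the cells `[k/N, (k+1)/N)`. -/
def Step (N : ℕ) (G : ℝ → ℝ) : Prop :=
  ∃ g : ℤ → ℝ, (∀ x, G x = g ⌊(N : ℝ) * x⌋) ∧ ∀ k, k ∉ Finset.Ico (0 : ℤ) N → g k = 0

theorem Step.meas {N : ℕ} {G : ℝ → ℝ} (h : Step N G) : Measurable G := by
  obtain ⟨g, hg, -⟩ := h
  have : G = fun x => g ⌊(N : ℝ) * x⌋ := funext hg
  rw [this]
  exact (measurable_of_countable g).comp (Int.measurable_floor.comp (measurable_id.const_mul _))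

theorem Step.zero_off {N : ℕ} (hN : 0 < N) {G : ℝ → ℝ} (h : Step N G) {x : ℝ}
    (hx : x ∉ Set.Ico (0 : ℝ) 1) : G x = 0 := by
  obtain ⟨g, hg, h0⟩ := h
  have hN' : (0 : ℝ) < N := by exact_mod_cast hN
  rw [hg]
  refine h0 _ fun hk => hx ?_
  rw [Finset.mem_Ico, Int.floor_nonneg, Int.floor_lt] at hk
  push_cast at hk
  exact ⟨by nlinarith, by nlinarith⟩

theorem Step.bdd {N : ℕ} {G : ℝ → ℝ} (h : Step N G) : ∃ C, 0 ≤ C ∧ ∀ x, |G x| ≤ C := by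
  obtain ⟨g, hg, h0⟩ := h
  refine ⟨∑ k ∈ Finset.Ico (0 : ℤ) N, |g k|, Finset.sum_nonneg fun _ _ => abs_nonneg _, fun x => ?_⟩
  rw [hg]
  by_cases hk : ⌊(N : ℝ) * x⌋ ∈ Finset.Ico (0 : ℤ) N
  · exact Finset.single_le_sum (f := fun k => |g k|) (fun _ _ => abs_nonneg _) hk
  · rw [h0 _ hk, abs_zero]
    exact Finset.sum_nonneg fun _ _ => abs_nonneg _

/-- A bounded measurable function vanishing off a set of finite measure is integrable. -/
theorem integrable_bdd_supp {α : Type*} [MeasurableSpace α] (μ : Measure α) (f : α → ℝ)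
    (hf : AEStronglyMeasurable f μ) (C : ℝ) (hC : ∀ x, |f x| ≤ C) (s : Set α) (hs : μ s ≠ ⊤)
    (h0 : ∀ x, x ∉ s → f x = 0) : Integrable f μ := by
  have h1 : IntegrableOn f s μ := by
    have : IsFiniteMeasure (μ.restrict s) := ⟨by simpa using lt_top_iff_ne_top.mpr hs⟩
    exact Integrable.of_bound hf.restrict C (Filter.Eventually.of_forall fun x => hC x)
  exact h1.integrable_of_forall_notMem_eq_zero h0

theorem Step.integrable_mul {N : ℕ} (hN : 0 < N) {G : ℝ → ℝ} (h : Step N G) (w : ℝ → ℝ)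
    (hw : Measurable w) (C : ℝ) (hC : ∀ x, |w x| ≤ C) : Integrable (fun x => G x * w x) := by
  obtain ⟨B, hB0, hB⟩ := h.bdd
  refine integrable_bdd_supp volume _ (h.meas.mul hw).aestronglyMeasurable (B * C) (fun x => ?_)
    (Set.Ico 0 1) (by simp) fun x hx => by rw [h.zero_off hN hx, zero_mul]
  rw [abs_mul]
  exact mul_le_mul (hB x) (hC x) (abs_nonneg _) hB0

theorem Step.integrable {N : ℕ} (hN : 0 < N) {G : ℝ → ℝ} (h : Step N G) : Integrable G := by
  simpa using h.integrable_mul hN (fun _ => 1) measurable_const 1 (by simp)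

theorem Step.integrable_sq {N : ℕ} (hN : 0 < N) {G : ℝ → ℝ} (h : Step N G) :
    Integrable (fun x => G x ^ 2) := by
  obtain ⟨B, hB0, hB⟩ := h.bdd
  simp only [sq]
  exact h.integrable_mul hN G h.meas B hB

theorem Step.memLp {N : ℕ} (hN : 0 < N) {G : ℝ → ℝ} (h : Step N G) : MemLp G 2 volume :=
  (memLp_two_iff_integrable_sq h.meas.aestronglyMeasurable).mpr (h.integrable_sq hN)

theorem cell_vol (N : ℕ) (hN : 0 < N) (k : ℤ) :
    ∫ _ in Set.Ico ((k : ℝ) / N) ((k + 1) / N), (1 : ℝ) = 1 / N := by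
  have hN' : (0 : ℝ) < N := by exact_mod_cast hN
  rw [setIntegral_const, Measure.real, Real.volume_Ico, smul_eq_mul, mul_one, add_div,
    add_sub_cancel_left, ENNReal.toReal_ofReal (by positivity)]

theorem step_sq_integral (N : ℕ) (hN : 0 < N) (s : Finset ℤ) (φ : ℤ → ℝ)
    (hφ : ∀ k, k ∉ s → φ k = 0) :
    ∫ x : ℝ, φ ⌊(N : ℝ) * x⌋ = (∑ k ∈ s, φ k) / N := by
  have := (cell_integral N hN s φ hφ (fun _ => 1) (fun k _ => by simp)).2
  simp only [mul_one, cell_vol N hN] at this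
  rw [this, ← Finset.sum_mul]; ring

/-- Control of small translations of a step function by an integrable majorant. -/
theorem Step.modulus {N : ℕ} (hN : 0 < N) {G : ℝ → ℝ} (h : Step N G) (τ : ℝ) (hτ : 0 ≤ τ)
    (hNτ : N * τ ≤ 1) : ∃ D : ℝ → ℝ, Measurable D ∧ (∀ x, 0 ≤ D x) ∧ Integrable D ∧
      (∀ x y, |y - x| ≤ τ → (G y - G x) ^ 2 ≤ D x) ∧
      ∫ x, D x ≤ 8 * (N * τ) * ∫ x, G x ^ 2 := by
  obtain ⟨g, hg, h0⟩ := h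
  have hN' : (0 : ℝ) < N := by exact_mod_cast hN
  set s := Finset.Ico (-1 : ℤ) (N + 1) with hs
  set φ₁ : ℤ → ℝ := fun k => (g (k + 1) - g k) ^ 2 with hφ₁
  set φ₂ : ℤ → ℝ := fun k => (g (k - 1) - g k) ^ 2 with hφ₂
  have hz : ∀ k : ℤ, k < 0 ∨ (N : ℤ) ≤ k → g k = 0 := fun k hk => h0 k (by
    rw [Finset.mem_Ico]; omega)
  have h1 : ∀ k, k ∉ s → φ₁ k = 0 := fun k hk => by
    rw [hs, Finset.mem_Ico] at hk
    simp only [hφ₁]; rw [hz (k + 1) (by omega), hz k (by omega)]; ring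
  have h2 : ∀ k, k ∉ s → φ₂ k = 0 := fun k hk => by
    rw [hs, Finset.mem_Ico] at hk
    simp only [hφ₂]; rw [hz (k - 1) (by omega), hz k (by omega)]; ring
  set F₁ : ℝ → ℝ := {x : ℝ | 1 - N * τ ≤ Int.fract (N * x)}.indicator 1 with hF₁
  set F₂ : ℝ → ℝ := {x : ℝ | Int.fract (N * x) < N * τ}.indicator 1 with hF₂
  have mfr : Measurable fun x : ℝ => Int.fract (N * x) :=
    measurable_fract.comp (measurable_id.const_mul _)
  have m1 : MeasurableSet {x : ℝ | 1 - N * τ ≤ Int.fract (N * x)} :=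
    measurableSet_le measurable_const mfr
  have m2 : MeasurableSet {x : ℝ | Int.fract (N * x) < N * τ} :=
    measurableSet_lt mfr measurable_const
  have i1 : ∀ k : ℤ, IntegrableOn F₁ (Set.Ico ((k : ℝ) / N) ((k + 1) / N)) := fun k => by
    refine IntegrableOn.indicator (by simp [Pi.one_def]) m1
  have i2 : ∀ k : ℤ, IntegrableOn F₂ (Set.Ico ((k : ℝ) / N) ((k + 1) / N)) := fun k => by
    refine IntegrableOn.indicator (by simp [Pi.one_def]) m2
  have v1 : ∀ k : ℤ, ∫ x in Set.Ico ((k : ℝ) / N) ((k + 1) / N), F₁ x ≤ τ := fun k => by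
    rw [hF₁, integral_indicator_one m1, Measure.real, Measure.restrict_apply m1]
    refine ENNReal.toReal_le_of_le_ofReal hτ ?_
    calc volume _ ≤ volume (Set.Icc ((k + 1) / N - τ) ((k + 1) / N : ℝ)) := by
          refine measure_mono fun x hx => ?_
          obtain ⟨hx1, hx2⟩ := hx
          have hfl := (floor_cell N hN x k).mpr hx2
          rw [Set.mem_ofPred_eq, Int.fract, hfl] at hx1
          refine ⟨?_, hx2.2.le⟩
          rw [sub_le_iff_le_add, div_le_iff₀ hN']
          nlinarith
      _ = ENNReal.ofReal τ := by rw [Real.volume_Icc]; congr 1; ring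
  have v2 : ∀ k : ℤ, ∫ x in Set.Ico ((k : ℝ) / N) ((k + 1) / N), F₂ x ≤ τ := fun k => by
    rw [hF₂, integral_indicator_one m2, Measure.real, Measure.restrict_apply m2]
    refine ENNReal.toReal_le_of_le_ofReal hτ ?_
    calc volume _ ≤ volume (Set.Icc (k / N : ℝ) (k / N + τ)) := by
          refine measure_mono fun x hx => ?_
          obtain ⟨hx1, hx2⟩ := hx
          have hfl := (floor_cell N hN x k).mpr hx2
          rw [Set.mem_ofPred_eq, Int.fract, hfl] at hx1
          refine ⟨hx2.1, ?_⟩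
          rw [← sub_le_iff_le_add, le_div_iff₀ hN']
          nlinarith
      _ = ENNReal.ofReal τ := by rw [Real.volume_Icc]; congr 1; ring
  obtain ⟨j1, e1⟩ := cell_integral N hN s φ₁ h1 F₁ (fun k _ => i1 k)
  obtain ⟨j2, e2⟩ := cell_integral N hN s φ₂ h2 F₂ (fun k _ => i2 k)
  have mfl : Measurable fun x : ℝ => ⌊(N : ℝ) * x⌋ :=
    Int.measurable_floor.comp (measurable_id.const_mul _)
  refine ⟨fun x => φ₁ ⌊(N : ℝ) * x⌋ * F₁ x + φ₂ ⌊(N : ℝ) * x⌋ * F₂ x, ?_, ?_, j1.add j2, ?_, ?_⟩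
  · exact (((measurable_of_countable φ₁).comp mfl).mul (measurable_one.indicator m1)).add
      (((measurable_of_countable φ₂).comp mfl).mul (measurable_one.indicator m2))
  · intro x
    have a1 : 0 ≤ F₁ x := Set.indicator_nonneg (fun _ _ => zero_le_one) x
    have a2 : 0 ≤ F₂ x := Set.indicator_nonneg (fun _ _ => zero_le_one) x
    have b1 : 0 ≤ φ₁ ⌊(N : ℝ) * x⌋ := sq_nonneg _
    have b2 : 0 ≤ φ₂ ⌊(N : ℝ) * x⌋ := sq_nonneg _
    positivity
  · intro x y hxy
    have a1 : 0 ≤ F₁ x := Set.indicator_nonneg (fun _ _ => zero_le_one) x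
    have a2 : 0 ≤ F₂ x := Set.indicator_nonneg (fun _ _ => zero_le_one) x
    have b1 : 0 ≤ φ₁ ⌊(N : ℝ) * x⌋ := sq_nonneg _
    have b2 : 0 ≤ φ₂ ⌊(N : ℝ) * x⌋ := sq_nonneg _
    obtain ⟨hy1, hy2⟩ := abs_le.mp hxy
    set k := ⌊(N : ℝ) * x⌋ with hk
    have hfr : Int.fract ((N : ℝ) * x) = N * x - k := rfl
    have hkx := Int.floor_le ((N : ℝ) * x)
    have hkx' := Int.lt_floor_add_one ((N : ℝ) * x)
    rw [← hk] at hkx hkx'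
    have hly := Int.floor_le ((N : ℝ) * y)
    have hly' := Int.lt_floor_add_one ((N : ℝ) * y)
    have c1 : (N : ℝ) * y ≤ N * x + N * τ := by nlinarith
    have c2 : (N : ℝ) * x - N * τ ≤ N * y := by nlinarith
    rw [hg y, hg x, ← hk]
    set l := ⌊(N : ℝ) * y⌋ with hl
    have hl1 : l < k + 2 := by
      have : (l : ℝ) < k + 2 := by linarith
      exact_mod_cast this
    have hl2 : k - 2 < l := by
      have : (k : ℝ) - 2 < l := by linarith
      exact_mod_cast this
    obtain hlk | hlk | hlk : l = k ∨ l = k + 1 ∨ l = k - 1 := by omega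
    · rw [hlk, sub_self, zero_pow two_ne_zero]; exact add_nonneg (mul_nonneg b1 a1) (mul_nonneg b2 a2)
    · have : F₁ x = 1 := by
        rw [hF₁, Set.indicator_of_mem]; · rfl
        rw [Set.mem_ofPred_eq, hfr]
        rw [hlk] at hly; push_cast at hly; linarith
      change _ ≤ φ₁ k * F₁ x + φ₂ k * F₂ x
      rw [hlk, this]
      have : (g (k + 1) - g k) ^ 2 = φ₁ k := rfl
      rw [this]; nlinarith [mul_nonneg b2 a2]
    · have : F₂ x = 1 := by
        rw [hF₂, Set.indicator_of_mem]; · rfl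
        rw [Set.mem_ofPred_eq, hfr]
        rw [hlk] at hly'; push_cast at hly'; linarith
      change _ ≤ φ₁ k * F₁ x + φ₂ k * F₂ x
      rw [hlk, this]
      have : (g (k - 1) - g k) ^ 2 = φ₂ k := rfl
      rw [this]; nlinarith [mul_nonneg b1 a1]
  · rw [integral_add j1 j2, e1, e2]
    have hE : ∫ x, G x ^ 2 = (∑ k ∈ Finset.Ico (0 : ℤ) N, g k ^ 2) / N := by
      rw [← step_sq_integral N hN _ (fun k => g k ^ 2) (fun k hk => by simp [h0 k hk])]
      congr 1; ext x; rw [hg]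
    have t1 : ∑ k ∈ s, φ₁ k * ∫ x in Set.Ico ((k : ℝ) / N) ((k + 1) / N), F₁ x ≤
        (∑ k ∈ s, φ₁ k) * τ := by
      rw [Finset.sum_mul]
      exact Finset.sum_le_sum fun k _ => mul_le_mul_of_nonneg_left (v1 k) (sq_nonneg _)
    have t2 : ∑ k ∈ s, φ₂ k * ∫ x in Set.Ico ((k : ℝ) / N) ((k + 1) / N), F₂ x ≤
        (∑ k ∈ s, φ₂ k) * τ := by
      rw [Finset.sum_mul]
      exact Finset.sum_le_sum fun k _ => mul_le_mul_of_nonneg_left (v2 k) (sq_nonneg _)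
    have sh : ∀ a : ℤ, ∑ k ∈ s, g (k + a) ^ 2 ≤ ∑ k ∈ Finset.Ico (0 : ℤ) N, g k ^ 2 := by
      intro a
      have : ∑ k ∈ s, g (k + a) ^ 2 = ∑ k ∈ s.image (· + a), g k ^ 2 := by
        rw [Finset.sum_image (fun x _ y _ h => by simpa using h)]
      rw [this, ← Finset.sum_filter_add_sum_filter_not _ (· ∈ Finset.Ico (0 : ℤ) N)]
      rw [Finset.sum_eq_zero (s := Finset.filter (fun x => ¬ x ∈ Finset.Ico (0 : ℤ) N) _), add_zero]
      · refine Finset.sum_le_sum_of_subset_of_nonneg (fun k hk => (Finset.mem_filter.mp hk).2)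
          fun _ _ _ => sq_nonneg _
      · intro k hk; rw [h0 k (Finset.mem_filter.mp hk).2]; ring
    have q1 : ∑ k ∈ s, φ₁ k ≤ 4 * ∑ k ∈ Finset.Ico (0 : ℤ) N, g k ^ 2 := by
      have : ∑ k ∈ s, φ₁ k ≤ ∑ k ∈ s, (2 * g (k + 1) ^ 2 + 2 * g (k + 0) ^ 2) := by
        refine Finset.sum_le_sum fun k _ => ?_
        simp only [hφ₁, add_zero]; nlinarith [sq_nonneg (g (k + 1) + g k)]
      rw [Finset.sum_add_distrib, ← Finset.mul_sum, ← Finset.mul_sum] at this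
      linarith [sh 1, sh 0]
    have q2 : ∑ k ∈ s, φ₂ k ≤ 4 * ∑ k ∈ Finset.Ico (0 : ℤ) N, g k ^ 2 := by
      have : ∑ k ∈ s, φ₂ k ≤ ∑ k ∈ s, (2 * g (k + (-1)) ^ 2 + 2 * g (k + 0) ^ 2) := by
        refine Finset.sum_le_sum fun k _ => ?_
        simp only [hφ₂, add_zero, ← sub_eq_add_neg]; nlinarith [sq_nonneg (g (k - 1) + g k)]
      rw [Finset.sum_add_distrib, ← Finset.mul_sum, ← Finset.mul_sum] at this
      linarith [sh (-1), sh 0]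
    rw [hE]
    have : 8 * ((N : ℝ) * τ) * ((∑ k ∈ Finset.Ico (0 : ℤ) N, g k ^ 2) / N) =
      8 * τ * ∑ k ∈ Finset.Ico (0 : ℤ) N, g k ^ 2 := by field_simp
    rw [this]
    nlinarith [mul_le_mul_of_nonneg_right q1 hτ, mul_le_mul_of_nonneg_right q2 hτ]

/-- `G` is orthogonal to all functions constant on the cells of mesh `1 / N`. -/
def ZeroMean (N : ℕ) (G : ℝ → ℝ) : Prop := ∀ ψ : ℤ → ℝ, ∫ x, G x * ψ ⌊(N : ℝ) * x⌋ = 0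

/-- A function with zero mean on the cells of mesh `1 / N` gains a factor `L / N` when paired with an
`L`-Lipschitz weight. -/
theorem zeroMean_lip {N N' : ℕ} (hN : 0 < N) (hN' : 0 < N') {G : ℝ → ℝ} (hG : Step N' G)
    (hz : ZeroMean N G) (ψ : ℝ → ℝ) (hψ : Measurable ψ) (C L : ℝ) (hC : ∀ x, |ψ x| ≤ C)
    (hL : ∀ x y, |ψ x - ψ y| ≤ L * |x - y|) : |∫ x, G x * ψ x| ≤ L / N * ∫ x, |G x| := by
  have hNr : (0 : ℝ) < N := by exact_mod_cast hN
  have hL0 : 0 ≤ L := by simpa using (abs_nonneg _).trans (hL 1 0)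
  have m2 : Measurable fun x : ℝ => ψ ((⌊(N : ℝ) * x⌋ : ℝ) / N) := by
    refine hψ.comp (Measurable.div_const ?_ _)
    exact (measurable_of_countable (fun k : ℤ => (k : ℝ))).comp
      (Int.measurable_floor.comp (measurable_id.const_mul _))
  have i1 := hG.integrable_mul hN' ψ hψ C hC
  have i2 := hG.integrable_mul hN' _ m2 C (fun x => hC _)
  have e := hz fun k => ψ ((k : ℝ) / N)
  have h1 : ∫ x, G x * ψ x = ∫ x, (G x * ψ x - G x * ψ ((⌊(N : ℝ) * x⌋ : ℝ) / N)) := by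
    rw [integral_sub i1 i2, e, sub_zero]
  rw [h1, ← integral_const_mul]
  refine (abs_integral_le_integral_abs).trans
    (integral_mono (i1.sub i2).abs ((hG.integrable hN').abs.const_mul _) fun x => ?_)
  simp only
  rw [← mul_sub, abs_mul, mul_comm]
  refine mul_le_mul_of_nonneg_right ((hL _ _).trans ?_) (abs_nonneg _)
  have h3 : |x - (⌊(N : ℝ) * x⌋ : ℝ) / N| ≤ 1 / N := by
    have e1 : x - (⌊(N : ℝ) * x⌋ : ℝ) / N = Int.fract ((N : ℝ) * x) / N := by
      rw [Int.fract]; field_simp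
    rw [e1, abs_of_nonneg (div_nonneg (Int.fract_nonneg _) hNr.le)]
    exact div_le_div_of_nonneg_right (Int.fract_lt_one _).le hNr.le
  calc L * |x - (⌊(N : ℝ) * x⌋ : ℝ) / N| ≤ L * (1 / N) := by gcongr
    _ = L / N := by ring

theorem integral_cs {α : Type*} [MeasurableSpace α] (μ : Measure α) (f g : α → ℝ)
    (hf : MemLp f 2 μ) (hg : MemLp g 2 μ) :
    (∫ x, f x * g x ∂μ) ^ 2 ≤ (∫ x, f x ^ 2 ∂μ) * ∫ x, g x ^ 2 ∂μ := by
  have i1 := hf.integrable_sq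
  have i2 := hg.integrable_sq
  have i3 : Integrable (fun x => f x * g x) μ := hf.integrable_mul hg
  have h : ∀ t : ℝ, 0 ≤ (∫ x, g x ^ 2 ∂μ) * (t * t) + (2 * ∫ x, f x * g x ∂μ) * t +
      ∫ x, f x ^ 2 ∂μ := by
    intro t
    have : (∫ x, g x ^ 2 ∂μ) * (t * t) + (2 * ∫ x, f x * g x ∂μ) * t + ∫ x, f x ^ 2 ∂μ =
        ∫ x, (f x + t * g x) ^ 2 ∂μ := by
      have e : ∀ x, (f x + t * g x) ^ 2 = (t * t) * g x ^ 2 + (2 * t) * (f x * g x) + f x ^ 2 :=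
        fun x => by ring
      simp only [e]
      have i4 : Integrable (fun x => (t * t) * g x ^ 2 + (2 * t) * (f x * g x)) μ :=
        (i2.const_mul _).add (i3.const_mul _)
      rw [integral_add i4 i1, integral_add (i2.const_mul _) (i3.const_mul _), integral_const_mul, integral_const_mul]
      ring
    rw [this]
    exact integral_nonneg fun _ => sq_nonneg _
  have := discrim_le_zero h
  rw [discrim] at this
  nlinarith

/-- Cauchy–Schwarz on the unit interval: `‖G‖₁ ≤ ‖G‖₂`. -/
theorem Step.l1_sq_le {N : ℕ} (hN : 0 < N) {G : ℝ → ℝ} (h : Step N G) :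
    (∫ x, |G x|) ^ 2 ≤ ∫ x, G x ^ 2 := by
  have h1 : MemLp ((Set.Ico (0 : ℝ) 1).indicator (fun _ => (1 : ℝ))) 2 volume :=
    memLp_indicator_const 2 measurableSet_Ico 1 (Or.inr (by simp))
  have h2 := integral_cs volume (fun x => |G x|) _ (h.memLp hN).abs h1
  have e1 : ∫ x, |G x| * (Set.Ico (0 : ℝ) 1).indicator (fun _ => (1 : ℝ)) x = ∫ x, |G x| := by
    congr 1; ext x
    by_cases hx : x ∈ Set.Ico (0 : ℝ) 1
    · rw [Set.indicator_of_mem hx, mul_one]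
    · rw [h.zero_off hN hx]; simp
  have e2 : ∫ x, (Set.Ico (0 : ℝ) 1).indicator (fun _ => (1 : ℝ)) x ^ 2 = 1 := by
    have : ∀ x, (Set.Ico (0 : ℝ) 1).indicator (fun _ => (1 : ℝ)) x ^ 2 =
      (Set.Ico (0 : ℝ) 1).indicator (fun _ => (1 : ℝ)) x := fun x => by
        by_cases hx : x ∈ Set.Ico (0 : ℝ) 1 <;> simp [hx]
    simp only [this]
    rw [integral_indicator measurableSet_Ico]
    simp
  rw [e1, e2, mul_one] at h2
  simpa using h2

/-! ### Correlations of a step function under affine maps -/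

/-- A Lipschitz majorant of the indicator of `[-R, R]`, tent-shaped and supported in `[-2R, 2R]`. -/
noncomputable def om (R a : ℝ) : ℝ := max 0 (2 - |a| / R)

theorem om_nonneg (R a : ℝ) : 0 ≤ om R a := le_max_left _ _
theorem om_le (R : ℝ) (hR : 0 < R) (a : ℝ) : om R a ≤ 2 :=
  max_le (by norm_num) (by have : 0 ≤ |a| / R := by positivity
                           linarith)
theorem om_abs (R : ℝ) (hR : 0 < R) (a : ℝ) : |om R a| ≤ 2 := by
  rw [abs_of_nonneg (om_nonneg R a)]; exact om_le R hR a
theorem om_meas (R : ℝ) : Measurable (om R) := by unfold om; fun_prop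
theorem om_zero (R : ℝ) (hR : 0 < R) (a : ℝ) (ha : a ∉ Set.Icc (-(2 * R)) (2 * R)) : om R a = 0 := by
  have h : 2 * R ≤ |a| := by
    by_contra! h
    exact ha (Set.mem_Icc.mpr (abs_le.mp h.le))
  refine max_eq_left ?_
  rw [sub_nonpos, le_div_iff₀ hR]; exact h
theorem om_one_le (R : ℝ) (hR : 0 < R) (a : ℝ) (ha : |a| ≤ R) : 1 ≤ om R a := by
  refine le_max_of_le_right ?_
  have : |a| / R ≤ 1 := (div_le_one hR).mpr ha
  linarith
theorem om_lip (R : ℝ) (hR : 0 < R) (a b : ℝ) : |om R a - om R b| ≤ 1 / R * |a - b| := by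
  unfold om
  have h := abs_max_sub_max_le_abs (2 - |a| / R) (2 - |b| / R) 0
  rw [max_comm _ (0 : ℝ), max_comm _ (0 : ℝ)] at h
  refine h.trans ?_
  rw [show (2 - |a| / R) - (2 - |b| / R) = (|b| - |a|) / R by ring, abs_div, abs_of_pos hR,
    div_eq_mul_inv, mul_comm, one_div]
  refine mul_le_mul_of_nonneg_left ?_ (by positivity)
  rw [abs_sub_comm a b]
  exact abs_abs_sub_abs_le _ _


theorem psi_integrable {N' : ℕ} (hN' : 0 < N') {G : ℝ → ℝ} (hG : Step N' G) (R : ℝ) (hR : 0 < R)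
    (t s u v : ℝ) (hu : u ≠ 0) :
    Integrable (fun z : ℝ × ℝ => om R z.1 * (G ((z.1 * t + z.2) / u) * G ((z.1 * s + z.2) / v)))
      (volume.prod volume) := by
  obtain ⟨B, hB0, hB⟩ := hG.bdd
  refine integrable_bdd_supp _ _ ?_ (2 * (B * B)) (fun z => ?_)
    (Set.Icc (-(2 * R)) (2 * R) ×ˢ Set.Icc (-(|u| + 2 * R * |t|)) (|u| + 2 * R * |t|)) ?_ ?_
  · refine Measurable.aestronglyMeasurable ?_
    refine ((om_meas R).comp measurable_fst).mul ((hG.meas.comp ?_).mul (hG.meas.comp ?_)) <;> fun_prop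
  · rw [abs_mul, abs_mul]
    exact mul_le_mul (om_abs R hR _) (mul_le_mul (hB _) (hB _) (abs_nonneg _) hB0) (by positivity)
      (by norm_num)
  · exact (isCompact_Icc.prod isCompact_Icc).measure_ne_top
  · intro z hz
    by_cases h1 : z.1 ∈ Set.Icc (-(2 * R)) (2 * R)
    · have h2 : (z.1 * t + z.2) / u ∉ Set.Ico (0 : ℝ) 1 := by
        intro h3
        refine hz ⟨h1, ?_⟩
        have h4 : |z.1 * t + z.2| ≤ |u| := by
          have : |(z.1 * t + z.2) / u| ≤ 1 := by
            rw [abs_of_nonneg h3.1]; exact h3.2.le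
          rwa [abs_div, div_le_one (abs_pos.mpr hu)] at this
        have h5 : |z.1 * t| ≤ 2 * R * |t| := by
          rw [abs_mul]; exact mul_le_mul_of_nonneg_right (abs_le.mpr h1) (abs_nonneg _)
        refine Set.mem_Icc.mpr (abs_le.mp ?_)
        have : z.2 = (z.1 * t + z.2) - z.1 * t := by ring
        rw [this]
        exact (abs_sub _ _).trans (by linarith)
      rw [hG.zero_off hN' h2]; ring
    · rw [om_zero R hR _ h1, zero_mul]

theorem scaled_sq {G : ℝ → ℝ} (a t u : ℝ) :
    ∫ b, G ((a * t + b) / u) ^ 2 = |u| * ∫ x, G x ^ 2 := by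
  rw [integral_add_left_eq_self (fun b => G (b / u) ^ 2) (a * t)]
  exact Measure.integral_comp_div (fun b => G b ^ 2) u

theorem scaled_sq_integrable {N' : ℕ} (hN' : 0 < N') {G : ℝ → ℝ} (hG : Step N' G)
    (a t u : ℝ) (hu : u ≠ 0) :
    Integrable fun b => G ((a * t + b) / u) ^ 2 := by
  have h1 := (hG.integrable_sq hN').comp_div hu
  exact h1.comp_add_left (a * t)

/-- Trivial bound for the inner integral of a correlation, by the inequality `2 x y ≤ x² + y²` and scaling. -/
theorem inner_bound {N' : ℕ} (hN' : 0 < N') {G : ℝ → ℝ} (hG : Step N' G)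
    (a t s u v r : ℝ) (hu : u ≠ 0) (hv : v ≠ 0) (hur : |u| ≤ r) (hvr : |v| ≤ r) :
    |∫ b, G ((a * t + b) / u) * G ((a * s + b) / v)| ≤ r * ∫ x, G x ^ 2 := by
  have i1 := scaled_sq_integrable hN' hG a t u hu
  have i2 := scaled_sq_integrable hN' hG a s v hv
  have hE : 0 ≤ ∫ x, G x ^ 2 := integral_nonneg fun _ => sq_nonneg _
  have h := norm_integral_le_of_norm_le (μ := volume)
    (f := fun b => G ((a * t + b) / u) * G ((a * s + b) / v))
    (g := fun b => (1 / 2) * (G ((a * t + b) / u) ^ 2 + G ((a * s + b) / v) ^ 2))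
    ((i1.add i2).const_mul _) (Filter.Eventually.of_forall fun b => by
      rw [Real.norm_eq_abs, abs_mul, ← sq_abs (G ((a * t + b) / u)), ← sq_abs (G ((a * s + b) / v))]
      nlinarith [sq_nonneg (|G ((a * t + b) / u)| - |G ((a * s + b) / v)|)])
  rw [integral_const_mul, integral_add i1 i2, scaled_sq, scaled_sq] at h
  refine h.trans ?_
  nlinarith

/-- Trivial bound for the correlation of `G` under two affine maps, used when `t` and `s` are close. -/
theorem psi_near {N' : ℕ} (hN' : 0 < N') {G : ℝ → ℝ} (hG : Step N' G) (R : ℝ) (hR : 0 < R)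
    (t s u v : ℝ) (hu : u ≠ 0) (hv : v ≠ 0) (hur : |u| ≤ 2 * R) (hvr : |v| ≤ 2 * R) :
    |∫ z : ℝ × ℝ, om R z.1 * (G ((z.1 * t + z.2) / u) * G ((z.1 * s + z.2) / v))
      ∂(volume.prod volume)| ≤ 16 * R ^ 2 * ∫ x, G x ^ 2 := by
  rw [integral_prod _ (psi_integrable hN' hG R hR t s u v hu)]
  have e0 : ∀ a : ℝ, ∫ b, om R a * (G ((a * t + b) / u) * G ((a * s + b) / v)) =
      om R a * ∫ b, G ((a * t + b) / u) * G ((a * s + b) / v) := fun a => integral_const_mul _ _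
  simp only [e0]
  have hE : 0 ≤ ∫ x, G x ^ 2 := integral_nonneg fun _ => sq_nonneg _
  have i1 : Integrable ((Set.Icc (-(2 * R)) (2 * R)).indicator
      fun _ => 2 * (2 * R * ∫ x, G x ^ 2)) :=
    (integrable_indicator_iff measurableSet_Icc).mpr continuous_const.integrableOn_Icc
  have h := norm_integral_le_of_norm_le (μ := volume)
    (f := fun a => om R a * ∫ b, G ((a * t + b) / u) * G ((a * s + b) / v)) i1
    (Filter.Eventually.of_forall fun a => by
      by_cases ha : a ∈ Set.Icc (-(2 * R)) (2 * R)
      · rw [Set.indicator_of_mem ha, Real.norm_eq_abs, abs_mul]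
        exact mul_le_mul (om_abs R hR a) (inner_bound hN' hG a t s u v _ hu hv hur hvr)
          (abs_nonneg _) (by norm_num)
      · rw [om_zero R hR a ha, Set.indicator_of_notMem ha]; simp)
  rw [integral_indicator measurableSet_Icc, setIntegral_const, Measure.real, Real.volume_Icc,
    ENNReal.toReal_ofReal (by linarith), smul_eq_mul] at h
  refine h.trans (le_of_eq ?_)
  ring

/-- When `t` and `s` are separated by `ρ`, a substitution turns the integral over `z.1` into the pairing
of `G` with a Lipschitz weight, and the zero mean of `G` gives a saving. -/
theorem psi_far {N' : ℕ} (hN' : 0 < N') {G : ℝ → ℝ} (hG : Step N' G) (R : ℝ) (hR : 0 < R)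
    {N : ℕ} (hN : 0 < N) (hz : ZeroMean N G) (t s u v ρ : ℝ) (hρ : 0 < ρ)
    (hts : ρ ≤ |t - s|) (hu : u ≠ 0) (hv : v ≠ 0) (hur : |u| ≤ 2 * R) (hvr : |v| ≤ 2 * R) :
    |∫ z : ℝ × ℝ, om R z.1 * (G ((z.1 * t + z.2) / u) * G ((z.1 * s + z.2) / v))
      ∂(volume.prod volume)| ≤ 8 * R ^ 2 / (ρ ^ 2 * N) * ∫ x, G x ^ 2 := by
  have hNr : (0 : ℝ) < N := by exact_mod_cast hN
  have hd : t - s ≠ 0 := by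
    intro h; rw [h, abs_zero] at hts; linarith
  have hdp : 0 < |t - s| := abs_pos.mpr hd
  rw [integral_prod _ (psi_integrable hN' hG R hR t s u v hu)]
  have e1 : ∀ a : ℝ, ∫ b, om R a * (G ((a * t + b) / u) * G ((a * s + b) / v)) =
      ∫ b, om R a * (G ((a * (t - s) + b) / u) * G ((a * 0 + b) / v)) := by
    intro a
    rw [← integral_sub_right_eq_self (fun b => om R a * (G ((a * t + b) / u) * G ((a * s + b) / v)))
      (a * s)]
    congr 1; ext b; congr 4 <;> ring
  simp only [e1]
  rw [integral_integral_swap (psi_integrable hN' hG R hR (t - s) 0 u v hu)]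
  set q := u / (t - s) with hq
  have hq0 : q ≠ 0 := div_ne_zero hu hd
  have hqb : |q| ≤ 2 * R / ρ := by
    rw [hq, abs_div]
    exact div_le_div₀ (by linarith) hur hρ hts
  have e2 : ∀ b : ℝ, |∫ a, om R a * (G ((a * (t - s) + b) / u) * G ((a * 0 + b) / v))| ≤
      (4 * R / (ρ ^ 2 * N) * ∫ x, |G x|) * |G (b / v)| := by
    intro b
    have f1 : ∫ a, om R a * (G ((a * (t - s) + b) / u) * G ((a * 0 + b) / v)) =
        G (b / v) * ∫ a, om R a * G ((a * (t - s) + b) / u) := by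
      rw [← integral_const_mul]
      congr 1; ext a; rw [mul_zero, zero_add]; ring
    have f2 : ∫ a, om R a * G ((a * (t - s) + b) / u) =
        |q| * ∫ x, G x * om R (x * q - b / (t - s)) := by
      have g1 := Measure.integral_comp_mul_right
        (fun a => om R (a - b / (t - s)) * G (((a - b / (t - s)) * (t - s) + b) / u)) q
      rw [integral_sub_right_eq_self (fun a => om R a * G ((a * (t - s) + b) / u))] at g1
      have g2 : ∀ x : ℝ, ((x * q - b / (t - s)) * (t - s) + b) / u = x := fun x => by
        rw [hq]; field_simp; ring
      simp only [g2] at g1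
      rw [smul_eq_mul, abs_inv] at g1
      have g3 : |q| ≠ 0 := abs_ne_zero.mpr hq0
      simp only [mul_comm (G _)]
      rw [g1, mul_inv_cancel_left₀ g3]
    have f3 := zeroMean_lip hN hN' hG hz (fun x => om R (x * q - b / (t - s)))
      ((om_meas R).comp (by fun_prop)) 2 (1 / R * |q|) (fun x => om_abs R hR _) (fun x y => by
        refine (om_lip R hR _ _).trans (le_of_eq ?_)
        rw [mul_assoc, ← abs_mul]; congr 2; ring)
    rw [f1, f2, abs_mul, abs_mul, abs_abs, mul_comm]
    refine mul_le_mul_of_nonneg_right ?_ (abs_nonneg _)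
    have hL1 : 0 ≤ ∫ x, |G x| := integral_nonneg fun _ => abs_nonneg _
    calc |q| * |∫ x, G x * om R (x * q - b / (t - s))| ≤
        |q| * (1 / R * |q| / N * ∫ x, |G x|) := by gcongr
      _ = |q| ^ 2 / (R * N) * ∫ x, |G x| := by field_simp
      _ ≤ (2 * R / ρ) ^ 2 / (R * N) * ∫ x, |G x| := by gcongr
      _ = _ := by field_simp; ring
  have i1 : Integrable fun b => |G (b / v)| := ((hG.integrable hN').comp_div hv).abs
  have h := norm_integral_le_of_norm_le (μ := volume)
    (f := fun b => ∫ a, om R a * (G ((a * (t - s) + b) / u) * G ((a * 0 + b) / v)))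
    (i1.const_mul (4 * R / (ρ ^ 2 * N) * ∫ x, |G x|))
    (Filter.Eventually.of_forall e2)
  rw [integral_const_mul, Measure.integral_comp_div (fun b => |G b|) v, smul_eq_mul] at h
  refine h.trans ?_
  have hl1 := hG.l1_sq_le hN'
  have hL1 : 0 ≤ ∫ x, |G x| := integral_nonneg fun _ => abs_nonneg _
  calc 4 * R / (ρ ^ 2 * N) * (∫ x, |G x|) * (|v| * ∫ x, |G x|) ≤
      4 * R / (ρ ^ 2 * N) * (∫ x, |G x|) * (2 * R * ∫ x, |G x|) := by gcongr
    _ = 8 * R ^ 2 / (ρ ^ 2 * N) * (∫ x, |G x|) ^ 2 := by ring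
    _ ≤ _ := by gcongr

/-! ### Mean square of matrix coefficients -/

/-- The indicator of `(-ρ, ρ)`. -/
noncomputable def nr (ρ : ℝ) : ℝ → ℝ := (Set.Ioo (-ρ) ρ).indicator fun _ => 1

theorem nr_meas (ρ : ℝ) : Measurable (nr ρ) := measurable_const.indicator measurableSet_Ioo
theorem nr_nonneg (ρ x : ℝ) : 0 ≤ nr ρ x := Set.indicator_nonneg (fun _ _ => zero_le_one) _
theorem nr_le (ρ x : ℝ) : nr ρ x ≤ 1 := Set.indicator_le_self' (fun _ _ => zero_le_one) x |>.trans le_rfl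
theorem nr_integrable (ρ : ℝ) : Integrable (nr ρ) :=
  (integrable_indicator_iff measurableSet_Ioo).mpr
    (continuous_const.integrableOn_Icc.mono_set Set.Ioo_subset_Icc_self)
theorem nr_integral (ρ : ℝ) (hρ : 0 < ρ) : ∫ x, nr ρ x = 2 * ρ := by
  unfold nr
  rw [integral_indicator measurableSet_Ioo, setIntegral_const, Measure.real, Real.volume_Ioo,
    ENNReal.toReal_ofReal (by linarith), smul_eq_mul]
  ring

/-- The contribution of the neighbourhood of the diagonal, by `2 |x y| ≤ x² + y²`. -/
theorem near_int {N' : ℕ} (hN' : 0 < N') {G : ℝ → ℝ} (hG : Step N' G) (ρ : ℝ) (hρ : 0 < ρ) :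
    Integrable (fun p : ℝ × ℝ => |G p.1| * |G p.2| * nr ρ (p.1 - p.2)) (volume.prod volume) ∧
    ∫ p : ℝ × ℝ, |G p.1| * |G p.2| * nr ρ (p.1 - p.2) ∂(volume.prod volume) ≤
      2 * ρ * ∫ x, G x ^ 2 := by
  obtain ⟨B, hB0, hB⟩ := hG.bdd
  have hz : ∀ x, x ∉ Set.Icc (0 : ℝ) 1 → G x = 0 := fun x hx =>
    hG.zero_off hN' fun h => hx (Set.Ico_subset_Icc_self h)
  have hm : Measurable G := hG.meas
  have hnm := nr_meas ρ
  have J1 : Integrable (fun p : ℝ × ℝ => G p.1 ^ 2 * nr ρ (p.1 - p.2)) (volume.prod volume) := by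
    have h0 : (fun p : ℝ × ℝ => G p.1 ^ 2 * nr ρ (p.1 - p.2)) =
        (fun p : ℝ × ℝ => G p.1 ^ 2 * nr ρ p.2) ∘ fun p => (p.1, p.1 - p.2) := rfl
    refine integrable_bdd_supp _ _ (Measurable.aestronglyMeasurable (by fun_prop)) (B ^ 2 * 1)
      (fun p => ?_) (Set.Icc 0 1 ×ˢ Set.Icc (-ρ) (1 + ρ))
      (isCompact_Icc.prod isCompact_Icc).measure_ne_top (fun p hp => ?_)
    · rw [abs_mul, abs_of_nonneg (sq_nonneg (G p.1)), abs_of_nonneg (nr_nonneg _ _), ← sq_abs]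
      exact mul_le_mul (pow_le_pow_left₀ (abs_nonneg _) (hB _) 2) (nr_le _ _) (nr_nonneg _ _)
        (by positivity)
    · by_cases h1 : p.1 ∈ Set.Icc (0 : ℝ) 1
      · have : nr ρ (p.1 - p.2) = 0 := by
          refine Set.indicator_of_notMem (fun h => hp ⟨h1, ?_⟩) _
          constructor <;> linarith [h.1, h.2, h1.1, h1.2]
        rw [this, mul_zero]
      · rw [hz _ h1]; ring
  have V1 : ∫ p : ℝ × ℝ, G p.1 ^ 2 * nr ρ (p.1 - p.2) ∂(volume.prod volume) =
      2 * ρ * ∫ x, G x ^ 2 := by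
    rw [integral_prod _ J1]
    have : ∀ x : ℝ, ∫ y, G x ^ 2 * nr ρ (x - y) = 2 * ρ * G x ^ 2 := fun x => by
      rw [integral_const_mul, integral_sub_left_eq_self (nr ρ) volume x, nr_integral ρ hρ]; ring
    simp only [this]
    exact integral_const_mul _ _
  have J2 : Integrable (fun p : ℝ × ℝ => G p.2 ^ 2 * nr ρ (p.1 - p.2)) (volume.prod volume) := by
    refine J1.swap.congr (Filter.Eventually.of_forall fun p => ?_)
    have : nr ρ (p.2 - p.1) = nr ρ (p.1 - p.2) := by
      unfold nr Set.indicator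
      congr 1
      rw [eq_iff_iff, Set.mem_Ioo, Set.mem_Ioo]
      constructor <;> intro h <;> constructor <;> linarith [h.1, h.2]
    show G p.2 ^ 2 * nr ρ (p.2 - p.1) = _
    rw [this]
  have V2 : ∫ p : ℝ × ℝ, G p.2 ^ 2 * nr ρ (p.1 - p.2) ∂(volume.prod volume) =
      2 * ρ * ∫ x, G x ^ 2 := by
    rw [integral_prod_symm _ J2]
    have : ∀ y : ℝ, ∫ x, G y ^ 2 * nr ρ (x - y) = 2 * ρ * G y ^ 2 := fun x => by
      rw [integral_const_mul, integral_sub_right_eq_self (nr ρ) x, nr_integral ρ hρ]; ring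
    simp only [this]
    exact integral_const_mul _ _
  have hle : ∀ p : ℝ × ℝ, |G p.1| * |G p.2| * nr ρ (p.1 - p.2) ≤
      1 / 2 * (G p.1 ^ 2 * nr ρ (p.1 - p.2) + G p.2 ^ 2 * nr ρ (p.1 - p.2)) := fun p => by
    rw [← add_mul, ← mul_assoc]
    refine mul_le_mul_of_nonneg_right ?_ (nr_nonneg _ _)
    nlinarith [sq_nonneg (|G p.1| - |G p.2|), sq_abs (G p.1), sq_abs (G p.2)]
  have J3 := (J1.add J2).const_mul (1 / 2)
  have J : Integrable (fun p : ℝ × ℝ => |G p.1| * |G p.2| * nr ρ (p.1 - p.2))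
      (volume.prod volume) := by
    refine J3.mono' (Measurable.aestronglyMeasurable (by fun_prop))
      (Filter.Eventually.of_forall fun p => ?_)
    rw [Real.norm_eq_abs, abs_of_nonneg (mul_nonneg (by positivity) (nr_nonneg _ _))]
    exact hle p
  refine ⟨J, (integral_mono J J3 hle).trans (le_of_eq ?_)⟩
  show ∫ p : ℝ × ℝ, 1 / 2 * (G p.1 ^ 2 * nr ρ (p.1 - p.2) + G p.2 ^ 2 * nr ρ (p.1 - p.2))
    ∂(volume.prod volume) = _
  rw [integral_const_mul, integral_add J1 J2, V1, V2]
  ring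

/-- The weight `1/|cx+d|`, cut off where the denominator is small. -/
noncomputable def lam (R c d x : ℝ) : ℝ := if 1 / (4 * R) ≤ |c * x + d| then |c * x + d|⁻¹ else 0

theorem lam_nonneg (R c d x : ℝ) : 0 ≤ lam R c d x := by
  unfold lam; split_ifs <;> positivity
theorem lam_le (R : ℝ) (hR : 0 < R) (c d x : ℝ) : lam R c d x ≤ 4 * R := by
  unfold lam; split_ifs with h
  · rw [show 4 * R = (1 / (4 * R))⁻¹ by field_simp]
    exact inv_anti₀ (by positivity) h
  · positivity
theorem lam_ne {R : ℝ} (hR : 0 < R) {c d x : ℝ} (h : lam R c d x ≠ 0) : c * x + d ≠ 0 := by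
  intro h0
  apply h
  unfold lam
  rw [h0, abs_zero, if_neg]
  rw [not_le]; positivity
theorem lam_meas (R : ℝ) : Measurable fun q : (ℝ × ℝ) × ℝ => lam R q.1.1 q.1.2 q.2 := by
  unfold lam
  refine Measurable.ite (measurableSet_le measurable_const (by fun_prop)) (by fun_prop) (by fun_prop)

/-- The integrand of the truncated matrix coefficient. -/
noncomputable def mtrI (R : ℝ) (G : ℝ → ℝ) (w : (ℝ × ℝ) × (ℝ × ℝ)) (x : ℝ) : ℝ :=
  G x * (lam R w.1.1 w.1.2 x * G ((w.2.1 * x + w.2.2) / (w.1.1 * x + w.1.2)))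

/-- The truncated matrix coefficient of the matrix with bottom row `w.1` and top row `w.2`. -/
noncomputable def Mtr (R : ℝ) (G : ℝ → ℝ) (w : (ℝ × ℝ) × (ℝ × ℝ)) : ℝ := ∫ x, mtrI R G w x

theorem mtrI_meas (R : ℝ) {G : ℝ → ℝ} (hG : Measurable G) :
    Measurable fun q : ((ℝ × ℝ) × (ℝ × ℝ)) × ℝ => mtrI R G q.1 q.2 := by
  unfold mtrI
  refine (hG.comp measurable_snd).mul (((lam_meas R).comp (f := fun q : ((ℝ × ℝ) × (ℝ × ℝ)) × ℝ => (q.1.1, q.2))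
    (by fun_prop)).mul (hG.comp (by fun_prop)))

theorem Mtr_meas (R : ℝ) {G : ℝ → ℝ} (hG : Measurable G) : Measurable (Mtr R G) :=
  ((mtrI_meas R hG).stronglyMeasurable.integral_prod_right').measurable

theorem mtrI_supp {N' : ℕ} (hN' : 0 < N') {G : ℝ → ℝ} (hG : Step N' G) (R : ℝ)
    (hR : 0 < R) (w : (ℝ × ℝ) × (ℝ × ℝ)) (x : ℝ) (hx : mtrI R G w x ≠ 0) :
    x ∈ Set.Icc (0 : ℝ) 1 ∧ w.1.1 * x + w.1.2 ≠ 0 ∧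
      (w.2.1 * x + w.2.2) / (w.1.1 * x + w.1.2) ∈ Set.Ico (0 : ℝ) 1 := by
  unfold mtrI at hx
  refine ⟨?_, lam_ne hR (R := R) ?_, ?_⟩
  · by_contra h
    exact hx (by rw [hG.zero_off hN' fun h' => h (Set.Ico_subset_Icc_self h'), zero_mul])
  · intro h; exact hx (by rw [h]; ring)
  · by_contra h; exact hx (by rw [hG.zero_off hN' h]; ring)

/-- Mean square of the truncated matrix coefficient over the top row, for a fixed bottom row `r`. The
square is an integral over pairs `(x, x')`; the correlation over the top row is bounded by `psi_near`
when `|x - x'| < ρ` and by `psi_far` otherwise. -/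
theorem mix_fixed {N' : ℕ} (hN' : 0 < N') {G : ℝ → ℝ} (hG : Step N' G) (R : ℝ)
    (hR : 0 < R) {N : ℕ} (hN : 0 < N) (hz : ZeroMean N G) (ρ : ℝ) (hρ : 0 < ρ) (r : ℝ × ℝ)
    (hc : |r.1| ≤ R) (hd : |r.2| ≤ R) :
    Integrable (fun z : ℝ × ℝ => om R z.1 * Mtr R G (r, z) ^ 2) ∧
    ∫ z : ℝ × ℝ, om R z.1 * Mtr R G (r, z) ^ 2 ≤
      R ^ 4 * (512 * ρ + 128 / (ρ ^ 2 * N)) * (∫ x, G x ^ 2) ^ 2 := by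
  obtain ⟨B, hB0, hB⟩ := hG.bdd
  have hNr : (0 : ℝ) < N := by exact_mod_cast hN
  have hE : 0 ≤ ∫ x, G x ^ 2 := integral_nonneg fun _ => sq_nonneg _
  have hl : ∀ x ∈ Set.Icc (0 : ℝ) 1, |r.1 * x + r.2| ≤ 2 * R := fun x hx => by
    refine (abs_add_le _ _).trans ?_
    rw [abs_mul, abs_of_nonneg hx.1]
    nlinarith [abs_nonneg r.1, hx.2]
  set K : ℝ × ℝ → ℝ × ℝ → ℝ := fun z p => om R z.1 * (mtrI R G (r, z) p.1 * mtrI R G (r, z) p.2)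
    with hK
  have hIb : ∀ z x, |mtrI R G (r, z) x| ≤ B * (4 * R * B) := fun z x => by
    unfold mtrI
    rw [abs_mul, abs_mul, abs_of_nonneg (lam_nonneg _ _ _ _)]
    exact mul_le_mul (hB _) (mul_le_mul (lam_le R hR _ _ _) (hB _) (abs_nonneg _) (by positivity))
      (mul_nonneg (lam_nonneg _ _ _ _) (abs_nonneg _)) hB0
  have hmI := mtrI_meas R hG.meas
  have hKi : Integrable (Function.uncurry K)
      ((volume : Measure (ℝ × ℝ)).prod (volume : Measure (ℝ × ℝ))) := by
    refine integrable_bdd_supp _ _ (Measurable.aestronglyMeasurable ?_)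
      (2 * (B * (4 * R * B) * (B * (4 * R * B)))) (fun q => ?_)
      ((Set.Icc (-(2 * R)) (2 * R) ×ˢ Set.Icc (-(4 * R)) (4 * R)) ×ˢ
        (Set.Icc 0 1 ×ˢ Set.Icc 0 1)) ?_ (fun q hq => ?_)
    · refine ((om_meas R).comp (by fun_prop)).mul (Measurable.mul ?_ ?_)
      · exact hmI.comp (f := fun q : (ℝ × ℝ) × (ℝ × ℝ) => ((r, q.1), q.2.1)) (by fun_prop)
      · exact hmI.comp (f := fun q : (ℝ × ℝ) × (ℝ × ℝ) => ((r, q.1), q.2.2)) (by fun_prop)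
    · show |om R q.1.1 * (mtrI R G (r, q.1) q.2.1 * mtrI R G (r, q.1) q.2.2)| ≤ _
      rw [abs_mul, abs_mul]
      exact mul_le_mul (om_abs R hR _) (mul_le_mul (hIb _ _) (hIb _ _) (abs_nonneg _)
        (by positivity)) (by positivity) (by norm_num)
    · exact ((isCompact_Icc.prod isCompact_Icc).prod
        (isCompact_Icc.prod isCompact_Icc)).measure_ne_top
    · show om R q.1.1 * (mtrI R G (r, q.1) q.2.1 * mtrI R G (r, q.1) q.2.2) = 0
      by_contra hne
      have h1 := left_ne_zero_of_mul hne
      have h2 := mtrI_supp hN' hG R hR _ _ (left_ne_zero_of_mul (right_ne_zero_of_mul hne))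
      have h3 := mtrI_supp hN' hG R hR _ _ (right_ne_zero_of_mul (right_ne_zero_of_mul hne))
      have h4 : q.1.1 ∈ Set.Icc (-(2 * R)) (2 * R) := by
        by_contra h; exact h1 (om_zero R hR _ h)
      refine hq ⟨⟨h4, ?_⟩, h2.1, h3.1⟩
      obtain ⟨hx, hu, hy⟩ := h2
      have h5 : |q.1.1 * q.2.1 + q.1.2| ≤ 2 * R := by
        have : |(q.1.1 * q.2.1 + q.1.2) / (r.1 * q.2.1 + r.2)| ≤ 1 := by
          rw [abs_of_nonneg hy.1]; exact hy.2.le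
        rw [abs_div, div_le_one (abs_pos.mpr hu)] at this
        exact this.trans (hl _ hx)
      have h6 : |q.1.1 * q.2.1| ≤ 2 * R := by
        rw [abs_mul, abs_of_nonneg hx.1]
        have := abs_le.mpr h4
        nlinarith [abs_nonneg q.1.1, hx.2, hx.1]
      have h7 := abs_le.mp h5
      have h8 := abs_le.mp h6
      constructor <;> linarith
  have hin : ∀ z, ∫ p, K z p = om R z.1 * Mtr R G (r, z) ^ 2 := fun z => by
    show ∫ p : ℝ × ℝ, om R z.1 * (mtrI R G (r, z) p.1 * mtrI R G (r, z) p.2) = _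
    rw [integral_const_mul]
    congr 1
    rw [pow_two]
    exact integral_prod_mul (μ := volume) (ν := volume) (mtrI R G (r, z)) (mtrI R G (r, z))
  have hI : Integrable (fun z : ℝ × ℝ => om R z.1 * Mtr R G (r, z) ^ 2) := by
    have := hKi.integral_prod_left
    exact this.congr (Filter.Eventually.of_forall hin)
  refine ⟨hI, ?_⟩
  rw [← integral_congr_ae (Filter.Eventually.of_forall hin), integral_integral_swap hKi]
  set E := ∫ x, G x ^ 2 with hEdef
  have hps : ∀ p : ℝ × ℝ, |∫ z, K z p| ≤ 16 * R ^ 2 * (16 * R ^ 2 * E) *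
      (|G p.1| * |G p.2| * nr ρ (p.1 - p.2)) +
      16 * R ^ 2 * (8 * R ^ 2 / (ρ ^ 2 * N) * E) * (|G p.1| * |G p.2|) := fun p => by
    set u := r.1 * p.1 + r.2 with hu
    set v := r.1 * p.2 + r.2 with hv
    set C := G p.1 * lam R r.1 r.2 p.1 * (G p.2 * lam R r.1 r.2 p.2) with hC
    have e1 : ∫ z, K z p = C * ∫ z : ℝ × ℝ, om R z.1 *
        (G ((z.1 * p.1 + z.2) / u) * G ((z.1 * p.2 + z.2) / v)) ∂(volume.prod volume) := by
      rw [← integral_const_mul]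
      refine integral_congr_ae (Filter.Eventually.of_forall fun z => ?_)
      simp only [hK, mtrI, hC, hu, hv]
      ring
    have hrhs1 : 0 ≤ 16 * R ^ 2 * (16 * R ^ 2 * E) * (|G p.1| * |G p.2| * nr ρ (p.1 - p.2)) :=
      mul_nonneg (by positivity) (mul_nonneg (by positivity) (nr_nonneg _ _))
    have hrhs2 : 0 ≤ 16 * R ^ 2 * (8 * R ^ 2 / (ρ ^ 2 * N) * E) * (|G p.1| * |G p.2|) := by
      positivity
    rw [e1, abs_mul]
    by_cases hC0 : C = 0
    · rw [hC0, abs_zero, zero_mul]; linarith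
    have hCb : |C| ≤ 16 * R ^ 2 * (|G p.1| * |G p.2|) := by
      rw [hC, abs_mul, abs_mul, abs_mul, abs_of_nonneg (lam_nonneg _ _ _ _),
        abs_of_nonneg (lam_nonneg _ _ _ _)]
      calc |G p.1| * lam R r.1 r.2 p.1 * (|G p.2| * lam R r.1 r.2 p.2) ≤
          |G p.1| * (4 * R) * (|G p.2| * (4 * R)) := by
            have := lam_le R hR r.1 r.2 p.1
            have := lam_le R hR r.1 r.2 p.2
            have := lam_nonneg R r.1 r.2 p.2
            gcongr
        _ = _ := by ring
    have a1 := left_ne_zero_of_mul hC0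
    have a2 := right_ne_zero_of_mul hC0
    have hg : ∀ x, G x ≠ 0 → x ∈ Set.Icc (0 : ℝ) 1 := fun x hx => by
      by_contra h
      exact hx (hG.zero_off hN' fun h' => h (Set.Ico_subset_Icc_self h'))
    have hu0 : u ≠ 0 := lam_ne hR (right_ne_zero_of_mul a1)
    have hv0 : v ≠ 0 := lam_ne hR (right_ne_zero_of_mul a2)
    have hur := hl _ (hg _ (left_ne_zero_of_mul a1))
    have hvr := hl _ (hg _ (left_ne_zero_of_mul a2))
    by_cases hnr : |p.1 - p.2| < ρ
    · have e2 : nr ρ (p.1 - p.2) = 1 :=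
        Set.indicator_of_mem (s := Set.Ioo (-ρ) ρ) (Set.mem_Ioo.mpr (abs_lt.mp hnr)) _
      have := psi_near hN' hG R hR p.1 p.2 u v hu0 hv0 hur hvr
      refine (mul_le_mul hCb this (abs_nonneg _) (by positivity)).trans ?_
      rw [e2]
      refine le_trans (le_of_eq ?_) (le_add_of_nonneg_right hrhs2)
      ring
    · have := psi_far hN' hG R hR hN hz p.1 p.2 u v ρ hρ (not_lt.mp hnr) hu0 hv0 hur hvr
      refine (mul_le_mul hCb this (abs_nonneg _) (by positivity)).trans ?_
      refine le_trans (le_of_eq ?_) (le_add_of_nonneg_left hrhs1)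
      ring
  obtain ⟨j1, v1⟩ := near_int hN' hG ρ hρ
  have hGa := (hG.integrable hN').abs
  have j2 : Integrable (fun p : ℝ × ℝ => |G p.1| * |G p.2|) (volume.prod volume) :=
    hGa.mul_prod hGa
  have v2 : ∫ p : ℝ × ℝ, |G p.1| * |G p.2| ∂(volume.prod volume) ≤ E := by
    rw [integral_prod_mul (μ := volume) (ν := volume) (fun x => |G x|) (fun x => |G x|), ← pow_two]
    exact hG.l1_sq_le hN'
  have h := norm_integral_le_of_norm_le (μ := (volume : Measure (ℝ × ℝ)))
    (f := fun p => ∫ z, K z p) ((j1.const_mul (16 * R ^ 2 * (16 * R ^ 2 * E))).add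
      (j2.const_mul (16 * R ^ 2 * (8 * R ^ 2 / (ρ ^ 2 * N) * E))))
    (Filter.Eventually.of_forall hps)
  refine (le_abs_self _).trans (h.trans ?_)
  have e5 : ∫ p : ℝ × ℝ, 16 * R ^ 2 * (16 * R ^ 2 * E) *
      (|G p.1| * |G p.2| * nr ρ (p.1 - p.2)) +
      16 * R ^ 2 * (8 * R ^ 2 / (ρ ^ 2 * N) * E) * (|G p.1| * |G p.2|) ∂(volume.prod volume) =
      16 * R ^ 2 * (16 * R ^ 2 * E) * (∫ p : ℝ × ℝ, |G p.1| * |G p.2| * nr ρ (p.1 - p.2)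
        ∂(volume.prod volume)) + 16 * R ^ 2 * (8 * R ^ 2 / (ρ ^ 2 * N) * E) *
        ∫ p : ℝ × ℝ, |G p.1| * |G p.2| ∂(volume.prod volume) := by
    rw [integral_add (j1.const_mul _) (j2.const_mul _), integral_const_mul, integral_const_mul]
  refine (le_of_eq e5).trans ?_
  calc _ ≤ 16 * R ^ 2 * (16 * R ^ 2 * E) * (2 * ρ * E) +
        16 * R ^ 2 * (8 * R ^ 2 / (ρ ^ 2 * N) * E) * E := by gcongr
    _ = _ := by ring

/-- Pairs of rows with all entries bounded by `R`. -/
def sq2 (R : ℝ) : Set (ℝ × ℝ) := Set.Icc (-R) R ×ˢ Set.Icc (-R) R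

theorem sq2_meas (R : ℝ) : MeasurableSet (sq2 R) := measurableSet_Icc.prod measurableSet_Icc
theorem sq2_compact (R : ℝ) : IsCompact (sq2 R) := isCompact_Icc.prod isCompact_Icc
theorem sq2_vol (R : ℝ) (hR : 0 < R) : (volume : Measure (ℝ × ℝ)).real (sq2 R) = 4 * R ^ 2 := by
  show ((volume : Measure ℝ).prod volume).real (Set.Icc (-R) R ×ˢ Set.Icc (-R) R) = _
  rw [measureReal_prod_prod, Measure.real, Real.volume_Icc, ENNReal.toReal_ofReal (by linarith)]
  ring

theorem Mtr_bdd {N' : ℕ} (hN' : 0 < N') {G : ℝ → ℝ} (hG : Step N' G) (R : ℝ) (hR : 0 < R) :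
    ∃ C, 0 ≤ C ∧ ∀ w, |Mtr R G w| ≤ C := by
  obtain ⟨B, hB0, hB⟩ := hG.bdd
  refine ⟨B * (4 * R * B), by positivity, fun w => ?_⟩
  have i1 : Integrable ((Set.Icc (0 : ℝ) 1).indicator fun _ => B * (4 * R * B)) :=
    (integrable_indicator_iff measurableSet_Icc).mpr continuous_const.integrableOn_Icc
  have h := norm_integral_le_of_norm_le (μ := volume) (f := mtrI R G w) i1
    (Filter.Eventually.of_forall fun x => by
      by_cases hx : x ∈ Set.Icc (0 : ℝ) 1
      · rw [Set.indicator_of_mem hx, Real.norm_eq_abs]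
        unfold mtrI
        rw [abs_mul, abs_mul, abs_of_nonneg (lam_nonneg _ _ _ _)]
        exact mul_le_mul (hB _) (mul_le_mul (lam_le R hR _ _ _) (hB _) (abs_nonneg _)
          (by positivity)) (mul_nonneg (lam_nonneg _ _ _ _) (abs_nonneg _)) hB0
      · rw [Set.indicator_of_notMem hx]
        by_contra h
        refine hx (mtrI_supp hN' hG R hR w x ?_).1
        intro h0; rw [h0, norm_zero] at h; exact h le_rfl)
  rw [integral_indicator measurableSet_Icc, setIntegral_const, Measure.real, Real.volume_Icc,
    ENNReal.toReal_ofReal (by linarith), smul_eq_mul] at h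
  refine h.trans (le_of_eq ?_)
  ring

/-- On average over matrices with entries bounded by `R`, the matrix coefficients of a step function
with zero mean on every coarse cell are small. -/
theorem mix_box {N' : ℕ} (hN' : 0 < N') {G : ℝ → ℝ} (hG : Step N' G) (R : ℝ)
    (hR : 0 < R) {N : ℕ} (hN : 0 < N) (hz : ZeroMean N G) (ρ : ℝ) (hρ : 0 < ρ) :
    MemLp ((sq2 R ×ˢ sq2 R).indicator (Mtr R G)) 2 volume ∧
    ∫ w, ((sq2 R ×ˢ sq2 R).indicator (Mtr R G) w) ^ 2 ≤
      4 * R ^ 2 * (R ^ 4 * (512 * ρ + 128 / (ρ ^ 2 * N)) * (∫ x, G x ^ 2) ^ 2) := by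
  obtain ⟨C, hC0, hC⟩ := Mtr_bdd hN' hG R hR
  set F := (sq2 R ×ˢ sq2 R).indicator (Mtr R G) with hF
  have hFm : Measurable F := (Mtr_meas R hG.meas).indicator ((sq2_meas R).prod (sq2_meas R))
  have hFb : ∀ w, |F w| ≤ C := fun w => by
    by_cases h : w ∈ sq2 R ×ˢ sq2 R
    · rw [hF, Set.indicator_of_mem h]; exact hC w
    · rw [hF, Set.indicator_of_notMem h, abs_zero]; exact hC0
  have hi : Integrable (fun w => F w ^ 2)
      ((volume : Measure (ℝ × ℝ)).prod (volume : Measure (ℝ × ℝ))) := by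
    refine integrable_bdd_supp _ _ (hFm.pow_const 2).aestronglyMeasurable (C ^ 2) (fun w => ?_)
      (sq2 R ×ˢ sq2 R) ((sq2_compact R).prod (sq2_compact R)).measure_ne_top (fun w hw => ?_)
    · rw [abs_pow]; exact pow_le_pow_left₀ (abs_nonneg _) (hFb w) 2
    · rw [hF, Set.indicator_of_notMem hw]; ring
  refine ⟨(memLp_two_iff_integrable_sq hFm.aestronglyMeasurable).mpr hi, ?_⟩
  set V := R ^ 4 * (512 * ρ + 128 / (ρ ^ 2 * N)) * (∫ x, G x ^ 2) ^ 2 with hV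
  have hNr : (0 : ℝ) < N := by exact_mod_cast hN
  have hV0 : 0 ≤ V := by positivity
  rw [Measure.volume_eq_prod, integral_prod _ hi]
  have i1 : Integrable ((sq2 R).indicator fun _ => V) (volume : Measure (ℝ × ℝ)) :=
    (integrable_indicator_iff (sq2_meas R)).mpr (integrableOn_const (sq2_compact R).measure_ne_top)
  have h := norm_integral_le_of_norm_le (μ := (volume : Measure (ℝ × ℝ)))
    (f := fun r => ∫ z, F (r, z) ^ 2) i1
    (Filter.Eventually.of_forall fun r => by
      show |∫ z, F (r, z) ^ 2| ≤ _
      rw [abs_of_nonneg (integral_nonneg fun _ => sq_nonneg _)]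
      by_cases hr : r ∈ sq2 R
      · rw [Set.indicator_of_mem hr]
        obtain ⟨j, hj⟩ := mix_fixed hN' hG R hR hN hz ρ hρ r (abs_le.mpr hr.1) (abs_le.mpr hr.2)
        refine (integral_mono_of_nonneg (Filter.Eventually.of_forall fun _ => sq_nonneg _) j
          (Filter.Eventually.of_forall fun z => ?_)).trans hj
        show F (r, z) ^ 2 ≤ _
        by_cases hw : (r, z) ∈ sq2 R ×ˢ sq2 R
        · rw [hF, Set.indicator_of_mem hw]
          have := om_one_le R hR z.1 (abs_le.mpr hw.2.1)
          nlinarith [sq_nonneg (Mtr R G (r, z))]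
        · rw [hF, Set.indicator_of_notMem hw]
          have := mul_nonneg (om_nonneg R z.1) (sq_nonneg (Mtr R G (r, z)))
          simpa using this
      · rw [Set.indicator_of_notMem hr]
        refine le_of_eq (integral_eq_zero_of_ae (Filter.Eventually.of_forall fun z => ?_))
        show F (r, z) ^ 2 = 0
        rw [hF, Set.indicator_of_notMem fun h' => hr h'.1]; ring)
  rw [integral_indicator (sq2_meas R), setIntegral_const, sq2_vol R hR, smul_eq_mul] at h
  exact (le_abs_self _).trans h

/-! ### Matrix coefficients near the identity -/

/-- The vector of `HV` attached to a step function. -/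
noncomputable def Step.hv {N : ℕ} (hN : 0 < N) {G : ℝ → ℝ} (hG : Step N G) : HV :=
  lift G hG.meas (hG.memLp hN)

/-- The matrix with bottom row `w.1` and top row `w.2`. -/
def mat (w : (ℝ × ℝ) × (ℝ × ℝ)) : M2R := !![w.2.1, w.2.2; w.1.1, w.1.2]

theorem det_mat (w : (ℝ × ℝ) × (ℝ × ℝ)) : (mat w).det = w.2.1 * w.1.2 - w.2.2 * w.1.1 := by
  simp [mat, Matrix.det_fin_two]

/-- The cut-off in `lam` does not affect the matrix coefficients when the entries are at most `R` and
the determinant is at least `1 / 2`: then `|cx + d|` is small only where the top row sends `x` out of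
`[0, 1)`. -/
theorem ip_mat {N' : ℕ} (hN' : 0 < N') {G : ℝ → ℝ} (hG : Step N' G) (R : ℝ) (hR : 0 < R)
    (w : (ℝ × ℝ) × (ℝ × ℝ)) (hw : w ∈ sq2 R ×ˢ sq2 R) (hdet : 1 / 2 ≤ (mat w).det) :
    ip (rho (mat w) (hG.hv hN')) (hG.hv hN') = √|(mat w).det| * Mtr R G w := by
  rw [ip_def, Mtr, ← integral_const_mul]
  congr 1; ext x
  rw [rho_apply, Step.hv, lift_apply, lift_apply]
  simp only [mtrI]
  have e1 : mat w 0 0 = w.2.1 := rfl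
  have e2 : mat w 0 1 = w.2.2 := rfl
  have e3 : mat w 1 0 = w.1.1 := rfl
  have e4 : mat w 1 1 = w.1.2 := rfl
  simp only [e1, e2, e3, e4, mul_one, div_one, abs_one, inv_one, one_mul]
  rw [mul_assoc]
  congr 1
  rw [mul_comm (G x)]
  congr 1
  by_cases hy : (w.2.1 * x + w.2.2) / (w.1.1 * x + w.1.2) ∈ Set.Ico (0 : ℝ) 1
  · congr 1
    unfold lam
    split_ifs with h
    · rfl
    by_cases h0 : w.1.1 * x + w.1.2 = 0
    · rw [h0]; simp
    exfalso
    apply h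
    have h1 : |w.2.1 * x + w.2.2| ≤ |w.1.1 * x + w.1.2| := by
      have : |(w.2.1 * x + w.2.2) / (w.1.1 * x + w.1.2)| ≤ 1 := by
        rw [abs_of_nonneg hy.1]; exact hy.2.le
      rwa [abs_div, div_le_one (abs_pos.mpr h0)] at this
    have h2 : (mat w).det = w.2.1 * (w.1.1 * x + w.1.2) - w.1.1 * (w.2.1 * x + w.2.2) := by
      rw [det_mat]; ring
    have h3 : (mat w).det ≤ |w.2.1| * |w.1.1 * x + w.1.2| + |w.1.1| * |w.2.1 * x + w.2.2| := by
      rw [h2, ← abs_mul, ← abs_mul]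
      exact (le_abs_self _).trans (abs_sub _ _)
    have h4 : |w.2.1| ≤ R := abs_le.mpr hw.2.1
    have h5 : |w.1.1| ≤ R := abs_le.mpr hw.1.1
    have h6 := abs_nonneg (w.1.1 * x + w.1.2)
    rw [div_le_iff₀ (by positivity)]
    nlinarith [mul_le_mul_of_nonneg_right h4 h6, mul_le_mul h5 h1 (abs_nonneg _) hR.le]
  · rw [hG.zero_off hN' hy, mul_zero, mul_zero]

set_option maxHeartbeats 800000 in
/-- A matrix close to the identity moves the vector of a step function by little, by `Step.modulus`. -/
theorem rho_near_one {N' : ℕ} (hN' : 0 < N') {G : ℝ → ℝ} (hG : Step N' G) (δ : ℝ) (hδ : 0 < δ)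
    (hδ1 : 20 * δ ≤ 1) (hδN : N' * (14 * δ) ≤ 1) (h : M2R) (h00 : h 0 0 = 1)
    (h01 : |h 0 1| ≤ δ) (h10 : |h 1 0| ≤ δ) (h11 : |h 1 1 - 1| ≤ δ) :
    ip (rho h (hG.hv hN') - hG.hv hN') (rho h (hG.hv hN') - hG.hv hN') ≤
      1100 * N' * δ * ∫ x, G x ^ 2 := by
  obtain ⟨D, hDm, hD0, hDi, hD, hDv⟩ := hG.modulus hN' (14 * δ) (by positivity) hδN
  have hN1 : (1 : ℝ) ≤ N' := by exact_mod_cast hN'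
  have hE : 0 ≤ ∫ x, G x ^ 2 := integral_nonneg fun _ => sq_nonneg _
  have b1 := abs_le.mp h01
  have b2 := abs_le.mp h10
  have b3 := abs_le.mp h11
  have hdet : h.det = h 1 1 - h 0 1 * h 1 0 := by rw [Matrix.det_fin_two, h00, one_mul]
  have hbc : |h 0 1 * h 1 0| ≤ δ := by
    rw [abs_mul]; nlinarith [abs_nonneg (h 0 1), abs_nonneg (h 1 0)]
  have hbc' := abs_le.mp hbc
  have hdp : 0 < h.det := by rw [hdet]; linarith
  have hs : |√|h.det| - 1| ≤ 2 * δ := by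
    rw [abs_of_pos hdp]
    have s0 := Real.sqrt_nonneg h.det
    have s1 : √h.det ^ 2 = h.det := Real.sq_sqrt hdp.le
    rw [abs_le]; constructor <;> nlinarith
  have hs' := abs_le.mp hs
  have hpt : ∀ x : ℝ, (rho h (hG.hv hN') - hG.hv hN').1 (x, 1) *
      (rho h (hG.hv hN') - hG.hv hN').1 (x, 1) ≤ 8 * D x + 200 * δ * G x ^ 2 := fun x => by
    have e : (rho h (hG.hv hN') - hG.hv hN').1 (x, 1) =
        √|h.det| * (|h 1 0 * x + h 1 1|⁻¹ * G ((x + h 0 1) / (h 1 0 * x + h 1 1))) - G x := by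
      show (rho h (hG.hv hN')).1 (x, 1) - (hG.hv hN').1 (x, 1) = _
      rw [rho_apply, Step.hv, lift_apply, lift_apply]
      simp [h00]
    rw [e]
    have hD' := hD0 x
    have hr : 0 ≤ 8 * D x + 200 * δ * G x ^ 2 := by positivity
    rcases le_or_gt |x| 2 with hx | hx
    · have hx' := abs_le.mp hx
      have hcx : |h 1 0 * x| ≤ 2 * δ := by
        rw [abs_mul]; nlinarith [abs_nonneg (h 1 0), abs_nonneg x]
      have hcx' := abs_le.mp hcx
      set l := h 1 0 * x + h 1 1 with hl
      have hl1 : |l - 1| ≤ 3 * δ := abs_le.mpr ⟨by rw [hl]; linarith, by rw [hl]; linarith⟩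
      have hl1' := abs_le.mp hl1
      have hlp : 1 / 2 ≤ l := by linarith
      have hl0 : 0 < l := by linarith
      have hσ : |(x + h 0 1) / l - x| ≤ 14 * δ := by
        rw [show (x + h 0 1) / l - x = (x * (1 - l) + h 0 1) / l by field_simp; ring, abs_div,
          abs_of_pos hl0, div_le_iff₀ hl0]
        have : |x * (1 - l)| ≤ 2 * (3 * δ) := by
          rw [abs_mul, abs_sub_comm]
          exact mul_le_mul hx hl1 (abs_nonneg _) (by norm_num)
        exact (abs_add_le _ _).trans (by nlinarith)
      have hd := hD x _ hσ
      rw [abs_of_pos hl0]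
      set y := G ((x + h 0 1) / l)
      set w := √|h.det| * l⁻¹ with hw
      have hw1 : |w - 1| ≤ 10 * δ := by
        rw [show w - 1 = (√|h.det| - l) / l by rw [hw]; field_simp, abs_div, abs_of_pos hl0,
          div_le_iff₀ hl0]
        have : |√|h.det| - l| ≤ 5 * δ := abs_le.mpr ⟨by linarith, by linarith⟩
        nlinarith
      have hw1' := abs_le.mp hw1
      have hww : (w - 1) ^ 2 ≤ 50 * δ * (2 * δ) := by
        rw [← sq_abs]
        exact (pow_le_pow_left₀ (abs_nonneg _) hw1 2).trans_eq (by ring)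
      have hw2 : w ^ 2 ≤ 4 := by
        have : |w| ≤ 2 := abs_le.mpr ⟨by linarith, by linarith⟩
        rw [← sq_abs]
        exact (pow_le_pow_left₀ (abs_nonneg _) this 2).trans_eq (by norm_num)
      rw [show √|h.det| * (l⁻¹ * y) - G x = w * (y - G x) + (w - 1) * G x by rw [hw]; ring]
      have q1 : w ^ 2 * (y - G x) ^ 2 ≤ 4 * D x := by
        exact mul_le_mul hw2 hd (sq_nonneg _) (by norm_num)
      have q2 : (w - 1) ^ 2 * G x ^ 2 ≤ 100 * δ * G x ^ 2 := by
        refine mul_le_mul_of_nonneg_right (hww.trans ?_) (sq_nonneg _)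
        have : δ * δ ≤ δ * 1 := mul_le_mul_of_nonneg_left (by linarith) hδ.le
        linarith
      have q3 := sq_nonneg (w * (y - G x) - (w - 1) * G x)
      linarith [mul_pow w (y - G x) 2, mul_pow (w - 1) (G x) 2]
    · have g1 : G x = 0 := hG.zero_off hN' fun h' => by
        rw [abs_of_nonneg h'.1] at hx; linarith [h'.2]
      rw [g1]
      by_cases hl0 : h 1 0 * x + h 1 1 = 0
      · rw [hl0]; simpa using hD'
      have g2 : G ((x + h 0 1) / (h 1 0 * x + h 1 1)) = 0 := hG.zero_off hN' fun h' => by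
        have q1 : |(x + h 0 1) / (h 1 0 * x + h 1 1)| ≤ 1 := by
          rw [abs_of_nonneg h'.1]; exact h'.2.le
        rw [abs_div, div_le_one (abs_pos.mpr hl0)] at q1
        have q2 : |x| - δ ≤ |x + h 0 1| := by
          have := abs_sub_abs_le_abs_sub x (-h 0 1)
          rw [abs_neg, sub_neg_eq_add] at this
          linarith
        have q3 : |h 1 0 * x + h 1 1| ≤ δ * |x| + (1 + δ) := by
          refine (abs_add_le _ _).trans (add_le_add ?_ (abs_le.mpr ⟨by linarith, by linarith⟩))
          rw [abs_mul]
          exact mul_le_mul_of_nonneg_right h10 (abs_nonneg _)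
        nlinarith
      rw [g2]
      simpa [g1] using hD'
  have hi2 := hG.integrable_sq hN'
  rw [ip_def]
  refine (integral_mono (hv_int_mul _ _) ((hDi.const_mul 8).add (hi2.const_mul (200 * δ))) hpt).trans ?_
  show ∫ x, 8 * D x + 200 * δ * G x ^ 2 ≤ _
  rw [integral_add (hDi.const_mul 8) (hi2.const_mul (200 * δ)), integral_const_mul,
    integral_const_mul]
  have : δ * ∫ x, G x ^ 2 ≤ N' * (δ * ∫ x, G x ^ 2) := le_mul_of_one_le_left (by positivity) hN1
  nlinarith

/-- The same for matrices close to a scalar, by homogeneity. -/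
theorem rho_near {N' : ℕ} (hN' : 0 < N') {G : ℝ → ℝ} (hG : Step N' G) (δ : ℝ) (hδ : 0 < δ)
    (hδ1 : 20 * δ ≤ 1) (hδN : N' * (14 * δ) ≤ 1) (h : M2R) (h00 : 1 ≤ h 0 0)
    (h01 : |h 0 1| ≤ δ) (h10 : |h 1 0| ≤ δ) (h11 : |h 1 1 - h 0 0| ≤ δ) :
    ip (rho h (hG.hv hN') - hG.hv hN') (rho h (hG.hv hN') - hG.hv hN') ≤
      1100 * N' * δ * ∫ x, G x ^ 2 := by
  have h0 : 0 < h 0 0 := by linarith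
  have key : ∀ y : ℝ, |y| ≤ δ → |(h 0 0)⁻¹ * y| ≤ δ := fun y hy => by
    rw [abs_mul, abs_of_pos (inv_pos.mpr h0)]
    have : (h 0 0)⁻¹ ≤ 1 := inv_le_one_of_one_le₀ h00
    nlinarith [abs_nonneg y, inv_pos.mpr h0]
  rw [← rho_smul (h 0 0)⁻¹ (inv_ne_zero h0.ne') h]
  refine rho_near_one hN' hG δ hδ hδ1 hδN _ ?_ ?_ ?_ ?_
  · simp [h0.ne']
  · exact key _ h01
  · exact key _ h10
  · have := key _ h11
    rwa [mul_sub, inv_mul_cancel₀ h0.ne'] at this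

/-- Left multiplication by a matrix close to a scalar hardly changes a matrix coefficient. -/
theorem coeff_near {N' : ℕ} (hN' : 0 < N') {G : ℝ → ℝ} (hG : Step N' G) (δ : ℝ) (hδ : 0 < δ)
    (hδ1 : 20 * δ ≤ 1) (hδN : N' * (14 * δ) ≤ 1) (h : M2R) (h00 : 1 ≤ h 0 0)
    (h01 : |h 0 1| ≤ δ) (h10 : |h 1 0| ≤ δ) (h11 : |h 1 1 - h 0 0| ≤ δ) (v : M2R)
    (hv : v.det ≠ 0) :
    ip (rho v (hG.hv hN')) (hG.hv hN') ≤ ip (rho (h * v) (hG.hv hN')) (hG.hv hN') +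
      √(1100 * N' * δ) * ∫ x, G x ^ 2 := by
  have hE : 0 ≤ ∫ x, G x ^ 2 := integral_nonneg fun _ => sq_nonneg _
  have h1 := rho_near hN' hG δ hδ hδ1 hδN h h00 h01 h10 h11
  set f := hG.hv hN' with hf
  have hff : ip f f = ∫ x, G x ^ 2 := by
    rw [hf, Step.hv, ip_lift]; simp only [pow_two]
  have h2 := ip_abs_le (rho v (rho h f - f)) f
  rw [ip_rho v hv, hff] at h2
  have h3 : √(ip (rho h f - f) (rho h f - f)) * √(∫ x, G x ^ 2) ≤
      √(1100 * N' * δ) * ∫ x, G x ^ 2 := by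
    calc _ ≤ √(1100 * N' * δ * ∫ x, G x ^ 2) * √(∫ x, G x ^ 2) := by gcongr
      _ = _ := by rw [Real.sqrt_mul (by positivity), mul_assoc, Real.mul_self_sqrt hE]
  have h4 := neg_le_of_abs_le (h2.trans h3)
  rw [rho_mul, Module.End.mul_apply]
  rw [map_sub, map_sub, LinearMap.sub_apply] at h4
  linarith

/-! ### Neighbourhoods of the scalar matrices -/

/-- Right multiplication of a row vector by a matrix. -/
def rowR (v : M2R) (z : ℝ × ℝ) : ℝ × ℝ := (z.1 * v 0 0 + z.2 * v 1 0, z.1 * v 0 1 + z.2 * v 1 1)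

theorem rowR_meas (v : M2R) : Measurable (rowR v) := by unfold rowR; fun_prop

theorem rowR_mp (v : M2R) (hv : v.det = 1) :
    MeasurePreserving (rowR v) (volume : Measure (ℝ × ℝ)) volume := by
  refine ⟨rowR_meas v, ?_⟩
  set T := Matrix.toLin (Module.Basis.finTwoProd ℝ) (Module.Basis.finTwoProd ℝ) v.transpose with hT
  have hd : LinearMap.det T = 1 := by
    rw [hT, LinearMap.det_toLin, Matrix.det_transpose, hv]
  have h := Measure.map_linearMap_addHaar_eq_smul_addHaar (volume : Measure (ℝ × ℝ))
    (f := T) (by rw [hd]; exact one_ne_zero)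
  rw [hd] at h
  have e : (T : ℝ × ℝ → ℝ × ℝ) = rowR v := by
    ext z
    · simp [hT, Matrix.toLin_apply, Matrix.mulVec, dotProduct, Fin.sum_univ_two, rowR]; ring
    · simp [hT, Matrix.toLin_apply, Matrix.mulVec, dotProduct, Fin.sum_univ_two, rowR]; ring
  rw [e] at h
  simpa using h

/-- Right multiplication by a matrix, on pairs of rows. -/
def mulR (v : M2R) (w : (ℝ × ℝ) × (ℝ × ℝ)) : (ℝ × ℝ) × (ℝ × ℝ) := (rowR v w.1, rowR v w.2)

theorem mulR_meas (v : M2R) : Measurable (mulR v) :=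
  ((rowR_meas v).comp measurable_fst).prodMk ((rowR_meas v).comp measurable_snd)

theorem mat_mulR (v : M2R) (w) : mat (mulR v w) = mat w * v := by
  ext i j
  fin_cases i <;> fin_cases j <;> simp [mat, mulR, rowR, Matrix.mul_apply, Fin.sum_univ_two]

theorem mat_inj {w w' : (ℝ × ℝ) × (ℝ × ℝ)} (h : mat w = mat w') : w = w' := by
  have h1 := congrFun (congrFun h 0) 0
  have h2 := congrFun (congrFun h 0) 1
  have h3 := congrFun (congrFun h 1) 0
  have h4 := congrFun (congrFun h 1) 1
  simp [mat] at h1 h2 h3 h4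
  ext <;> assumption

theorem mulR_mulR (u v : M2R) (w) : mulR v (mulR u w) = mulR (u * v) w := by
  apply mat_inj; rw [mat_mulR, mat_mulR, mat_mulR, mul_assoc]

theorem mulR_one (w) : mulR 1 w = w := by
  apply mat_inj; rw [mat_mulR, mul_one]

theorem mulR_mp (v : M2R) (hv : v.det = 1) :
    MeasurePreserving (mulR v) (volume : Measure ((ℝ × ℝ) × (ℝ × ℝ))) volume :=
  (rowR_mp v hv).prod (rowR_mp v hv)

theorem adj_mulR (v : M2R) (hv : v.det = 1) (w) : mulR v.adjugate (mulR v w) = w := by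
  rw [mulR_mulR, Matrix.mul_adjugate, hv, one_smul, mulR_one]
theorem mulR_adj (v : M2R) (hv : v.det = 1) (w) : mulR v (mulR v.adjugate w) = w := by
  rw [mulR_mulR, Matrix.adjugate_mul, hv, one_smul, mulR_one]

/-- Right multiplication by a matrix of determinant one, as a measurable equivalence. -/
def mulE (v : M2R) (hv : v.det = 1) : ((ℝ × ℝ) × (ℝ × ℝ)) ≃ᵐ ((ℝ × ℝ) × (ℝ × ℝ)) where
  toFun := mulR v
  invFun := mulR v.adjugate
  left_inv := adj_mulR v hv
  right_inv := mulR_adj v hv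
  measurable_toFun := mulR_meas v
  measurable_invFun := mulR_meas _

theorem integral_mulR (v : M2R) (hv : v.det = 1) (F : (ℝ × ℝ) × (ℝ × ℝ) → ℝ) :
    ∫ w, F (mulR v w) = ∫ w, F w :=
  (mulR_mp v hv).integral_comp (mulE v hv).measurableEmbedding F

/-- A neighbourhood of the segment of scalar matrices between `1` and `2`. -/
def Bset (δ : ℝ) : Set ((ℝ × ℝ) × (ℝ × ℝ)) :=
  {w | 1 ≤ w.2.1 ∧ w.2.1 ≤ 2 ∧ |w.2.2| ≤ δ ∧ |w.1.1| ≤ δ ∧ |w.1.2 - w.2.1| ≤ δ}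

theorem Bset_meas (δ : ℝ) : MeasurableSet (Bset δ) := by
  unfold Bset
  have h1 : MeasurableSet {w : (ℝ × ℝ) × (ℝ × ℝ) | 1 ≤ w.2.1} := measurableSet_le (by fun_prop) (by fun_prop)
  have h2 : MeasurableSet {w : (ℝ × ℝ) × (ℝ × ℝ) | w.2.1 ≤ 2} := measurableSet_le (by fun_prop) (by fun_prop)
  have h3 : MeasurableSet {w : (ℝ × ℝ) × (ℝ × ℝ) | |w.2.2| ≤ δ} := measurableSet_le (by fun_prop) (by fun_prop)
  have h4 : MeasurableSet {w : (ℝ × ℝ) × (ℝ × ℝ) | |w.1.1| ≤ δ} := measurableSet_le (by fun_prop) (by fun_prop)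
  have h5 : MeasurableSet {w : (ℝ × ℝ) × (ℝ × ℝ) | |w.1.2 - w.2.1| ≤ δ} :=
    measurableSet_le (by fun_prop) (by fun_prop)
  exact h1.inter (h2.inter (h3.inter (h4.inter h5)))

theorem Bset_sub (δ : ℝ) (hδ1 : 20 * δ ≤ 1) : Bset δ ⊆ sq2 3 ×ˢ sq2 3 := by
  rintro w ⟨h1, h2, h3, h4, h5⟩
  rw [abs_le] at h3 h4 h5
  refine ⟨⟨⟨?_, ?_⟩, ⟨?_, ?_⟩⟩, ⟨⟨?_, ?_⟩, ⟨?_, ?_⟩⟩⟩ <;> linarith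

theorem Bset_fin (δ : ℝ) (hδ1 : 20 * δ ≤ 1) :
    (volume : Measure ((ℝ × ℝ) × (ℝ × ℝ))) (Bset δ) ≠ ⊤ :=
  ne_top_of_le_ne_top ((sq2_compact 3).prod (sq2_compact 3)).measure_ne_top
    (measure_mono (Bset_sub δ hδ1))

theorem Bset_vol (δ : ℝ) (hδ : 0 < δ) (hδ1 : 20 * δ ≤ 1) :
    4 * δ ^ 3 ≤ (volume : Measure ((ℝ × ℝ) × (ℝ × ℝ))).real (Bset δ) := by
  have hm := Bset_meas δ
  have h1 : ENNReal.ofReal (4 * δ ^ 3) ≤ (volume : Measure ((ℝ × ℝ) × (ℝ × ℝ))) (Bset δ) := by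
    rw [Measure.volume_eq_prod, Measure.prod_apply hm]
    have h2 : ∀ r : ℝ × ℝ, (Set.Icc (-δ) δ ×ˢ Set.Icc (1 + δ) (2 - δ)).indicator
        (fun _ => ENNReal.ofReal (4 * δ ^ 2)) r ≤
        (volume : Measure (ℝ × ℝ)) (Prod.mk r ⁻¹' Bset δ) := by
      intro r
      by_cases hr : r ∈ Set.Icc (-δ) δ ×ˢ Set.Icc (1 + δ) (2 - δ)
      · rw [Set.indicator_of_mem hr]
        have hsub : Set.Icc (r.2 - δ) (r.2 + δ) ×ˢ Set.Icc (-δ) δ ⊆ Prod.mk r ⁻¹' Bset δ := by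
          rintro z ⟨⟨a1, a2⟩, a3⟩
          refine ⟨by linarith [hr.2.1], by linarith [hr.2.2], abs_le.mpr a3, abs_le.mpr hr.1,
            abs_le.mpr ⟨?_, ?_⟩⟩ <;> show _ ≤ _
          · show -δ ≤ r.2 - z.1; linarith
          · show r.2 - z.1 ≤ δ; linarith
        refine le_trans (le_of_eq ?_) (measure_mono hsub)
        rw [Measure.volume_eq_prod, Measure.prod_prod, Real.volume_Icc, Real.volume_Icc,
          ← ENNReal.ofReal_mul (by linarith)]
        congr 1; ring
      · rw [Set.indicator_of_notMem hr]; exact zero_le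
    refine le_trans ?_ (lintegral_mono h2)
    rw [lintegral_indicator (measurableSet_Icc.prod measurableSet_Icc), setLIntegral_const,
      Measure.volume_eq_prod, Measure.prod_prod, Real.volume_Icc, Real.volume_Icc,
      ← ENNReal.ofReal_mul (by linarith), ← ENNReal.ofReal_mul (by positivity)]
    apply ENNReal.ofReal_le_ofReal
    have : 0 ≤ δ ^ 3 := by positivity
    nlinarith
  rw [Measure.real]
  rw [← ENNReal.ofReal_le_ofReal_iff ENNReal.toReal_nonneg, ENNReal.ofReal_toReal (Bset_fin δ hδ1)]
  exact h1

theorem Bset_det {δ : ℝ} (hδ : 0 < δ) (hδ1 : 20 * δ ≤ 1) {w} (hw : w ∈ Bset δ) :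
    9 / 10 ≤ (mat w).det ∧ (mat w).det ≤ 9 := by
  obtain ⟨h1, h2, h3, h4, h5⟩ := hw
  have hb : |w.2.2 * w.1.1| ≤ 1 / 400 := by
    rw [abs_mul]
    calc |w.2.2| * |w.1.1| ≤ (1 / 20) * (1 / 20) :=
        mul_le_mul (by linarith) (by linarith) (abs_nonneg _) (by norm_num)
      _ = _ := by norm_num
  rw [abs_le] at h5 hb
  rw [det_mat]
  constructor <;> nlinarith

/-- If `w v = w' v'` with `w`, `w'` nearly scalar and `v`, `v'` of determinant one, then `v` and `v'`
differ by a matrix close to the identity. -/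
theorem Bset_pair {δ : ℝ} (hδ : 0 < δ) (hδ1 : 20 * δ ≤ 1) {w w'} (hw : w ∈ Bset δ)
    (hw' : w' ∈ Bset δ) (v v' : M2R) (hv : v.det = 1) (hv' : v'.det = 1)
    (he : mat w * v = mat w' * v') :
    ∀ i j, |(v * v'.adjugate) i j - (if i = j then 1 else 0)| ≤ 22 * δ := by
  obtain ⟨hd, -⟩ := Bset_det hδ hδ1 hw
  have hdd : (mat w).det = (mat w').det := by
    have := congrArg Matrix.det he
    rwa [Matrix.det_mul, Matrix.det_mul, hv, hv', mul_one, mul_one] at this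
  have key : (mat w).det • (v * v'.adjugate) = (mat w).adjugate * mat w' := by
    have h1 : (mat w).adjugate * (mat w * v) * v'.adjugate =
        (mat w).adjugate * (mat w' * v') * v'.adjugate := by rw [he]
    rw [← mul_assoc, Matrix.adjugate_mul, mul_assoc, mul_assoc, mul_assoc (mat w') v', Matrix.mul_adjugate, hv',
      one_smul, mul_one] at h1
    rw [← h1]; simp
  have hk : ∀ i j, (mat w).det * (v * v'.adjugate) i j = ((mat w).adjugate * mat w') i j :=
    fun i j => by rw [← key]; rfl
  obtain ⟨a1, a2, a3, a4, a5⟩ := hw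
  obtain ⟨b1, b2, b3, b4, b5⟩ := hw'
  set D := (mat w).det with hD
  have fin : ∀ x e : ℝ, |D * x - D * e| ≤ 11 * δ → |x - e| ≤ 22 * δ := fun x e h => by
    rw [← mul_sub, abs_mul, abs_of_pos (by linarith)] at h
    nlinarith [abs_nonneg (x - e)]
  have hDe : D = w.2.1 * w.1.2 - w.2.2 * w.1.1 := det_mat w
  have hDe' : D = w'.2.1 * w'.1.2 - w'.2.2 * w'.1.1 := by rw [hdd]; exact det_mat w'
  have e1 : mat w 0 0 = w.2.1 := rfl
  have e2 : mat w 0 1 = w.2.2 := rfl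
  have e3 : mat w 1 0 = w.1.1 := rfl
  have e4 : mat w 1 1 = w.1.2 := rfl
  have f1 : mat w' 0 0 = w'.2.1 := rfl
  have f2 : mat w' 0 1 = w'.2.2 := rfl
  have f3 : mat w' 1 0 = w'.1.1 := rfl
  have f4 : mat w' 1 1 = w'.1.2 := rfl
  have p00 : ((mat w).adjugate * mat w') 0 0 = w.1.2 * w'.2.1 - w.2.2 * w'.1.1 := by
    simp [Matrix.adjugate_fin_two, Matrix.mul_apply, Fin.sum_univ_two, e1, e2, e3, e4, f1, f2, f3, f4]
    ring
  have p01 : ((mat w).adjugate * mat w') 0 1 = w.1.2 * w'.2.2 - w.2.2 * w'.1.2 := by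
    simp [Matrix.adjugate_fin_two, Matrix.mul_apply, Fin.sum_univ_two, e1, e2, e3, e4, f1, f2, f3, f4]
    ring
  have p10 : ((mat w).adjugate * mat w') 1 0 = w.2.1 * w'.1.1 - w.1.1 * w'.2.1 := by
    simp [Matrix.adjugate_fin_two, Matrix.mul_apply, Fin.sum_univ_two, e1, e2, e3, e4, f1, f2, f3, f4]
    ring
  have p11 : ((mat w).adjugate * mat w') 1 1 = w.2.1 * w'.1.2 - w.1.1 * w'.2.2 := by
    simp [Matrix.adjugate_fin_two, Matrix.mul_apply, Fin.sum_univ_two, e1, e2, e3, e4, f1, f2, f3, f4]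
    ring
  clear_value D
  clear e1 e2 e3 e4 f1 f2 f3 f4 key he hdd
  generalize w.2.1 = a at *
  generalize w.2.2 = b at *
  generalize w.1.1 = c at *
  generalize w.1.2 = d at *
  generalize w'.2.1 = a' at *
  generalize w'.2.2 = b' at *
  generalize w'.1.1 = c' at *
  generalize w'.1.2 = d' at *
  have hm : ∀ x y : ℝ, |x| ≤ δ → |y| ≤ δ → |x * y| ≤ 1 / 20 * δ := fun x y hx hy => by
    rw [abs_mul]
    exact mul_le_mul (by linarith) hy (abs_nonneg _) (by norm_num)
  have hm2 : ∀ x y : ℝ, |x| ≤ δ → |y| ≤ 3 → |y * x| ≤ 3 * δ := fun x y hx hy => by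
    rw [abs_mul]
    exact mul_le_mul hy hx (abs_nonneg _) (by norm_num)
  have a5' := abs_le.mp a5
  have b5' := abs_le.mp b5
  have hd3 : |d| ≤ 3 := abs_le.mpr ⟨by linarith, by linarith⟩
  have hd3' : |d'| ≤ 3 := abs_le.mpr ⟨by linarith, by linarith⟩
  have ha3 : |a| ≤ 3 := abs_le.mpr ⟨by linarith, by linarith⟩
  have ha3' : |a'| ≤ 3 := abs_le.mpr ⟨by linarith, by linarith⟩
  -- both `a` and `a'` are close to the square root of the common determinant
  have haa : |a' - a| ≤ 5 / 2 * δ := by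
    have q1 := abs_le.mp (hm b c a3 a4)
    have q2 := abs_le.mp (hm b' c' b3 b4)
    have q3 : |a * (d - a)| ≤ 2 * δ := by
      rw [abs_mul]
      exact mul_le_mul (abs_le.mpr ⟨by linarith, by linarith⟩) a5 (abs_nonneg _) (by norm_num)
    have q4 : |a' * (d' - a')| ≤ 2 * δ := by
      rw [abs_mul]
      exact mul_le_mul (abs_le.mpr ⟨by linarith, by linarith⟩) b5 (abs_nonneg _) (by norm_num)
    have q3' := abs_le.mp q3
    have q4' := abs_le.mp q4
    have q5 : |(a' + a) * (a' - a)| ≤ 5 * δ := by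
      rw [show (a' + a) * (a' - a) = a * (d - a) - a' * (d' - a') + b' * c' - b * c by
        linear_combination hDe - hDe']
      exact abs_le.mpr ⟨by linarith, by linarith⟩
    rw [abs_mul, abs_of_pos (by linarith)] at q5
    nlinarith [abs_nonneg (a' - a)]
  have r1 := abs_le.mp (hm b c' a3 b4)
  have r2 := abs_le.mp (hm b c a3 a4)
  have r3 := abs_le.mp (hm c b' a4 b3)
  have r4 := abs_le.mp (hm2 b' d b3 hd3)
  have r5 := abs_le.mp (hm2 b d' a3 hd3')
  have r6 := abs_le.mp (hm2 c' a b4 ha3)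
  have r7 := abs_le.mp (hm2 c a' a4 ha3')
  have r8 : |d * (a' - a)| ≤ 3 * (5 / 2 * δ) := by
    rw [abs_mul]; exact mul_le_mul hd3 haa (abs_nonneg _) (by norm_num)
  have r8' := abs_le.mp r8
  have r9 : |a * (d' - a')| ≤ 2 * δ := by
    rw [abs_mul]
    exact mul_le_mul (abs_le.mpr ⟨by linarith, by linarith⟩) b5 (abs_nonneg _) (by norm_num)
  have r9' := abs_le.mp r9
  have r10 : |a * (d - a)| ≤ 2 * δ := by
    rw [abs_mul]
    exact mul_le_mul (abs_le.mpr ⟨by linarith, by linarith⟩) a5 (abs_nonneg _) (by norm_num)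
  have r10' := abs_le.mp r10
  have r11 : |a * (a' - a)| ≤ 2 * (5 / 2 * δ) := by
    rw [abs_mul]
    exact mul_le_mul (abs_le.mpr ⟨by linarith, by linarith⟩) haa (abs_nonneg _) (by norm_num)
  have r11' := abs_le.mp r11
  intro i j
  apply fin
  rw [hk]
  fin_cases i <;> fin_cases j
  · simp only [Fin.zero_eta, Fin.isValue, if_true, mul_one, p00, hDe]
    exact abs_le.mpr ⟨by linarith, by linarith⟩
  · simp only [Fin.zero_eta, Fin.mk_one, Fin.isValue, zero_ne_one, if_false, mul_zero, p01]
    exact abs_le.mpr ⟨by linarith, by linarith⟩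
  · simp only [Fin.zero_eta, Fin.mk_one, Fin.isValue, one_ne_zero, if_false, mul_zero, p10]
    exact abs_le.mpr ⟨by linarith, by linarith⟩
  · simp only [Fin.mk_one, Fin.isValue, if_true, mul_one, p11, hDe]
    exact abs_le.mpr ⟨by linarith, by linarith⟩

/-! ### The large sieve -/

theorem mulR_box {δ : ℝ} (hδ : 0 < δ) (hδ1 : 20 * δ ≤ 1) {w} (hw : w ∈ Bset δ) (v : M2R) (R : ℝ)
    (hv : ∀ i j, |v i j| ≤ R) : mulR v w ∈ sq2 (3 * R) ×ˢ sq2 (3 * R) := by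
  obtain ⟨h1, h2, h3, h4, h5⟩ := hw
  have h5' := abs_le.mp h5
  have key : ∀ x y : ℝ, |x| + |y| ≤ 3 → ∀ j, |x * v 0 j + y * v 1 j| ≤ 3 * R := fun x y hxy j => by
    refine (abs_add_le _ _).trans ?_
    rw [abs_mul, abs_mul]
    have hR : 0 ≤ R := (abs_nonneg _).trans (hv 0 0)
    calc |x| * |v 0 j| + |y| * |v 1 j| ≤ |x| * R + |y| * R :=
        add_le_add (mul_le_mul_of_nonneg_left (hv _ _) (abs_nonneg _))
          (mul_le_mul_of_nonneg_left (hv _ _) (abs_nonneg _))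
      _ = (|x| + |y|) * R := by ring
      _ ≤ _ := mul_le_mul_of_nonneg_right hxy hR
  have k1 : |w.1.1| + |w.1.2| ≤ 3 := by
    have : |w.1.2| ≤ 2 + δ := abs_le.mpr ⟨by linarith, by linarith⟩
    linarith
  have k2 : |w.2.1| + |w.2.2| ≤ 3 := by
    have : |w.2.1| ≤ 2 := abs_le.mpr ⟨by linarith, by linarith⟩
    linarith
  exact ⟨⟨abs_le.mp (key _ _ k1 0), abs_le.mp (key _ _ k1 1)⟩,
    ⟨abs_le.mp (key _ _ k2 0), abs_le.mp (key _ _ k2 1)⟩⟩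

/-- The translate by `v` of `Bset δ`, weighted by the square root of the determinant. -/
noncomputable def phiB (δ : ℝ) (v : M2R) (g : (ℝ × ℝ) × (ℝ × ℝ)) : ℝ :=
  (Bset δ).indicator (fun _ => 1) (mulR v.adjugate g) * √|(mat g).det|

theorem phiB_nonneg (δ : ℝ) (v : M2R) (g) : 0 ≤ phiB δ v g :=
  mul_nonneg (Set.indicator_nonneg (fun _ _ => zero_le_one) _) (Real.sqrt_nonneg _)

theorem phiB_le {δ : ℝ} (hδ : 0 < δ) (hδ1 : 20 * δ ≤ 1) (v : M2R) (hv : v.det = 1) (g) :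
    phiB δ v g ≤ 3 * (Bset δ).indicator (fun _ => 1) (mulR v.adjugate g) := by
  unfold phiB
  by_cases h : mulR v.adjugate g ∈ Bset δ
  · rw [Set.indicator_of_mem h, one_mul, mul_one]
    obtain ⟨h1, h2⟩ := Bset_det hδ hδ1 h
    have hd : (mat g).det = (mat (mulR v.adjugate g)).det := by
      rw [mat_mulR, Matrix.det_mul, Matrix.det_adjugate, hv]; simp
    rw [hd, abs_of_pos (by linarith), Real.sqrt_le_left (by norm_num)]
    linarith
  · rw [Set.indicator_of_notMem h, zero_mul, mul_zero]

theorem phiB_meas (δ : ℝ) (v : M2R) : Measurable (phiB δ v) := by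
  unfold phiB
  refine Measurable.mul ((measurable_const.indicator (Bset_meas δ)).comp (mulR_meas _)) ?_
  simp only [det_mat]
  fun_prop

theorem phiB_memLp {δ : ℝ} (hδ : 0 < δ) (hδ1 : 20 * δ ≤ 1) (v : M2R) (hv : v.det = 1) (R : ℝ)
    (hvR : ∀ i j, |v i j| ≤ R) : MemLp (phiB δ v) 2 volume := by
  refine (memLp_two_iff_integrable_sq (phiB_meas δ v).aestronglyMeasurable).mpr ?_
  refine integrable_bdd_supp _ _ ((phiB_meas δ v).pow_const 2).aestronglyMeasurable (3 ^ 2)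
    (fun w => ?_) (sq2 (3 * R) ×ˢ sq2 (3 * R))
    ((sq2_compact _).prod (sq2_compact _)).measure_ne_top (fun w hw => ?_)
  · rw [abs_pow, abs_of_nonneg (phiB_nonneg _ _ _)]
    refine pow_le_pow_left₀ (phiB_nonneg _ _ _) ((phiB_le hδ hδ1 v hv w).trans ?_) 2
    have : (Bset δ).indicator (fun _ => (1 : ℝ)) (mulR v.adjugate w) ≤ 1 :=
      Set.indicator_le_self' (fun _ _ => zero_le_one) _
    linarith
  · have : mulR v.adjugate w ∉ Bset δ := fun h => by
      apply hw
      rw [← mulR_adj v hv w]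
      exact mulR_box hδ hδ1 h v R hvR
    rw [phiB, Set.indicator_of_notMem this]; ring

open Classical in
/-- A large sieve inequality: if few pairs among the `v i` are close to each other, the matrix
coefficients at the `v i` are controlled by the mean square over a box of matrices. Each coefficient is
replaced by its average over the translate `Bset δ * v i`, and Cauchy–Schwarz is applied to the sum of
these averages; only overlapping translates contribute to the square of the sum of their weighted
indicators. -/
theorem large_sieve {N' : ℕ} (hN' : 0 < N') {G : ℝ → ℝ} (hG : Step N' G) (R : ℝ)
    (hR : 0 < R) {N : ℕ} (hN : 0 < N) (hz : ZeroMean N G) (ρ : ℝ) (hρ : 0 < ρ)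
    {δ : ℝ} (hδ : 0 < δ) (hδ1 : 20 * δ ≤ 1) (hδN : N' * (14 * δ) ≤ 1)
    (n : ℕ) (v : Fin n → M2R) (hv : ∀ i, (v i).det = 1) (hvR : ∀ i k l, |v i k l| ≤ R)
    (Np V : ℝ)
    (hNp : ((Finset.univ.filter fun q : Fin n × Fin n => ∀ i j,
      |(v q.1 * (v q.2).adjugate) i j - (if i = j then 1 else 0)| ≤ 22 * δ).card : ℝ) ≤ Np)
    (hV : 4 * (3 * R) ^ 2 * ((3 * R) ^ 4 * (512 * ρ + 128 / (ρ ^ 2 * N)) *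
      (∫ x, G x ^ 2) ^ 2) ≤ V) :
    ∑ i, ip (rho (v i) (hG.hv hN')) (hG.hv hN') ≤
      √(9 * Np * V / (4 * δ ^ 3)) + n * (√(1100 * N' * δ) * ∫ x, G x ^ 2) := by
  have hR3 : 0 < 3 * R := by linarith
  obtain ⟨hF2, hFV⟩ := mix_box hN' hG (3 * R) hR3 hN hz ρ hρ
  set F := (sq2 (3 * R) ×ˢ sq2 (3 * R)).indicator (Mtr (3 * R) G) with hF
  set err := √(1100 * N' * δ) * ∫ x, G x ^ 2 with herr
  set μ := (volume : Measure ((ℝ × ℝ) × (ℝ × ℝ))).real (Bset δ) with hμ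
  have hμ1 := Bset_vol δ hδ hδ1
  rw [← hμ] at hμ1
  have hμ0 : 0 < μ := lt_of_lt_of_le (by positivity) hμ1
  set b : (ℝ × ℝ) × (ℝ × ℝ) → ℝ := (Bset δ).indicator fun _ => 1 with hb
  have hbi : Integrable b := (integrable_indicator_iff (Bset_meas δ)).mpr
    (integrableOn_const (Bset_fin δ hδ1))
  have hbv : ∫ w, b w = μ := by
    rw [hb, integral_indicator (Bset_meas δ), setIntegral_const, smul_eq_mul, mul_one]
  have hb0 : ∀ w, 0 ≤ b w := fun w => Set.indicator_nonneg (fun _ _ => zero_le_one) w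
  have hφ2 : ∀ i, MemLp (phiB δ (v i)) 2 volume := fun i =>
    phiB_memLp hδ hδ1 (v i) (hv i) R (hvR i)
  have hφF : ∀ i, Integrable (fun g => phiB δ (v i) g * F g) := fun i =>
    (hφ2 i).integrable_mul hF2
  have step : ∀ i, μ * ip (rho (v i) (hG.hv hN')) (hG.hv hN') ≤
      (∫ g, phiB δ (v i) g * F g) + μ * err := fun i => by
    have j1 : Integrable (fun w => phiB δ (v i) (mulR (v i) w) * F (mulR (v i) w)) :=
      ((mulR_mp (v i) (hv i)).integrable_comp_emb
        (mulE (v i) (hv i)).measurableEmbedding).mpr (hφF i)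
    have e1 := integral_mulR (v i) (hv i) (fun g => phiB δ (v i) g * F g)
    rw [← e1, ← hbv, ← integral_mul_const, ← integral_mul_const,
      ← integral_add j1 (hbi.mul_const _)]
    refine integral_mono (hbi.mul_const _) (j1.add (hbi.mul_const _)) fun w => ?_
    show b w * _ ≤ phiB δ (v i) (mulR (v i) w) * F (mulR (v i) w) + b w * err
    unfold phiB
    rw [adj_mulR (v i) (hv i)]
    show b w * _ ≤ b w * _ * _ + b w * err
    by_cases hw : w ∈ Bset δ
    · have hb1 : b w = 1 := Set.indicator_of_mem hw _
      have hbox := mulR_box hδ hδ1 hw (v i) R (hvR i)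
      have hdd := (Bset_det hδ hδ1 hw).1
      have hdet : (mat (mulR (v i) w)).det = (mat w).det := by
        rw [mat_mulR, Matrix.det_mul, hv i, mul_one]
      have h1 := ip_mat hN' hG (3 * R) hR3 _ hbox (by rw [hdet]; linarith)
      have hw' := hw
      obtain ⟨h2, h3, h4, h5, h6⟩ := hw'
      have h7 := coeff_near hN' hG δ hδ hδ1 hδN (mat w) h2 h4 h5 h6 (v i)
        (by rw [hv i]; exact one_ne_zero)
      rw [hb1, one_mul, one_mul, one_mul, hF, Set.indicator_of_mem hbox, ← h1, mat_mulR]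
      exact h7
    · have hb1 : b w = 0 := Set.indicator_of_notMem hw _
      rw [hb1]; simp
  have hΦ2 : MemLp (fun g => ∑ i, phiB δ (v i) g) 2 volume :=
    memLp_finset_sum _ fun i _ => hφ2 i
  have hcs := integral_cs volume _ _ hΦ2 hF2
  have hsum : ∫ g, (∑ i, phiB δ (v i) g) * F g = ∑ i, ∫ g, phiB δ (v i) g * F g := by
    rw [← integral_finset_sum _ fun i _ => hφF i]
    congr 1; ext g; rw [Finset.sum_mul]
  set P := Finset.univ.filter fun q : Fin n × Fin n => ∀ i j,
      |(v q.1 * (v q.2).adjugate) i j - (if i = j then 1 else 0)| ≤ 22 * δ with hP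
  have hbvi : ∀ i, Integrable (fun g => b (mulR (v i).adjugate g)) ∧
      ∫ g, b (mulR (v i).adjugate g) = μ := fun i => by
    have hd : (v i).adjugate.det = 1 := by rw [Matrix.det_adjugate, hv i]; simp
    exact ⟨((mulR_mp _ hd).integrable_comp_emb (mulE _ hd).measurableEmbedding).mpr hbi,
      (integral_mulR _ hd b).trans hbv⟩
  have hsq : ∫ g, (∑ i, phiB δ (v i) g) ^ 2 ≤ 9 * Np * μ := by
    have hint : Integrable (fun g => ∑ q ∈ P, 9 * b (mulR (v q.1).adjugate g)) :=
      integrable_finset_sum _ fun q _ => (hbvi q.1).1.const_mul 9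
    refine (integral_mono hΦ2.integrable_sq hint fun g => ?_).trans ?_
    · show (∑ i, phiB δ (v i) g) ^ 2 ≤ _
      rw [pow_two, Finset.sum_mul_sum, ← Finset.sum_product', hP, Finset.sum_filter]
      refine Finset.sum_le_sum fun q _ => ?_
      split_ifs with hq
      · have h1 := phiB_le hδ hδ1 (v q.1) (hv _) g
        have h2 := phiB_le hδ hδ1 (v q.2) (hv _) g
        have h3 : b (mulR (v q.2).adjugate g) ≤ 1 :=
          Set.indicator_le_self' (fun _ _ => zero_le_one) _
        calc phiB δ (v q.1) g * phiB δ (v q.2) g ≤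
            (3 * b (mulR (v q.1).adjugate g)) * (3 * 1) :=
              mul_le_mul h1 (h2.trans (by linarith)) (phiB_nonneg _ _ _)
                (mul_nonneg (by norm_num) (hb0 _))
          _ = _ := by ring
      · by_cases m1 : mulR (v q.1).adjugate g ∈ Bset δ
        · by_cases m2 : mulR (v q.2).adjugate g ∈ Bset δ
          · exfalso
            apply hq
            refine Bset_pair hδ hδ1 m1 m2 _ _ (hv _) (hv _) ?_
            rw [← mat_mulR, ← mat_mulR, mulR_adj _ (hv _), mulR_adj _ (hv _)]
          · rw [phiB, phiB, Set.indicator_of_notMem m2]; simp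
        · rw [phiB, Set.indicator_of_notMem m1]; simp
    · rw [integral_finset_sum _ fun q _ => (hbvi q.1).1.const_mul 9]
      have : ∀ q ∈ P, ∫ g, 9 * b (mulR (v q.1).adjugate g) = 9 * μ := fun q _ => by
        rw [integral_const_mul, (hbvi q.1).2]
      rw [Finset.sum_congr rfl this, Finset.sum_const, nsmul_eq_mul]
      nlinarith
  have hNp0 : 0 ≤ Np := le_trans (Nat.cast_nonneg _) hNp
  have hNr : (0 : ℝ) < N := by exact_mod_cast hN
  have hV0 : 0 ≤ V := le_trans (by positivity) hV
  set M := ∑ i, ip (rho (v i) (hG.hv hN')) (hG.hv hN') with hM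
  have hmain : μ * (M - n * err) ≤ ∫ g, (∑ i, phiB δ (v i) g) * F g := by
    rw [hsum, hM, mul_sub, Finset.mul_sum]
    have := Finset.sum_le_sum fun i (_ : i ∈ Finset.univ) => step i
    rw [Finset.sum_add_distrib, Finset.sum_const, Finset.card_univ, Fintype.card_fin,
      nsmul_eq_mul] at this
    linarith
  have hsqr : (∫ g, (∑ i, phiB δ (v i) g) * F g) ^ 2 ≤ 9 * Np * μ * V := by
    refine hcs.trans (mul_le_mul hsq (hFV.trans hV) (integral_nonneg fun _ => sq_nonneg _)
      (by positivity))
  rw [← sub_le_iff_le_add]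
  rcases le_or_gt (M - n * err) 0 with h0 | h0
  · exact h0.trans (Real.sqrt_nonneg _)
  apply Real.le_sqrt_of_sq_le
  rw [le_div_iff₀ (by positivity)]
  have h2 : (μ * (M - n * err)) ^ 2 ≤ 9 * Np * μ * V :=
    (pow_le_pow_left₀ (by positivity) hmain 2).trans hsqr
  have h3 : (M - n * err) ^ 2 * μ ≤ 9 * Np * V := by
    refine le_of_mul_le_mul_left ?_ hμ0
    linarith
  have := mul_le_mul_of_nonneg_left hμ1 (sq_nonneg (M - n * err))
  linarith

/-! ### Powers of the averaging operator -/

/-- Words of length `n` have rows of `ℓ¹`-norm at most `(2 p) ^ n`. -/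
theorem pw_row (p : ℕ) (S : Finset M2Z)
    (hcl : ∀ s ∈ S, ∀ s' ∈ S, ∀ i j,
      |(s * s'.adjugate) i j - (if i = j then (p : ℤ) else 0)| * 132 ≤ 66 * p) (n : ℕ) :
    ∀ g ∈ pw S n, ∀ i, |g i 0| + |g i 1| ≤ (2 * p : ℤ) ^ n := by
  have h1 : ∀ s ∈ S, ∀ s' ∈ S, ∀ i, |(s * s'.adjugate) i 0| + |(s * s'.adjugate) i 1| ≤ 2 * p := by
    intro s hs s' hs' i
    have a0 := hcl s hs s' hs' i 0
    have a1 := hcl s hs s' hs' i 1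
    generalize s * s'.adjugate = h at a0 a1
    fin_cases i
    · simp only [Fin.zero_eta, Fin.isValue, if_true, zero_ne_one, if_false] at a0 a1 ⊢
      grind
    · simp only [Fin.mk_one, Fin.isValue, if_true, one_ne_zero, if_false] at a0 a1 ⊢
      grind
  induction n with
  | zero =>
    intro g hg i
    simp only [pw, Multiset.mem_singleton] at hg
    subst hg
    fin_cases i
    · show |(1 : M2Z) 0 0| + |(1 : M2Z) 0 1| ≤ _
      simp
    · show |(1 : M2Z) 1 0| + |(1 : M2Z) 1 1| ≤ _
      simp
  | succ n ih =>
    intro g hg i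
    simp only [pw, Multiset.mem_bind, Multiset.mem_map] at hg
    obtain ⟨a, ha, z, hz, rfl⟩ := hg
    have hz' : z ∈ S ×ˢ S := hz
    rw [Finset.mem_product] at hz'
    have q := h1 z.1 hz'.1 z.2 hz'.2
    generalize z.1 * z.2.adjugate = h at q
    have q0 := q 0
    have q1 := q 1
    have r := ih a ha i
    rw [Matrix.mul_apply, Matrix.mul_apply, Fin.sum_univ_two, Fin.sum_univ_two]
    calc _ ≤ (|a i 0| * |h 0 0| + |a i 1| * |h 1 0|) + (|a i 0| * |h 0 1| + |a i 1| * |h 1 1|) := by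
          rw [← abs_mul, ← abs_mul, ← abs_mul, ← abs_mul]
          exact add_le_add (abs_add_le _ _) (abs_add_le _ _)
      _ = |a i 0| * (|h 0 0| + |h 0 1|) + |a i 1| * (|h 1 0| + |h 1 1|) := by ring
      _ ≤ |a i 0| * (2 * p) + |a i 1| * (2 * p) := by gcongr
      _ = (|a i 0| + |a i 1|) * (2 * p) := by ring
      _ ≤ (2 * p) ^ n * (2 * p) := by gcongr
      _ = _ := by ring

theorem card_filter_sum {α : Type*} (P : α → Prop) [DecidablePred P] (s : Multiset α) :
    ((Multiset.card (s.filter P) : ℕ) : ℝ) = (s.map fun a => if P a then (1 : ℝ) else 0).sum := by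
  induction s using Multiset.induction with
  | empty => simp
  | cons a s ih =>
    rw [Multiset.map_cons, Multiset.sum_cons, ← ih]
    by_cases h : P a
    · rw [Multiset.filter_cons_of_pos _ h]; simp [h, add_comm]
    · rw [Multiset.filter_cons_of_neg _ h]; simp [h]

theorem sum_fin_toList {α : Type*} (s : Multiset α) (φ : α → ℝ) :
    ∑ i : Fin s.toList.length, φ (s.toList.get i) = (s.map φ).sum := by
  conv_rhs => rw [← s.coe_toList, Multiset.map_coe, Multiset.sum_coe]
  rw [← List.sum_ofFn]
  congr 1
  exact (List.ofFn_comp' _ _).trans (by rw [List.ofFn_get])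

open Classical in
/-- Since the adjugate of a word is a word, pairs of words of length `n` whose quotient is close to the
identity correspond to words of length `2 n` close to a scalar. -/
theorem pair_count (p : ℕ) (hp : 0 < p) (S : Finset M2Z) (n : ℕ) (δ : ℝ) :
    (((Finset.univ : Finset (Fin (pw S n).toList.length × Fin (pw S n).toList.length)).filter
      fun q => ∀ i j, |((((p : ℝ) ^ n)⁻¹ • toR ((pw S n).toList.get q.1)) *
        (((p : ℝ) ^ n)⁻¹ • toR ((pw S n).toList.get q.2)).adjugate) i j -
          (if i = j then 1 else 0)| ≤ δ).card : ℝ) =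
    ((Multiset.card ((pw S (2 * n)).filter (NearScalar ((p : ℝ) ^ (2 * n)) δ)) : ℕ) : ℝ) := by
  have hpr : (0 : ℝ) < p := by exact_mod_cast hp
  have key : ∀ g h : M2Z, (∀ i j, |((((p : ℝ) ^ n)⁻¹ • toR g) *
        (((p : ℝ) ^ n)⁻¹ • toR h).adjugate) i j - (if i = j then 1 else 0)| ≤ δ) ↔
      NearScalar ((p : ℝ) ^ (2 * n)) δ (g * h.adjugate) := by
    intro g h
    unfold NearScalar
    refine forall_congr' fun i => forall_congr' fun j => ?_
    have e : ((((p : ℝ) ^ n)⁻¹ • toR g) * (((p : ℝ) ^ n)⁻¹ • toR h).adjugate) i j =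
        ((p : ℝ) ^ (2 * n))⁻¹ * (((g * h.adjugate) i j : ℤ) : ℝ) := by
      have : (((g * h.adjugate) i j : ℤ) : ℝ) = toR (g * h.adjugate) i j := rfl
      rw [this, map_mul, toR_adj, Matrix.adjugate_smul]
      simp [Matrix.mul_apply, Fin.sum_univ_two]
      field_simp
      ring
    rw [e]
    have hP : (0 : ℝ) < (p : ℝ) ^ (2 * n) := by positivity
    generalize (((g * h.adjugate) i j : ℤ) : ℝ) = z
    generalize (p : ℝ) ^ (2 * n) = P at hP
    rw [show z - (if i = j then P else 0) = (P⁻¹ * z - if i = j then 1 else 0) * P by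
      rw [sub_mul, ite_mul, one_mul, zero_mul, mul_right_comm, inv_mul_cancel₀ hP.ne', one_mul],
      abs_mul, abs_of_pos hP, mul_le_mul_iff_left₀ hP]
  rw [Finset.card_filter, Nat.cast_sum, Fintype.sum_prod_type, card_filter_sum, two_mul, pw_add]
  simp only [key, Nat.cast_ite, Nat.cast_one, Nat.cast_zero]
  rw [Multiset.map_bind, Multiset.sum_bind]
  rw [← sum_fin_toList]
  refine Finset.sum_congr rfl fun a _ => ?_
  have hs : ∀ φ : M2Z → ℝ, ((pw S n).map φ).sum = ((pw S n).map fun h => φ h.adjugate).sum := by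
    intro φ
    conv_lhs => rw [← pw_adj S n, Multiset.map_map]
    rfl
  rw [Multiset.map_map, hs, ← sum_fin_toList]
  simp only [Function.comp_def, two_mul]

/-- The large sieve applied to the words of length `n`, the close pairs being counted by `card_near_pw`. -/
theorem UU_le (p : ℕ) (hp : p.Prime) (S : Finset M2Z) (hS : SepSet p S) (c0 : ℝ) (hc0 : 0 < c0)
    (hc1 : c0 ≤ 1) (hk : c0 * p ≤ S.card)
    (hcl : ∀ s ∈ S, ∀ s' ∈ S, ∀ i j,
      |(s * s'.adjugate) i j - (if i = j then (p : ℤ) else 0)| * 132 ≤ 66 * p)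
    (n : ℕ) (δ : ℝ) (hδ : 0 < δ) (hδ1 : 44 * δ ≤ 1) (hδ3 : 1 ≤ (22 * δ) ^ 3 * (p : ℝ) ^ (2 * n))
    (t : ℕ) (ht : ∀ m, 1 ≤ m → m ≤ p ^ (4 * n) → m.divisors.card ≤ t)
    {N' : ℕ} (hN' : 0 < N') {G : ℝ → ℝ} (hG : Step N' G) {N : ℕ} (hN : 0 < N)
    (hz : ZeroMean N G) (hδN : N' * (14 * δ) ≤ 1) (ρ : ℝ) (hρ : 0 < ρ) :
    ip (UU S n (hG.hv hN')) (hG.hv hN') ≤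
      (√(81 * 22 ^ 3 * t * (8 / c0 ^ 2) ^ (2 * n) *
        (2916 * (2 ^ n) ^ 6 * (512 * ρ + 128 / (ρ ^ 2 * N)))) +
        √(1100 * N' * δ)) * ∫ x, G x ^ 2 := by
  classical
  have hp0 : (0 : ℝ) < p := by exact_mod_cast hp.pos
  have hE : 0 ≤ ∫ x, G x ^ 2 := integral_nonneg fun _ => sq_nonneg _
  have hSc : (0 : ℝ) < S.card := lt_of_lt_of_le (by positivity) hk
  set l := (pw S n).toList with hl
  have hmem : ∀ i : Fin l.length, l.get i ∈ pw S n := fun i => by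
    rw [← Multiset.mem_toList]; exact List.get_mem _ _
  set v : Fin l.length → M2R := fun i => ((p : ℝ) ^ n)⁻¹ • toR (l.get i) with hv
  have hlen : (l.length : ℝ) = ((S.card : ℝ) ^ 2) ^ n := by
    rw [hl, Multiset.length_toList, card_pw]; push_cast; rfl
  have hvd : ∀ i, (v i).det = 1 := fun i => by
    rw [hv]
    show (((p : ℝ) ^ n)⁻¹ • toR (l.get i)).det = 1
    rw [Matrix.det_smul, det_toR, det_pw p S hS n _ (hmem i)]
    simp only [Fintype.card_fin]
    push_cast
    rw [mul_comm 2 n, pow_mul, inv_pow, inv_mul_cancel₀ (by positivity)]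
  have hvR : ∀ i k j, |v i k j| ≤ (2 : ℝ) ^ n := fun i k j => by
    have h := pw_row p S hcl n _ (hmem i) k
    have h' : |l.get i k j| ≤ (2 * p : ℤ) ^ n := by
      fin_cases j
      · exact (le_add_of_nonneg_right (abs_nonneg _)).trans h
      · exact (le_add_of_nonneg_left (abs_nonneg _)).trans h
    have h'' : |((l.get i k j : ℤ) : ℝ)| ≤ (2 * p : ℝ) ^ n := by exact_mod_cast h'
    show |((p : ℝ) ^ n)⁻¹ * ((l.get i k j : ℤ) : ℝ)| ≤ _
    rw [abs_mul, abs_of_pos (by positivity), inv_mul_le_iff₀ (by positivity), ← mul_pow, mul_comm (p : ℝ)]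
    exact h''
  have hcount := card_near_pw p hp S hS c0 hc0 hc1 hk (2 * n) (22 * δ) (by positivity) (by linarith)
    hδ3 t (fun m h1 h2 => ht m h1 (by rwa [show 4 * n = 2 * (2 * n) by ring]))
  have hpc := pair_count p hp.pos S n (22 * δ)
  have key := large_sieve hN' hG ((2 : ℝ) ^ n) (by positivity) hN hz ρ hρ hδ (by linarith) hδN
    l.length v hvd hvR (36 * t * (8 / c0 ^ 2) ^ (2 * n) * (22 * δ) ^ 3 * (S.card : ℝ) ^ (2 * (2 * n)))
    (2916 * (2 ^ n) ^ 6 * (512 * ρ + 128 / (ρ ^ 2 * N)) * (∫ x, G x ^ 2) ^ 2)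
    (by rw [← hpc] at hcount; convert hcount) (le_of_eq (by ring))
  rw [hlen] at key
  have hsum : ((pw S n).map fun g => ip (rho (toR g) (hG.hv hN')) (hG.hv hN')).sum =
      ∑ i, ip (rho (v i) (hG.hv hN')) (hG.hv hN') := by
    rw [← sum_fin_toList]
    refine Finset.sum_congr rfl fun i _ => ?_
    rw [hv]
    show _ = ip (rho (((p : ℝ) ^ n)⁻¹ • toR (l.get i)) _) _
    rw [rho_smul _ (by positivity)]
  rw [ip_UU_left, hsum, inv_mul_le_iff₀ (by positivity)]
  refine key.trans (le_of_eq ?_)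
  rw [show 9 * (36 * (t : ℝ) * (8 / c0 ^ 2) ^ (2 * n) * (22 * δ) ^ 3 * (S.card : ℝ) ^ (2 * (2 * n))) *
      (2916 * (2 ^ n) ^ 6 * (512 * ρ + 128 / (ρ ^ 2 * N)) * (∫ x, G x ^ 2) ^ 2) / (4 * δ ^ 3) =
      (81 * 22 ^ 3 * t * (8 / c0 ^ 2) ^ (2 * n) *
        (2916 * (2 ^ n) ^ 6 * (512 * ρ + 128 / (ρ ^ 2 * N)))) *
        (((S.card : ℝ) ^ 2) ^ n * ∫ x, G x ^ 2) ^ 2 by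
      rw [show (S.card : ℝ) ^ (2 * (2 * n)) = ((S.card : ℝ) ^ 2) ^ n * ((S.card : ℝ) ^ 2) ^ n by ring]
      field_simp
      ring,
    Real.sqrt_mul (by positivity), Real.sqrt_sq (by positivity)]
  ring

/-! ### The gap at a single scale -/

/-- Size of the main term of `UU_le`, in which `δ` has cancelled, for `ρ = Y ^ (-4)` with `Y = X ^ n`. -/
theorem mix_num1 (C c0 κ X : ℝ) (hC : 1 ≤ C) (hc0 : 0 < c0) (hκ : 0 < κ) (hX : 1 ≤ X)
    (hXA : 2 * (81 * 22 ^ 3 * 2916 * 640 * C) * (64 / c0 ^ 2) ≤ κ * X) (n : ℕ) (hn : 1 ≤ n)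
    (t : ℝ) (ht : t ≤ C * (X ^ n) ^ 2) (N : ℝ) (hN : (X ^ n) ^ 16 ≤ N) :
    √(81 * 22 ^ 3 * t * (8 / c0 ^ 2) ^ (2 * n) *
        (2916 * (2 ^ n) ^ 6 * (512 * ((X ^ n) ^ 4)⁻¹ + 128 / (((X ^ n) ^ 4)⁻¹ ^ 2 * N)))) ≤ κ ^ n / 2 := by
  set A : ℝ := 81 * 22 ^ 3 * 2916 * 640 * C with hA
  have hA1 : 1 ≤ A := by rw [hA]; linarith
  have hX0 : 0 < X := by linarith
  set Y := X ^ n with hY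
  have hY1 : 1 ≤ Y := one_le_pow₀ hX
  have hY0 : 0 < Y := by linarith
  have hN0 : 0 < N := lt_of_lt_of_le (by positivity) hN
  have h1 : 512 * (Y ^ 4)⁻¹ + 128 / ((Y ^ 4)⁻¹ ^ 2 * N) ≤ 640 * (Y ^ 4)⁻¹ := by
    have : 128 / ((Y ^ 4)⁻¹ ^ 2 * N) ≤ 128 * (Y ^ 4)⁻¹ := by
      rw [div_le_iff₀ (by positivity)]
      have e : 128 * (Y ^ 4)⁻¹ * ((Y ^ 4)⁻¹ ^ 2 * N) = 128 * (N / Y ^ 12) := by field_simp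
      rw [e]
      have : 1 ≤ N / Y ^ 12 := by
        rw [one_le_div (by positivity)]
        exact (pow_le_pow_right₀ hY1 (by norm_num)).trans hN
      linarith
    linarith
  have h2 : 81 * 22 ^ 3 * t * (8 / c0 ^ 2) ^ (2 * n) *
      (2916 * (2 ^ n) ^ 6 * (512 * (Y ^ 4)⁻¹ + 128 / ((Y ^ 4)⁻¹ ^ 2 * N))) ≤
      (A * ((64 / c0 ^ 2) / X) ^ n) ^ 2 := by
    calc _ ≤ 81 * 22 ^ 3 * (C * Y ^ 2) * (8 / c0 ^ 2) ^ (2 * n) *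
          (2916 * (2 ^ n) ^ 6 * (640 * (Y ^ 4)⁻¹)) := by gcongr
      _ = A * (((64 / c0 ^ 2) / X) ^ n) ^ 2 := by
          have e1 : ((2 : ℝ) ^ n) ^ 6 = 64 ^ n := by
            rw [← pow_mul, mul_comm, pow_mul]; norm_num
          have e2 : ((64 / c0 ^ 2 / X) ^ n) ^ 2 = (8 / c0 ^ 2) ^ (2 * n) * 64 ^ n / Y ^ 2 := by
            rw [div_pow (64 / c0 ^ 2) X, div_pow, ← hY, pow_mul, ← mul_pow, ← pow_mul, mul_comm n 2,
              pow_mul]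
            congr 2
            ring
          rw [e1, e2, hA]
          field_simp
      _ ≤ A ^ 2 * (((64 / c0 ^ 2) / X) ^ n) ^ 2 := by
          refine mul_le_mul_of_nonneg_right ?_ (sq_nonneg _)
          nlinarith
      _ = _ := by ring
  refine Real.sqrt_le_iff.mpr ⟨by positivity, h2.trans ?_⟩
  refine pow_le_pow_left₀ (by positivity) ?_ 2
  have h3 : (64 / c0 ^ 2) / X ≤ κ / (2 * A) := by
    rw [div_le_div_iff₀ hX0 (by positivity)]
    linarith
  calc A * ((64 / c0 ^ 2) / X) ^ n ≤ A * (κ / (2 * A)) ^ n := by gcongr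
    _ = A * κ ^ n / (2 * A) ^ n := by rw [div_pow]; ring
    _ ≤ A * κ ^ n / (2 * A) ^ 1 := by
        gcongr
        linarith
    _ = κ ^ n / 2 := by field_simp

/-- Size of the error term of `UU_le` for `δ = Y ^ (-80)` with `Y = X ^ n`. -/
theorem mix_num2 (κ X b : ℝ) (hκ : 0 < κ) (hX : 1 ≤ X) (hb : 1 ≤ b)
    (hXb : 4400 * b ≤ κ ^ 2 * X) (n : ℕ) (hn : 1 ≤ n) (N' : ℝ)
    (hN' : N' ≤ b * (X ^ n) ^ 32) : √(1100 * N' * ((X ^ n) ^ 80)⁻¹) ≤ κ ^ n / 2 := by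
  have hX0 : 0 < X := by linarith
  refine Real.sqrt_le_iff.mpr ⟨by positivity, ?_⟩
  have h1 : 4400 * b ≤ (κ ^ n) ^ 2 * X ^ n := by
    calc 4400 * b = (4400 * b) ^ 1 := (pow_one _).symm
      _ ≤ (4400 * b) ^ n := pow_le_pow_right₀ (by linarith) hn
      _ ≤ (κ ^ 2 * X) ^ n := by gcongr
      _ = _ := by ring
  set Y := X ^ n with hY
  have hY1 : 1 ≤ Y := one_le_pow₀ hX
  have hY0 : 0 < Y := by linarith
  calc 1100 * N' * (Y ^ 80)⁻¹ ≤ 1100 * (b * Y ^ 32) * (Y ^ 80)⁻¹ := by gcongr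
    _ = 4400 * b / 4 / Y ^ 48 := by field_simp; norm_num
    _ ≤ 4400 * b / 4 / Y ^ 1 := by
        gcongr
        norm_num
    _ ≤ ((κ ^ n) ^ 2 * Y) / 4 / Y ^ 1 := by gcongr
    _ = _ := by field_simp; norm_num

/-- The word length adapted to the scale `1 / N` can be taken to be a power of two `2 ^ j`, as
`ip_UU_pow` requires. -/
theorem exists_level (X : ℝ) (hX : 2 ≤ X) (N : ℝ) (hN : X ^ 16 ≤ N) :
    ∃ j : ℕ, (X ^ 2 ^ j) ^ 16 ≤ N ∧ N ≤ (X ^ 2 ^ j) ^ 32 := by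
  have hex : ∃ j : ℕ, N ≤ (X ^ 2 ^ j) ^ 32 := by
    obtain ⟨m, hm⟩ := pow_unbounded_of_one_lt N (by linarith : 1 < X)
    refine ⟨m, hm.le.trans ?_⟩
    rw [← pow_mul]
    refine pow_le_pow_right₀ (by linarith) ?_
    have := @Nat.lt_two_pow_self m
    omega
  classical
  refine ⟨Nat.find hex, ?_, Nat.find_spec hex⟩
  rcases h : Nat.find hex with _ | j
  · simpa using hN
  · have := Nat.find_min hex (show j < Nat.find hex by omega)
    push Not at this
    refine le_trans (le_of_eq ?_) this.le
    rw [← pow_mul, ← pow_mul, pow_succ]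
    congr 1
    ring

/-- Spectral gap at a single scale: if `N' ≤ b N` and `G` is a step function of mesh `1 / N'` with zero
mean on the cells of length `1 / N`, then `⟨U G, G⟩ ≤ κ ‖G‖²` for the averaging operator `U` of `S`. -/
theorem mixing (c0 κ b : ℝ) (hc0 : 0 < c0) (hc1 : c0 ≤ 1) (hκ : 0 < κ) (hb : 1 ≤ b) :
    ∃ p0 : ℕ, ∀ p : ℕ, p.Prime → p0 ≤ p → ∀ S : Finset M2Z, SepSet p S → c0 * p ≤ S.card →
      (∀ s ∈ S, ∀ s' ∈ S, ∀ i j,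
        |(s * s'.adjugate) i j - (if i = j then (p : ℤ) else 0)| * 132 ≤ 66 * p) →
      ∃ N0 : ℕ, ∀ N : ℕ, N0 ≤ N → ∀ N' : ℕ, ∀ hN' : 0 < N', (N' : ℝ) ≤ b * N →
        ∀ (G : ℝ → ℝ) (hG : Step N' G), ZeroMean N G →
          ip (UU S 1 (hG.hv hN')) (hG.hv hN') ≤ κ * ∫ x, G x ^ 2 := by
  obtain ⟨C, hC, hdiv⟩ := card_divisors_le_rpow (1 / 256) (by norm_num) (by norm_num)
  -- `X0` collects the lower bounds on `X = p ^ (1 / 128)` required by `UU_le`, `mix_num1` and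
  -- `mix_num2`.
  set X0 : ℝ := 44 + 14 * b + 2 * (81 * 22 ^ 3 * 2916 * 640 * C) * (64 / c0 ^ 2) / κ +
    4400 * b / κ ^ 2 with hX0
  have t1 : 0 ≤ 2 * (81 * 22 ^ 3 * 2916 * 640 * C) * (64 / c0 ^ 2) / κ := by positivity
  have t2 : 0 ≤ 4400 * b / κ ^ 2 := by positivity
  refine ⟨⌈X0 ^ 128⌉₊, fun p hp hpp S hS hk hcl => ?_⟩
  have hp0 : (0 : ℝ) < p := by exact_mod_cast hp.pos
  set X : ℝ := (p : ℝ) ^ (1 / 128 : ℝ) with hX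
  have hX128 : X ^ 128 = p := by
    rw [hX, ← Real.rpow_natCast, ← Real.rpow_mul hp0.le]; norm_num
  have hXX : X0 ≤ X := by
    have : X0 ^ 128 ≤ X ^ 128 := by rw [hX128]; exact Nat.ceil_le.mp hpp
    exact le_of_pow_le_pow_left₀ (by norm_num) (by positivity) this
  have hX44 : 44 ≤ X := by linarith
  have hXb : 14 * b ≤ X := by linarith
  have hX1 : 1 ≤ X := by linarith
  have hXA : 2 * (81 * 22 ^ 3 * 2916 * 640 * C) * (64 / c0 ^ 2) ≤ κ * X := by
    rw [mul_comm κ, ← div_le_iff₀ hκ]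
    linarith
  have hXB : 4400 * b ≤ κ ^ 2 * X := by
    rw [mul_comm (κ ^ 2), ← div_le_iff₀ (by positivity)]
    linarith
  refine ⟨⌈X ^ 16⌉₊, fun N hN N' hN' hNN G hG hz => ?_⟩
  have hNX : X ^ 16 ≤ (N : ℝ) := Nat.ceil_le.mp hN
  have hNpos : 0 < N := by
    have : (0 : ℝ) < N := lt_of_lt_of_le (by positivity) hNX
    exact_mod_cast this
  obtain ⟨j, hj1, hj2⟩ := exists_level X (by linarith) N hNX
  set n := 2 ^ j with hn
  have hn1 : 1 ≤ n := Nat.one_le_two_pow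
  have hYX : X ≤ X ^ n := by
    calc X = X ^ 1 := (pow_one X).symm
      _ ≤ X ^ n := pow_le_pow_right₀ hX1 hn1
  have hpY : (p : ℝ) ^ n = (X ^ n) ^ 128 := by rw [← hX128]; ring
  have hY1 : 1 ≤ X ^ n := hX1.trans hYX
  have hY0 : 0 < X ^ n := by linarith
  have hN'Y : (N' : ℝ) ≤ b * (X ^ n) ^ 32 := hNN.trans (mul_le_mul_of_nonneg_left hj2 (by linarith))
  have hE : 0 ≤ ∫ x, G x ^ 2 := integral_nonneg fun _ => sq_nonneg _
  have hpow : ∀ m : ℕ, m ≠ 0 → X ^ n ≤ (X ^ n) ^ m := fun m hm => le_self_pow₀ hY1 hm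
  have q1 : 44 * ((X ^ n) ^ 80)⁻¹ ≤ 1 := by
    rw [mul_inv_le_iff₀ (by positivity), one_mul]
    exact (hX44.trans hYX).trans (hpow 80 (by norm_num))
  have q2 : 1 ≤ (22 * ((X ^ n) ^ 80)⁻¹) ^ 3 * (p : ℝ) ^ (2 * n) := by
    have e : (22 * ((X ^ n) ^ 80)⁻¹) ^ 3 * (p : ℝ) ^ (2 * n) = 22 ^ 3 * (X ^ n) ^ 16 := by
      rw [mul_comm 2 n, pow_mul, hpY]
      field_simp
    rw [e]
    have := one_le_pow₀ hY1 (n := 16)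
    linarith
  have q3 : ∀ m, 1 ≤ m → m ≤ p ^ (4 * n) → m.divisors.card ≤ ⌊C * (X ^ n) ^ 2⌋₊ := by
    intro m h1 h2
    refine Nat.le_floor ((hdiv m (by omega)).trans ?_)
    refine mul_le_mul_of_nonneg_left ?_ (by linarith)
    have h3 : (m : ℝ) ≤ (X ^ n) ^ 512 := by
      have : (m : ℝ) ≤ (p : ℝ) ^ (4 * n) := by exact_mod_cast h2
      refine this.trans (le_of_eq ?_)
      rw [mul_comm 4 n, pow_mul, hpY]; ring
    calc (m : ℝ) ^ (1 / 256 : ℝ) ≤ ((X ^ n) ^ 512) ^ (1 / 256 : ℝ) :=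
          Real.rpow_le_rpow (by positivity) h3 (by norm_num)
      _ = (X ^ n) ^ 2 := by
          rw [← Real.rpow_natCast, ← Real.rpow_mul hY0.le, ← Real.rpow_natCast]; norm_num
  have q4 : (N' : ℝ) * (14 * ((X ^ n) ^ 80)⁻¹) ≤ 1 := by
    calc (N' : ℝ) * (14 * ((X ^ n) ^ 80)⁻¹) ≤ b * (X ^ n) ^ 32 * (14 * ((X ^ n) ^ 80)⁻¹) := by gcongr
      _ = 14 * b / (X ^ n) ^ 48 := by field_simp
      _ ≤ 1 := by
        rw [div_le_one (by positivity)]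
        exact (hXb.trans hYX).trans (hpow 48 (by norm_num))
  have key := UU_le p hp S hS c0 hc0 hc1 hk hcl n ((X ^ n) ^ 80)⁻¹ (by positivity) q1 q2 _ q3 hN' hG
    hNpos hz q4 ((X ^ n) ^ 4)⁻¹ (by positivity)
  have r1 := mix_num1 C c0 κ X hC hc0 hκ hX1 hXA n hn1 (⌊C * (X ^ n) ^ 2⌋₊ : ℝ)
    (Nat.floor_le (by positivity)) N hj1
  have r2 := mix_num2 κ X b hκ hX1 hb hXB n hn1 N' hN'Y
  have key2 : ip (UU S n (hG.hv hN')) (hG.hv hN') ≤ κ ^ n * ∫ x, G x ^ 2 :=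
    key.trans (mul_le_mul_of_nonneg_right (by linarith) hE)
  have hff : ip (hG.hv hN') (hG.hv hN') = ∫ x, G x ^ 2 := by
    rw [Step.hv, ip_lift]; simp only [pow_two]
  have hpw := ip_UU_pow p hp.ne_zero S hS (hG.hv hN') j
  rw [hff, ← hn] at hpw
  have : ip (UU S 1 (hG.hv hN')) (hG.hv hN') ^ n ≤ (κ * ∫ x, G x ^ 2) ^ n := by
    refine hpw.trans ((mul_le_mul_of_nonneg_right key2 (pow_nonneg hE _)).trans (le_of_eq ?_))
    rw [mul_pow, mul_assoc, ← pow_succ', Nat.sub_add_cancel hn1]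
  exact le_of_pow_le_pow_left₀ (by omega) (by positivity) this

/-! ### Almost orthogonality of distant scales -/

theorem sq_split (p q r s : ℝ) :
    (p * r - q * s) ^ 2 ≤ 2 * ((p - q) ^ 2 * r ^ 2) + 2 * (q ^ 2 * (s - r) ^ 2) := by
  linarith [sq_nonneg ((p - q) * r + q * (s - r))]

set_option maxHeartbeats 2000000 in
/-- Almost orthogonality of distant scales: `H` is constant on cells of length `1 / N'`, `G` has zero
mean on the finer cells of length `1 / N`, and `σ` is near the identity. As `rho σ H` hardly varies on
most fine cells, its correlation with `G` is `O(√(N' / N))`. -/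
theorem off_diag {N' : ℕ} (hN' : 0 < N') {H : ℝ → ℝ} (hH : Step N' H) {M : ℕ} (hM : 0 < M)
    {G : ℝ → ℝ} (hG : Step M G) {N : ℕ} (hN : 0 < N) (hz : ZeroMean N G) (hNN : 2 * N' ≤ N)
    (σ : M2R) (hdet : σ.det = 1) (hσ : ∀ i j, |σ i j - (if i = j then 1 else 0)| ≤ 1 / 20) :
    ip (rho σ (hH.hv hN')) (hG.hv hM) ^ 2 ≤
      68 * (N' / N) * (∫ x, H x ^ 2) * ∫ x, G x ^ 2 := by
  have hNr : (1 : ℝ) ≤ N := by exact_mod_cast hN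
  have hN0 : (0 : ℝ) < N := by linarith
  have hN'r : (1 : ℝ) ≤ N' := by exact_mod_cast hN'
  have hNNr : 2 * (N' : ℝ) ≤ N := by exact_mod_cast hNN
  have hE : 0 ≤ ∫ x, H x ^ 2 := integral_nonneg fun _ => sq_nonneg _
  have hEG : 0 ≤ ∫ x, G x ^ 2 := integral_nonneg fun _ => sq_nonneg _
  obtain ⟨D, hDm, hD0, hDi, hD, hDv⟩ := hH.modulus hN' (2 / N) (by positivity)
    (by rw [← mul_div_assoc, div_le_one hN0]; linarith)
  obtain ⟨B, hB0, hB⟩ := hH.bdd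
  set a := σ 0 0
  set b := σ 0 1
  set c := σ 1 0
  set d := σ 1 1
  have e1 : |a - 1| ≤ 1 / 20 := by simpa using hσ 0 0
  have e2 : |b| ≤ 1 / 20 := by simpa using hσ 0 1
  have e3 : |c| ≤ 1 / 20 := by simpa using hσ 1 0
  have e4 : |d - 1| ≤ 1 / 20 := by simpa using hσ 1 1
  have hD1 : a * d - b * c = 1 := by rw [← hdet, Matrix.det_fin_two]
  have e3' := abs_le.mp e3
  have e4' := abs_le.mp e4
  set Φ : ℝ → ℝ := fun x => |c * x + d|⁻¹ * H ((a * x + b) / (c * x + d)) with hΦ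
  have hΦm : Measurable Φ := by
    have := hH.meas
    fun_prop
  set x0 : ℝ → ℝ := fun x => (⌊(N : ℝ) * x⌋ : ℝ) / N with hx0
  have hx0m : Measurable x0 := by
    refine Measurable.div_const ?_ _
    exact (measurable_from_top (f := fun k : ℤ => (k : ℝ))).comp
      (Int.measurable_floor.comp (measurable_const_mul _))
  have hv : ∀ x ∈ Set.Ico (0 : ℝ) 1, 9 / 10 ≤ c * x + d ∧ c * x + d ≤ 11 / 10 := by
    rintro x ⟨h0, h1⟩
    constructor <;> nlinarith
  have hx0I : ∀ x ∈ Set.Ico (0 : ℝ) 1, x0 x ∈ Set.Ico (0 : ℝ) 1 ∧ |x - x0 x| ≤ 1 / N := by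
    rintro x ⟨h0, h1⟩
    have f1 := Int.floor_le ((N : ℝ) * x)
    have f2 := Int.lt_floor_add_one ((N : ℝ) * x)
    have f3 : 0 ≤ ⌊(N : ℝ) * x⌋ := Int.floor_nonneg.mpr (by positivity)
    have f3' : (0 : ℝ) ≤ ⌊(N : ℝ) * x⌋ := by exact_mod_cast f3
    have f4 : x0 x ≤ x := by rw [hx0]; show _ / _ ≤ _; rw [div_le_iff₀ hN0]; linarith
    refine ⟨⟨div_nonneg f3' hN0.le, by linarith⟩, ?_⟩
    rw [abs_of_nonneg (by linarith), sub_le_iff_le_add, hx0]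
    show x ≤ 1 / N + _ / _
    rw [← add_div, le_div_iff₀ hN0]
    linarith
  set Ψ : ℝ → ℝ := (Set.Ico (0 : ℝ) 1).indicator fun x => Φ x - Φ (x0 x) with hΨ
  have hΨm : Measurable Ψ := (hΦm.sub (hΦm.comp hx0m)).indicator measurableSet_Ico
  have hΦb : ∀ x ∈ Set.Ico (0 : ℝ) 1, |Φ x| ≤ 2 * B := by
    intro x hx
    obtain ⟨v1, v2⟩ := hv x hx
    rw [hΦ]
    show |_ * _| ≤ _
    rw [abs_mul, abs_inv, abs_abs]
    have : |c * x + d|⁻¹ ≤ 2 := by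
      rw [abs_of_pos (by linarith)]
      exact inv_le_of_inv_le₀ (by norm_num) (by linarith)
    exact mul_le_mul this (hB _) (abs_nonneg _) (by norm_num)
  have hΨL : MemLp Ψ 2 volume := by
    refine (memLp_two_iff_integrable_sq hΨm.aestronglyMeasurable).mpr ?_
    refine integrable_bdd_supp _ _ (hΨm.pow_const 2).aestronglyMeasurable ((4 * B) ^ 2) (fun x => ?_)
      (Set.Ico (0 : ℝ) 1) (by simp) (fun x hx => by rw [hΨ]; simp [hx])
    rw [abs_pow]
    refine pow_le_pow_left₀ (abs_nonneg _) ?_ 2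
    by_cases hx : x ∈ Set.Ico (0 : ℝ) 1
    · rw [hΨ, Set.indicator_of_mem hx]
      have := hΦb x hx
      have := hΦb _ (hx0I x hx).1
      exact (abs_sub _ _).trans (by linarith)
    · rw [hΨ, Set.indicator_of_notMem hx, abs_zero]; positivity
  -- subtracting the value at the left end of the coarse cell does not change the integral
  have hip : ip (rho σ (hH.hv hN')) (hG.hv hM) = ∫ x, G x * Ψ x := by
    have s1 : ip (rho σ (hH.hv hN')) (hG.hv hM) =
        ∫ x, G x * (Set.Ico (0 : ℝ) 1).indicator Φ x := by
      rw [ip_def]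
      congr 1; ext x
      rw [rho_apply, Step.hv, Step.hv, lift_apply, lift_apply, hdet]
      simp only [abs_one, Real.sqrt_one, one_mul, mul_one, div_one, inv_one]
      rw [mul_comm]
      by_cases hx : x ∈ Set.Ico (0 : ℝ) 1
      · rw [Set.indicator_of_mem hx]
      · rw [hG.zero_off hM hx, zero_mul, zero_mul]
    have s2 : ∫ x, G x * (Set.Ico (0 : ℝ) 1).indicator (fun x => Φ (x0 x)) x = 0 := by
      refine Eq.trans ?_ (hz fun k => Φ ((k : ℝ) / N))
      congr 1; ext x
      by_cases hx : x ∈ Set.Ico (0 : ℝ) 1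
      · rw [Set.indicator_of_mem hx]
      · rw [hG.zero_off hM hx, zero_mul, zero_mul]
    refine (s1.trans (sub_zero _).symm).trans ((congrArg _ s2.symm).trans ?_)
    rw [← integral_sub]
    · congr 1; ext x
      rw [← mul_sub]
      by_cases hx : x ∈ Set.Ico (0 : ℝ) 1
      · rw [hΨ, Set.indicator_of_mem hx, Set.indicator_of_mem hx, Set.indicator_of_mem hx]
      · rw [hG.zero_off hM hx, zero_mul, zero_mul]
    · refine hG.integrable_mul hM _ (hΦm.indicator measurableSet_Ico) (2 * B) fun x => ?_
      by_cases hx : x ∈ Set.Ico (0 : ℝ) 1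
      · rw [Set.indicator_of_mem hx]; exact hΦb x hx
      · rw [Set.indicator_of_notMem hx, abs_zero]; positivity
    · refine hG.integrable_mul hM _ ((hΦm.comp hx0m).indicator measurableSet_Ico) (2 * B) fun x => ?_
      by_cases hx : x ∈ Set.Ico (0 : ℝ) 1
      · rw [Set.indicator_of_mem hx]; exact hΦb _ (hx0I x hx).1
      · rw [Set.indicator_of_notMem hx, abs_zero]; positivity
  set F : ℝ → ℝ := fun y => ((N : ℝ) ^ 2)⁻¹ * H y ^ 2 + D y with hF
  have hFi : Integrable F := ((hH.integrable_sq hN').const_mul _).add hDi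
  have hF0 : ∀ y, 0 ≤ F y := fun y => add_nonneg (by positivity) (hD0 y)
  have hFv : ∫ y, F y ≤ 17 * (N' / N) * ∫ x, H x ^ 2 := by
    rw [hF, integral_add ((hH.integrable_sq hN').const_mul _) hDi, integral_const_mul]
    have t1 : ((N : ℝ) ^ 2)⁻¹ ≤ N' / N := by
      rw [inv_eq_one_div, div_le_div_iff₀ (by positivity) hN0]
      nlinarith
    have t2 := mul_le_mul_of_nonneg_right t1 hE
    have t3 : 8 * ((N' : ℝ) * (2 / N)) * ∫ x, H x ^ 2 = 16 * (N' / N) * ∫ x, H x ^ 2 := by ring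
    rw [t3] at hDv
    linarith
  have hcv := cv_hom a b c d (by rw [hD1]; norm_num) (fun w => (w.2 ^ 2)⁻¹ * F (w.1 / w.2))
    (fun t ht u v => by
      show ((t * v) ^ 2)⁻¹ * F (t * u / (t * v)) = _
      rw [mul_div_mul_left _ _ ht, mul_pow, mul_inv, mul_assoc])
  simp only [one_pow, inv_one, one_mul, div_one, hD1, abs_one] at hcv
  have hpt : ∀ x, Ψ x ^ 2 ≤
      4 * (((c * x + d) ^ 2)⁻¹ * F ((a * x + b) / (c * x + d))) := by
    intro x
    have hr : 0 ≤ 4 * (((c * x + d) ^ 2)⁻¹ * F ((a * x + b) / (c * x + d))) :=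
      mul_nonneg (by norm_num) (mul_nonneg (by positivity) (hF0 _))
    by_cases hx : x ∈ Set.Ico (0 : ℝ) 1
    swap
    · rw [hΨ, Set.indicator_of_notMem hx]; simpa using hr
    rw [hΨ, Set.indicator_of_mem hx]
    obtain ⟨v1, v2⟩ := hv x hx
    obtain ⟨hy, hxy⟩ := hx0I x hx
    obtain ⟨w1, w2⟩ := hv _ hy
    generalize hyd : x0 x = y at hy hxy w1 w2
    rw [hΦ]
    show (|c * x + d|⁻¹ * H ((a * x + b) / (c * x + d)) -
      |c * y + d|⁻¹ * H ((a * y + b) / (c * y + d))) ^ 2 ≤ _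
    have hvw : |(c * x + d) - (c * y + d)| ≤ 1 / (20 * N) := by
      rw [show (c * x + d) - (c * y + d) = c * (x - y) by ring, abs_mul]
      calc |c| * |x - y| ≤ 1 / 20 * (1 / N) := mul_le_mul e3 hxy (abs_nonneg _) (by norm_num)
        _ = _ := by rw [div_mul_div_comm, one_mul]
    have hz : (a * y + b) / (c * y + d) - (a * x + b) / (c * x + d) =
        (y - x) / ((c * x + d) * (c * y + d)) := by
      rw [div_sub_div _ _ (by linarith) (by linarith)]
      rw [mul_comm (c * x + d)]
      congr 1
      linear_combination (y - x) * hD1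
    have hz2 : |(a * y + b) / (c * y + d) - (a * x + b) / (c * x + d)| ≤ 2 / N := by
      have hvv : 1 / 2 ≤ (c * x + d) * (c * y + d) := by nlinarith
      rw [hz, abs_div, abs_of_pos (by linarith : 0 < (c * x + d) * (c * y + d)),
        div_le_iff₀ (by linarith), abs_sub_comm]
      refine hxy.trans ?_
      rw [div_mul_eq_mul_div, div_le_div_iff_of_pos_right hN0]
      linarith
    have hDD := hD _ _ hz2
    rw [abs_of_pos (by linarith), abs_of_pos (by linarith)]
    set v := c * x + d
    set w := c * y + d
    set h1 := H ((a * x + b) / v)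
    set h2 := H ((a * y + b) / w)
    have hvwi : |v⁻¹ - w⁻¹| ≤ 1 / (10 * N) := by
      rw [inv_sub_inv (by linarith) (by linarith), abs_div, abs_of_pos (by nlinarith : 0 < v * w),
        div_le_iff₀ (by nlinarith), abs_sub_comm]
      refine hvw.trans ?_
      rw [div_mul_eq_mul_div, div_le_div_iff₀ (by positivity) (by positivity)]
      nlinarith [mul_le_mul v1 w1 (by norm_num) (by linarith)]
    have hvi2 : (v⁻¹ - w⁻¹) ^ 2 ≤ 1 / 100 * ((N : ℝ) ^ 2)⁻¹ := by
      rw [← sq_abs]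
      refine (pow_le_pow_left₀ (abs_nonneg _) hvwi 2).trans (le_of_eq ?_)
      field_simp; norm_num
    have hwi : w⁻¹ ^ 2 ≤ 5 / 4 := by
      rw [inv_pow]
      exact inv_le_of_inv_le₀ (by norm_num) (by nlinarith)
    have hvi : 25 / 31 ≤ (v ^ 2)⁻¹ := by
      rw [le_inv_comm₀ (by norm_num) (by nlinarith)]
      nlinarith
    have hDx := hD0 ((a * x + b) / v)
    have hNi : 0 ≤ ((N : ℝ) ^ 2)⁻¹ := by positivity
    have s1 : (v⁻¹ * h1 - w⁻¹ * h2) ^ 2 ≤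
        2 * ((v⁻¹ - w⁻¹) ^ 2 * h1 ^ 2) + 2 * (w⁻¹ ^ 2 * (h2 - h1) ^ 2) := sq_split _ _ _ _
    have s2 : (v⁻¹ - w⁻¹) ^ 2 * h1 ^ 2 ≤ 1 / 100 * ((N : ℝ) ^ 2)⁻¹ * h1 ^ 2 :=
      mul_le_mul_of_nonneg_right hvi2 (sq_nonneg _)
    have s3 : w⁻¹ ^ 2 * (h2 - h1) ^ 2 ≤ 5 / 4 * D ((a * x + b) / v) :=
      mul_le_mul hwi hDD (sq_nonneg _) (by norm_num)
    have s4 : 25 / 31 * F ((a * x + b) / v) ≤ (v ^ 2)⁻¹ * F ((a * x + b) / v) :=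
      mul_le_mul_of_nonneg_right hvi (hF0 _)
    have s5 : F ((a * x + b) / v) = ((N : ℝ) ^ 2)⁻¹ * h1 ^ 2 + D ((a * x + b) / v) := rfl
    have s6 : 0 ≤ ((N : ℝ) ^ 2)⁻¹ * h1 ^ 2 := by positivity
    linarith
  rw [hip]
  refine (integral_cs volume G Ψ (hG.memLp hM) hΨL).trans ?_
  have hΨv : ∫ x, Ψ x ^ 2 ≤ 68 * (N' / N) * ∫ x, H x ^ 2 := by
    refine (integral_mono hΨL.integrable_sq ((hcv.1 hFi).const_mul 4) hpt).trans ?_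
    rw [integral_const_mul, hcv.2]
    linarith
  rw [mul_comm]
  exact mul_le_mul_of_nonneg_right hΨv hEG

theorem hv_ip {N : ℕ} (hN : 0 < N) {G : ℝ → ℝ} (hG : Step N G) {M : ℕ} (hM : 0 < M) {H : ℝ → ℝ}
    (hH : Step M H) : ip (hG.hv hN) (hH.hv hM) = ∫ x, G x * H x := by
  rw [Step.hv, Step.hv, ip_lift]

theorem hv_ip_self {N : ℕ} (hN : 0 < N) {G : ℝ → ℝ} (hG : Step N G) :
    ip (hG.hv hN) (hG.hv hN) = ∫ x, G x ^ 2 := by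
  rw [hv_ip]; simp only [pow_two]

/-- Cauchy–Schwarz for the positive semidefinite form of `UU S 1`. -/
theorem UU_cs (p : ℕ) (hp : p ≠ 0) (S : Finset M2Z) (hS : SepSet p S) (f h : HV) :
    |ip (UU S 1 f) h| ≤ √(ip (UU S 1 f) f) * √(ip (UU S 1 h) h) := by
  rw [ip_UU_one p hp S hS, ip_UU_one p hp S hS, ip_UU_one p hp S hS]
  exact ip_abs_le _ _

theorem UU_abs_le (S : Finset M2Z) (hS0 : 0 < S.card) (f h : HV) (B : ℝ)
    (hB : ∀ s ∈ S, ∀ s' ∈ S, |ip (rho (toR (s * s'.adjugate)) f) h| ≤ B) :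
    |ip (UU S 1 f) h| ≤ B := by
  have hc : (0 : ℝ) < (S.card : ℝ) ^ 2 := by positivity
  rw [ip_UU_left, pow_one, abs_mul, abs_of_pos (by positivity), inv_mul_le_iff₀ hc, pw_one,
    Multiset.map_map]
  have := Finset.abs_sum_le_sum_abs
    (fun z : M2Z × M2Z => ip (rho (toR (z.1 * z.2.adjugate)) f) h) (S ×ˢ S)
  refine this.trans ((Finset.sum_le_card_nsmul _ _ B fun z hz => ?_).trans (le_of_eq ?_))
  · rw [Finset.mem_product] at hz
    exact hB _ hz.1 _ hz.2
  · rw [Finset.card_product, nsmul_eq_mul]; push_cast; ring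

/-- The normalisation to determinant one of a product `s * adj s'`. -/
noncomputable def sg (p : ℕ) (s s' : M2Z) : M2R := (p : ℝ)⁻¹ • toR (s * s'.adjugate)

theorem rho_sg (p : ℕ) (hp : p ≠ 0) (s s' : M2Z) : rho (sg p s s') = rho (toR (s * s'.adjugate)) :=
  rho_smul _ (by positivity) _

theorem sg_det (p : ℕ) (hp : p ≠ 0) (S : Finset M2Z) (hS : SepSet p S) {s s' : M2Z} (hs : s ∈ S)
    (hs' : s' ∈ S) : (sg p s s').det = 1 := by
  rw [sg, Matrix.det_smul, det_toR, Matrix.det_mul, Matrix.det_adjugate, hS.det s hs, hS.det s' hs']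
  simp only [Fintype.card_fin]
  have : (p : ℝ) ≠ 0 := by exact_mod_cast hp
  push_cast
  field_simp

theorem sg_near (p : ℕ) (hp : p ≠ 0) (S : Finset M2Z) (M : ℕ) (hM : 0 < M)
    (hcl : ∀ s ∈ S, ∀ s' ∈ S, ∀ i j,
      |(s * s'.adjugate) i j - (if i = j then (p : ℤ) else 0)| * M ≤ 66 * p)
    {s s' : M2Z} (hs : s ∈ S) (hs' : s' ∈ S) (i j : Fin 2) :
    |sg p s s' i j - (if i = j then 1 else 0)| ≤ 66 / M := by
  have h := hcl s hs s' hs' i j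
  have hpr : (0 : ℝ) < p := by positivity
  have h' : |(((s * s'.adjugate) i j : ℤ) : ℝ) - (if i = j then (p : ℝ) else 0)| * M ≤ 66 * p := by
    have : ((|(s * s'.adjugate) i j - (if i = j then (p : ℤ) else 0)| * M : ℤ) : ℝ) ≤
      ((66 * p : ℤ) : ℝ) := by exact_mod_cast h
    push_cast at this
    exact this
  have e : sg p s s' i j - (if i = j then 1 else 0) =
      (p : ℝ)⁻¹ * ((((s * s'.adjugate) i j : ℤ) : ℝ) - (if i = j then (p : ℝ) else 0)) := by
    show (p : ℝ)⁻¹ * (((s * s'.adjugate) i j : ℤ) : ℝ) - _ = _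
    rw [mul_sub, mul_ite, inv_mul_cancel₀ hpr.ne', mul_zero]
  rw [e, abs_mul, abs_of_pos (by positivity), inv_mul_le_iff₀ hpr, mul_div_assoc',
    le_div_iff₀ (by positivity), mul_comm (p : ℝ)]
  have key := h'
  exact key

/-- The average of `off_diag` over the quotients of `S`. -/
theorem UU_off (p : ℕ) (hp : p ≠ 0) (S : Finset M2Z) (hS : SepSet p S) (hS0 : 0 < S.card)
    (hcl : ∀ s ∈ S, ∀ s' ∈ S, ∀ i j, |sg p s s' i j - (if i = j then 1 else 0)| ≤ 1 / 20)
    {N' : ℕ} (hN' : 0 < N') {H : ℝ → ℝ} (hH : Step N' H) {M : ℕ} (hM : 0 < M)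
    {G : ℝ → ℝ} (hG : Step M G) {N : ℕ} (hN : 0 < N) (hz : ZeroMean N G) (hNN : 2 * N' ≤ N) :
    |ip (UU S 1 (hH.hv hN')) (hG.hv hM)| ≤
      √(68 * (N' / N)) * (√(∫ x, H x ^ 2) * √(∫ x, G x ^ 2)) := by
  refine UU_abs_le S hS0 _ _ _ fun s hs s' hs' => ?_
  rw [← rho_sg p hp]
  have h := off_diag hN' hH hM hG hN hz hNN _ (sg_det p hp S hS hs hs') (hcl s hs s' hs')
  have hE : 0 ≤ ∫ x, H x ^ 2 := integral_nonneg fun _ => sq_nonneg _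
  rw [← Real.sqrt_mul hE, ← Real.sqrt_mul (by positivity), ← mul_assoc]
  exact Real.abs_le_sqrt h

/-! ### Conditional averages -/

/-- The average of `F` over the cell of length `1/N` containing the given point. -/
noncomputable def cE (N : ℕ) (F : ℝ → ℝ) (x : ℝ) : ℝ :=
  N * ∫ y in Set.Ico ((⌊(N : ℝ) * x⌋ : ℝ) / N) ((⌊(N : ℝ) * x⌋ + 1) / N), F y

theorem cE_step {N : ℕ} (hN : 0 < N) {M : ℕ} (hM : 0 < M) {F : ℝ → ℝ} (hF : Step M F) :
    Step N (cE N F) := by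
  refine ⟨fun k => N * ∫ y in Set.Ico ((k : ℝ) / N) ((k + 1) / N), F y, fun x => rfl, fun k hk => ?_⟩
  have hNr : (0 : ℝ) < N := by exact_mod_cast hN
  show (N : ℝ) * _ = 0
  rw [setIntegral_eq_zero_of_forall_eq_zero, mul_zero]
  intro x hx
  refine hF.zero_off hM fun h01 => hk ?_
  have := (floor_cell N hN x k).mpr hx
  rw [← this, Finset.mem_Ico, Int.floor_nonneg, Int.floor_lt]
  push_cast
  exact ⟨mul_nonneg hNr.le h01.1, by nlinarith [h01.2]⟩

/-- The difference of `F` and its cell averages has zero mean on the cells. -/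
theorem cE_zeroMean {N : ℕ} (hN : 0 < N) {M : ℕ} (hM : 0 < M) {F : ℝ → ℝ} (hF : Step M F) :
    ZeroMean N (fun x => F x - cE N F x) := by
  intro ψ
  have hNr : (0 : ℝ) < N := by exact_mod_cast hN
  classical
  set s : Finset ℤ := Finset.Ico (0 : ℤ) N
  set φ : ℤ → ℝ := fun k => if k ∈ s then ψ k else 0 with hφ
  have hφ0 : ∀ k, k ∉ s → φ k = 0 := fun k hk => if_neg hk
  have c1 := cell_integral N hN s φ hφ0 F fun k _ => (hF.integrable hM).integrableOn
  have c2 := cell_integral N hN s φ hφ0 (cE N F) fun k _ =>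
    ((cE_step hN hM hF).integrable hN).integrableOn
  have e : ∀ x, (F x - cE N F x) * ψ ⌊(N : ℝ) * x⌋ =
      φ ⌊(N : ℝ) * x⌋ * F x - φ ⌊(N : ℝ) * x⌋ * cE N F x := by
    intro x
    by_cases hx : ⌊(N : ℝ) * x⌋ ∈ s
    · rw [hφ]; simp only [hx, if_true]; ring
    · have : x ∉ Set.Ico (0 : ℝ) 1 := fun h01 => hx (by
        rw [Finset.mem_Ico, Int.floor_nonneg, Int.floor_lt]
        push_cast
        exact ⟨mul_nonneg hNr.le h01.1, by nlinarith [h01.2]⟩)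
      rw [hF.zero_off hM this, (cE_step hN hM hF).zero_off hN this]; ring
  simp only [e]
  rw [integral_sub c1.1 c2.1, c1.2, c2.2, ← Finset.sum_sub_distrib]
  refine Finset.sum_eq_zero fun k hk => ?_
  rw [← mul_sub]
  have : ∫ x in Set.Ico ((k : ℝ) / N) ((k + 1) / N), cE N F x =
      ∫ x in Set.Ico ((k : ℝ) / N) ((k + 1) / N), F x := by
    have h1 : ∫ x in Set.Ico ((k : ℝ) / N) ((k + 1) / N), cE N F x =
        ∫ x in Set.Ico ((k : ℝ) / N) ((k + 1) / N),
          (N * ∫ y in Set.Ico ((k : ℝ) / N) ((k + 1) / N), F y) * 1 := by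
      refine setIntegral_congr_fun measurableSet_Ico fun x hx => ?_
      have := (floor_cell N hN x k).mpr hx
      simp only [cE, this, mul_one]
    rw [h1, integral_const_mul, cell_vol N hN]
    field_simp
  rw [this, sub_self, mul_zero]

theorem cE_self {N : ℕ} (hN : 0 < N) {F : ℝ → ℝ} (hF : Step N F) : cE N F = F := by
  have hNr : (0 : ℝ) < N := by exact_mod_cast hN
  ext x
  obtain ⟨g, hg, h0⟩ := hF
  have h1 : ∫ y in Set.Ico ((⌊(N : ℝ) * x⌋ : ℝ) / N) ((⌊(N : ℝ) * x⌋ + 1) / N), F y =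
      ∫ y in Set.Ico ((⌊(N : ℝ) * x⌋ : ℝ) / N) ((⌊(N : ℝ) * x⌋ + 1) / N), g ⌊(N : ℝ) * x⌋ * 1 := by
    refine setIntegral_congr_fun measurableSet_Ico fun y hy => ?_
    rw [hg, (floor_cell N hN y _).mpr hy, mul_one]
  rw [cE, h1, integral_const_mul, cell_vol N hN, hg]
  field_simp

theorem floor_mul_coarse (N q : ℕ) (hq : 0 < q) (x : ℝ) :
    ⌊(N : ℝ) * x⌋ = ⌊((N * q : ℕ) : ℝ) * x⌋ / q := by
  have hqr : (0 : ℝ) < q := by exact_mod_cast hq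
  rw [← Int.floor_div_natCast]
  congr 1
  push_cast
  field_simp

theorem Step.refine {N : ℕ} {G : ℝ → ℝ} (hG : Step N G) {q : ℕ} (hq : 0 < q) : Step (N * q) G := by
  obtain ⟨g, hg, h0⟩ := hG
  have hqz : (0 : ℤ) < q := by exact_mod_cast hq
  refine ⟨fun k => g (k / q), fun x => by rw [hg, floor_mul_coarse N q hq], fun k hk => h0 _ fun h => hk ?_⟩
  rw [Finset.mem_Ico] at h ⊢
  push_cast
  refine ⟨?_, ?_⟩
  · by_contra! hneg
    exact absurd (Int.ediv_neg_of_neg_of_pos hneg hqz) (by omega)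
  · exact (Int.ediv_lt_iff_lt_mul hqz).mp h.2

theorem ZeroMean.coarsen {N q : ℕ} (hq : 0 < q) {G : ℝ → ℝ} (hG : ZeroMean (N * q) G) :
    ZeroMean N G := by
  intro ψ
  have := hG fun k => ψ (k / q)
  simpa only [floor_mul_coarse N q hq] using this

theorem Step.sub {N : ℕ} {G H : ℝ → ℝ} (hG : Step N G) (hH : Step N H) :
    Step N (fun x => G x - H x) := by
  obtain ⟨g, hg, h0⟩ := hG
  obtain ⟨h, hh, h0'⟩ := hH
  exact ⟨fun k => g k - h k, fun x => by simp only [hg, hh], fun k hk => by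
    show g k - h k = 0
    rw [h0 k hk, h0' k hk, sub_zero]⟩

/-! ### The spectral gap -/

/-- Row sums of the matrix `(1 / 2) ^ |l - j|`, strengthened for induction. -/
theorem geom_row (t l : ℕ) : (t ≤ l → ∑ j ∈ Finset.range t, (1 / 2 : ℝ) ^ ((l - j) + (j - l)) ≤
      2 * (1 / 2) ^ (l + 1 - t)) ∧
    (l < t → ∑ j ∈ Finset.range t, (1 / 2 : ℝ) ^ ((l - j) + (j - l)) ≤
      4 - 2 * (1 / 2) ^ (t - 1 - l)) := by
  induction t with
  | zero => exact ⟨fun _ => by simp, fun h => absurd h (by omega)⟩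
  | succ t ih =>
    rw [Finset.sum_range_succ]
    constructor
    · intro h
      obtain ⟨k, rfl⟩ := Nat.exists_eq_add_of_le h
      have := ih.1 (by omega)
      rw [show t + 1 + k + 1 - t = k + 2 by omega] at this
      rw [show t + 1 + k - t + (t - (t + 1 + k)) = k + 1 by omega,
        show t + 1 + k + 1 - (t + 1) = k + 1 by omega]
      have e : (1 / 2 : ℝ) ^ (k + 2) = 1 / 2 * (1 / 2) ^ (k + 1) := by ring
      linarith
    · intro h
      rcases Nat.lt_succ_iff_lt_or_eq.mp h with h1 | h1
      · obtain ⟨k, rfl⟩ := Nat.exists_eq_add_of_lt h1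
        have := ih.2 h1
        rw [show l + k + 1 - 1 - l = k by omega] at this
        rw [show l - (l + k + 1) + (l + k + 1 - l) = k + 1 by omega,
          show l + k + 1 + 1 - 1 - l = k + 1 by omega]
        have e : (1 / 2 : ℝ) ^ (k + 1) = 1 / 2 * (1 / 2) ^ k := by ring
        have : (0 : ℝ) ≤ (1 / 2) ^ k := by positivity
        linarith
      · subst h1
        have := ih.1 le_rfl
        simp at this ⊢
        linarith

theorem geom_row_le (t l : ℕ) (hl : l < t) :
    ∑ j ∈ Finset.range t, (1 / 2 : ℝ) ^ ((l - j) + (j - l)) ≤ 4 := by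
  have := (geom_row t l).2 hl
  have : (0 : ℝ) ≤ (1 / 2) ^ (t - 1 - l) := by positivity
  linarith

/-- Schur's test for a matrix decaying geometrically away from the diagonal. -/
theorem schur (t : ℕ) (a : ℕ → ℕ → ℝ) (x : ℕ → ℝ) (κ : ℝ) (hκ : 0 ≤ κ)
    (h : ∀ l < t, ∀ j < t, a l j ≤ κ * (1 / 2) ^ ((l - j) + (j - l)) * (x l * x j)) :
    ∑ l ∈ Finset.range t, ∑ j ∈ Finset.range t, a l j ≤
      4 * κ * ∑ l ∈ Finset.range t, x l ^ 2 := by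
  set w : ℕ → ℕ → ℝ := fun l j => (1 / 2 : ℝ) ^ ((l - j) + (j - l)) with hw
  have hw0 : ∀ l j, 0 ≤ w l j := fun l j => by rw [hw]; positivity
  have hws : ∀ l j, w l j = w j l := fun l j => by simp only [hw]; rw [add_comm]
  have h1 : ∀ l ∈ Finset.range t, ∀ j ∈ Finset.range t,
      a l j ≤ κ / 2 * (w l j * x l ^ 2) + κ / 2 * (w j l * x j ^ 2) := by
    intro l hl j hj
    refine (h l (Finset.mem_range.mp hl) j (Finset.mem_range.mp hj)).trans ?_
    rw [← hws l j]
    show κ * w l j * _ ≤ _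
    have := mul_nonneg (mul_nonneg hκ (hw0 l j)) (sq_nonneg (x l - x j))
    linarith
  refine (Finset.sum_le_sum fun l hl => Finset.sum_le_sum fun j hj => h1 l hl j hj).trans ?_
  simp only [Finset.sum_add_distrib]
  rw [Finset.sum_comm (f := fun l j => κ / 2 * (w j l * x j ^ 2))]
  have h2 : ∑ l ∈ Finset.range t, ∑ j ∈ Finset.range t, κ / 2 * (w l j * x l ^ 2) ≤
      ∑ l ∈ Finset.range t, 2 * κ * x l ^ 2 := by
    refine Finset.sum_le_sum fun l hl => ?_
    rw [← Finset.mul_sum, ← Finset.sum_mul]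
    have := mul_le_mul_of_nonneg_right (geom_row_le t l (Finset.mem_range.mp hl)) (sq_nonneg (x l))
    have := mul_le_mul_of_nonneg_left this hκ
    linarith
  rw [← Finset.mul_sum] at h2
  linarith

set_option maxHeartbeats 800000 in
/-- For a suitable set of integer matrices, the quadratic form of the averaging operator is at most
`κ ‖F‖²` for every step function `F` of mesh `1 / (K b ^ t)` with zero mean on the `K` coarse cells,
uniformly in `t`. -/
theorem gap (κ : ℝ) (hκ : 0 < κ) (Mc : ℕ) (hMc : 1320 ≤ Mc) :
    ∃ (p : ℕ) (S : Finset M2Z) (b K0 : ℕ), p ≠ 0 ∧ SepSet p S ∧ 0 < S.card ∧ 2 ≤ b ∧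
      (∀ s ∈ S, ∀ s' ∈ S, ∀ i j, |sg p s s' i j - (if i = j then 1 else 0)| ≤ 66 / Mc) ∧
      ∀ K, K0 ≤ K → ∀ t : ℕ, ∀ hN : 0 < K * b ^ t, ∀ (F : ℝ → ℝ) (hF : Step (K * b ^ t) F),
        ZeroMean K F → ip (UU S 1 (hF.hv hN)) (hF.hv hN) ≤ κ * ∫ x, F x ^ 2 := by
  set κ' := κ / 4 with hκ'
  have hκ0 : 0 < κ' := by positivity
  obtain ⟨c0, hc0, hc1, hset⟩ := exists_good_set Mc (by omega)
  obtain ⟨b, hb⟩ := exists_nat_ge (1088 / κ' ^ 2 + 4)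
  have hb1 : (0 : ℝ) ≤ 1088 / κ' ^ 2 := by positivity
  have hb4 : (4 : ℝ) ≤ b := by linarith
  have hb4' : 4 ≤ b := by exact_mod_cast hb4
  have hbκ : 1088 ≤ κ' ^ 2 * b := by
    rw [← div_le_iff₀' (by positivity)]; linarith
  obtain ⟨p0, hmix⟩ := mixing c0 (κ' / 2) b hc0 hc1 (by positivity) (by linarith)
  obtain ⟨p, hpp, hp⟩ := Nat.exists_infinite_primes (max p0 (Mc ^ 2))
  obtain ⟨S, hS, hk, hcl⟩ := hset p hp ((le_max_right _ _).trans hpp)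
  have hpr : (0 : ℝ) < p := by exact_mod_cast hp.pos
  obtain ⟨N0, hN0⟩ := hmix p hp ((le_max_left _ _).trans hpp) S hS hk
    (fun s hs s' hs' i j => le_trans (mul_le_mul_of_nonneg_left (by exact_mod_cast (by omega))
      (abs_nonneg _)) (hcl s hs s' hs' i j))
  have hS0 : 0 < S.card := by
    have : (0 : ℝ) < S.card := lt_of_lt_of_le (by positivity) hk
    exact_mod_cast this
  have hnear : ∀ s ∈ S, ∀ s' ∈ S, ∀ i j, |sg p s s' i j - (if i = j then 1 else 0)| ≤ 66 / Mc :=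
    fun s hs s' hs' i j => sg_near p hp.ne_zero S Mc (by omega) hcl hs hs' i j
  refine ⟨p, S, b, N0, hp.ne_zero, hS, hS0, by omega, hnear, fun K hK t hN F hF hz => ?_⟩
  have hMr : (1320 : ℝ) ≤ Mc := by exact_mod_cast hMc
  have hnear' : ∀ s ∈ S, ∀ s' ∈ S, ∀ i j, |sg p s s' i j - (if i = j then 1 else 0)| ≤ 1 / 20 :=
    fun s hs s' hs' i j => (hnear s hs s' hs' i j).trans (by
      rw [div_le_div_iff₀ (by linarith) (by norm_num)]; linarith)
  have hK0 : 0 < K := Nat.pos_of_mul_pos_right hN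
  have hb0 : 0 < b := by omega
  have hNl : ∀ l, 0 < K * b ^ l := fun l => by positivity
  -- the martingale of conditional averages and its differences
  set Fl : ℕ → ℝ → ℝ := fun l => cE (K * b ^ l) F with hFl
  have hFs : ∀ l, Step (K * b ^ l) (Fl l) := fun l => cE_step (hNl l) hN hF
  have href : ∀ l m, l ≤ m → ∀ {G : ℝ → ℝ}, Step (K * b ^ l) G → Step (K * b ^ m) G := by
    intro l m hlm G hG
    have := hG.refine (q := b ^ (m - l)) (by positivity)
    rwa [mul_assoc, ← pow_add, Nat.add_sub_cancel' hlm] at this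
  have hcoarse : ∀ l m, l ≤ m → ∀ {G : ℝ → ℝ}, ZeroMean (K * b ^ m) G → ZeroMean (K * b ^ l) G := by
    intro l m hlm G hG
    refine ZeroMean.coarsen (q := b ^ (m - l)) (by positivity) ?_
    rwa [mul_assoc, ← pow_add, Nat.add_sub_cancel' hlm]
  set g : ℕ → ℝ → ℝ := fun l x => Fl (l + 1) x - Fl l x with hg
  have hgs : ∀ l, Step (K * b ^ (l + 1)) (g l) := fun l =>
    (hFs (l + 1)).sub (href l (l + 1) (by omega) (hFs l))
  have hgz : ∀ l, ZeroMean (K * b ^ l) (g l) := by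
    intro l ψ
    have z1 := cE_zeroMean (hNl l) hN hF ψ
    have z2 := hcoarse l (l + 1) (by omega) (cE_zeroMean (hNl (l + 1)) hN hF) ψ
    have hi : ∀ {m} (G : ℝ → ℝ), 0 < m → Step m G →
        Integrable fun x => G x * ψ ⌊((K * b ^ l : ℕ) : ℝ) * x⌋ := by
      intro m G hm hG
      set s : Finset ℤ := Finset.Ico (0 : ℤ) (K * b ^ l : ℕ)
      classical
      have c1 := (cell_integral (K * b ^ l) (hNl l) s (fun k => if k ∈ s then ψ k else 0)
        (fun k hk => if_neg hk) G fun k _ => (hG.integrable hm).integrableOn).1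
      refine c1.congr (Filter.Eventually.of_forall fun x => ?_)
      show (if _ then _ else (0 : ℝ)) * _ = _
      by_cases hx : ⌊((K * b ^ l : ℕ) : ℝ) * x⌋ ∈ s
      · rw [if_pos hx, mul_comm]
      · have hNr : (0 : ℝ) < ((K * b ^ l : ℕ) : ℝ) := by exact_mod_cast hNl l
        rw [if_neg hx, zero_mul]
        show (0 : ℝ) = G x * _
        rw [hG.zero_off hm fun h01 => hx (by
          rw [Finset.mem_Ico, Int.floor_nonneg, Int.floor_lt]
          refine ⟨mul_nonneg hNr.le h01.1, ?_⟩
          rw [Int.cast_natCast]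
          nlinarith [h01.2]), zero_mul]
    simp only [sub_mul] at z1 z2
    rw [integral_sub (hi _ hN hF) (hi _ (hNl l) (hFs l))] at z1
    rw [integral_sub (hi _ hN hF) (hi _ (hNl (l + 1)) (hFs (l + 1)))] at z2
    simp only [hg, sub_mul]
    rw [integral_sub (hi _ (hNl (l + 1)) (hFs (l + 1))) (hi _ (hNl l) (hFs l))]
    linarith
  set u : ℕ → HV := fun l => (hgs l).hv (hNl (l + 1)) with hu
  set v : ℕ → HV := fun l => (hFs l).hv (hNl l) with hv
  have huv : ∀ l, u l = v (l + 1) - v l := by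
    intro l
    apply Subtype.ext
    funext w
    show (u l).1 w = (v (l + 1)).1 w - (v l).1 w
    rw [hu, hv]
    simp only [Step.hv, lift_apply, hg]
    ring
  have hv0 : v 0 = 0 := by
    apply Subtype.ext
    funext w
    show (v 0).1 w = 0
    rw [hv]
    simp only [Step.hv, lift_apply]
    have : Fl 0 (w.1 / w.2) = 0 := by
      simp only [hFl, pow_zero, mul_one, cE]
      have := hz fun k => if k = ⌊(K : ℝ) * (w.1 / w.2)⌋ then 1 else 0
      rw [← integral_indicator measurableSet_Ico]
      refine mul_eq_zero_of_right _ (Eq.trans ?_ this)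
      congr 1; ext x
      by_cases hx : ⌊(K : ℝ) * x⌋ = ⌊(K : ℝ) * (w.1 / w.2)⌋
      · rw [Set.indicator_of_mem ((floor_cell K hK0 x _).mp hx), if_pos hx, mul_one]
      · rw [Set.indicator_of_notMem fun h => hx ((floor_cell K hK0 x _).mpr h), if_neg hx, mul_zero]
    rw [this, mul_zero]
  have hvt : v t = hF.hv hN := by
    apply Subtype.ext
    funext w
    rw [hv]
    simp only [Step.hv, lift_apply, hFl]
    rw [cE_self hN hF]
  have hsum : hF.hv hN = ∑ l ∈ Finset.range t, u l := by
    simp only [huv]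
    rw [Finset.sum_range_sub, hv0, sub_zero, hvt]
  have horth' : ∀ l m, l < m → ip (u l) (u m) = 0 := by
    intro l m hlm
    rw [hu]
    simp only
    rw [hv_ip]
    obtain ⟨φ, hφ, -⟩ := href (l + 1) m hlm (hgs l)
    rw [← hgz m φ]
    congr 1; ext x
    rw [hφ, mul_comm]
  have horth : ∀ l m, l ≠ m → ip (u l) (u m) = 0 := by
    intro l m hlm
    rcases lt_or_gt_of_ne hlm with h | h
    · exact horth' l m h
    · rw [ip_comm]; exact horth' m l h
  have hnorm : ∫ x, F x ^ 2 = ∑ l ∈ Finset.range t, √(ip (u l) (u l)) ^ 2 := by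
    rw [← hv_ip_self hN hF, hsum, map_sum ip, LinearMap.sum_apply]
    refine Finset.sum_congr rfl fun l hl => ?_
    rw [map_sum, Finset.sum_eq_single_of_mem l hl, Real.sq_sqrt (ip_nonneg _)]
    intro m _ hm
    exact horth _ _ hm.symm
  have hdiag : ∀ l, ip (UU S 1 (u l)) (u l) ≤ κ' / 2 * ip (u l) (u l) := by
    intro l
    rw [hu]
    simp only
    rw [hv_ip_self]
    refine hN0 (K * b ^ l) ?_ _ (hNl (l + 1)) ?_ _ (hgs l) (hgz l)
    · exact hK.trans (Nat.le_mul_of_pos_right _ (by positivity))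
    · push_cast
      rw [pow_succ]
      exact le_of_eq (by ring)
  have hcs : ∀ l m, ip (UU S 1 (u l)) (u m) ≤ κ' / 2 * (√(ip (u l) (u l)) * √(ip (u m) (u m))) := by
    intro l m
    refine (le_abs_self _).trans ((UU_cs p hp.ne_zero S hS _ _).trans ?_)
    have s1 := Real.sqrt_le_sqrt (hdiag l)
    have s2 := Real.sqrt_le_sqrt (hdiag m)
    rw [Real.sqrt_mul (by positivity)] at s1 s2
    refine (mul_le_mul s1 s2 (Real.sqrt_nonneg _) (by positivity)).trans (le_of_eq ?_)
    rw [mul_mul_mul_comm, Real.mul_self_sqrt (by positivity)]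
  have hoff : ∀ l d, ip (UU S 1 (u l)) (u (l + d + 2)) ≤
      κ' * (1 / 2) ^ (d + 2) * (√(ip (u l) (u l)) * √(ip (u (l + d + 2)) (u (l + d + 2)))) := by
    intro l d
    have hq : K * b ^ (l + d + 2) = K * b ^ (l + 1) * b ^ (d + 1) := by
      rw [mul_assoc, ← pow_add]; congr 2; omega
    have hN2 : 2 * (K * b ^ (l + 1)) ≤ K * b ^ (l + d + 2) := by
      rw [hq, mul_comm 2]
      refine Nat.mul_le_mul_left _ ?_
      calc 2 ≤ b ^ 1 := by rw [pow_one]; omega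
        _ ≤ b ^ (d + 1) := Nat.pow_le_pow_right hb0 (by omega)
    have key := UU_off p hp.ne_zero S hS hS0 hnear' (hNl (l + 1)) (hgs l) (hNl (l + d + 2 + 1))
      (hgs (l + d + 2)) (hNl (l + d + 2)) (hgz (l + d + 2)) hN2
    rw [← hv_ip_self (hNl (l + 1)) (hgs l), ← hv_ip_self (hNl (l + d + 2 + 1)) (hgs (l + d + 2))] at key
    refine (le_abs_self _).trans (key.trans (mul_le_mul_of_nonneg_right ?_ (by positivity)))
    refine Real.sqrt_le_iff.mpr ⟨by positivity, ?_⟩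
    have hKb : (0 : ℝ) < ((K * b ^ (l + 1) : ℕ) : ℝ) := by exact_mod_cast hNl (l + 1)
    have hbr : (0 : ℝ) < b := by linarith
    rw [hq, Nat.cast_mul (K * b ^ (l + 1)) (b ^ (d + 1)), div_mul_eq_div_div, div_self hKb.ne',
      mul_one_div, div_le_iff₀ (by positivity)]
    have e : (κ' * (1 / 2) ^ (d + 2)) ^ 2 * ((b ^ (d + 1) : ℕ) : ℝ) =
        (κ' ^ 2 * b) / 16 * (b / 4) ^ d := by
      push_cast
      have e2 : (1 / 2 : ℝ) ^ ((d + 2) * 2) = 1 / 16 * (1 / 4) ^ d := by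
        rw [show (d + 2) * 2 = 4 + 2 * d by ring, pow_add, pow_mul]; norm_num
      rw [mul_pow, ← pow_mul, e2, pow_succ (b : ℝ), show (b : ℝ) / 4 = b * (1 / 4) by ring, mul_pow]
      ring
    rw [e]
    have : 1 ≤ ((b : ℝ) / 4) ^ d := one_le_pow₀ (by linarith)
    nlinarith
  have hterm : ∀ l m, l ≤ m → ip (UU S 1 (u l)) (u m) ≤
      κ' * (1 / 2) ^ ((l - m) + (m - l)) * (√(ip (u l) (u l)) * √(ip (u m) (u m))) := by
    intro l m hlm
    obtain ⟨d, rfl⟩ := Nat.exists_eq_add_of_le hlm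
    rw [show l - (l + d) + (l + d - l) = d by omega]
    rcases d with _ | _ | d
    · refine (hcs _ _).trans (mul_le_mul_of_nonneg_right ?_ (by positivity))
      norm_num; linarith
    · refine (hcs _ _).trans (mul_le_mul_of_nonneg_right ?_ (by positivity))
      norm_num; linarith
    · exact hoff l d
  have hterm' : ∀ l < t, ∀ m < t, ip (UU S 1 (u l)) (u m) ≤
      κ' * (1 / 2) ^ ((l - m) + (m - l)) * (√(ip (u l) (u l)) * √(ip (u m) (u m))) := by
    intro l _ m _
    rcases le_total l m with h | h
    · exact hterm l m h
    · rw [ip_UU_symm p hp.ne_zero S hS, ip_comm, add_comm (l - m), mul_comm (√(ip (u l) (u l)))]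
      exact hterm m l h
  have hs := schur t (fun l m => ip (UU S 1 (u l)) (u m)) (fun l => √(ip (u l) (u l))) κ' hκ0.le hterm'
  rw [hnorm]
  refine le_trans (le_of_eq ?_) (hs.trans (le_of_eq (by rw [hκ']; ring)))
  rw [hsum, map_sum (UU S 1), map_sum ip, LinearMap.sum_apply]
  refine Finset.sum_congr rfl fun l _ => ?_
  rw [map_sum]

/-! ### Möbius maps and blocks -/

/-- The Möbius transformation of a matrix. -/
noncomputable def mob (g : M2R) (x : ℝ) : ℝ := (g 0 0 * x + g 0 1) / (g 1 0 * x + g 1 1)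

/-- Entrywise closeness of a matrix to the identity. -/
def NearOne (g : M2R) : Prop := ∀ i j, |g i j - (if i = j then 1 else 0)| ≤ 1 / 1000

theorem NearOne.entries {g : M2R} (h : NearOne g) : (|g 0 0 - 1| ≤ 1 / 1000 ∧ |g 0 1| ≤ 1 / 1000) ∧
    |g 1 0| ≤ 1 / 1000 ∧ |g 1 1 - 1| ≤ 1 / 1000 := by
  have h00 := h 0 0
  have h01 := h 0 1
  have h10 := h 1 0
  have h11 := h 1 1
  simp only [Fin.isValue, if_true, zero_ne_one, one_ne_zero, if_false, sub_zero] at h00 h01 h10 h11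
  exact ⟨⟨h00, h01⟩, h10, h11⟩

theorem mob_den {g : M2R} (h : NearOne g) {x : ℝ} (hx : 0 ≤ x) (hx1 : x ≤ 1) :
    499 / 500 ≤ g 1 0 * x + g 1 1 ∧ g 1 0 * x + g 1 1 ≤ 501 / 500 := by
  obtain ⟨-, h10, h11⟩ := h.entries
  rw [abs_le] at h10 h11
  constructor <;> nlinarith

theorem mob_near {g : M2R} (h : NearOne g) {x : ℝ} (hx : 0 ≤ x) (hx1 : x ≤ 1) :
    |mob g x - x| ≤ 1 / 200 := by
  obtain ⟨h1, h2⟩ := mob_den h hx hx1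
  obtain ⟨⟨h00, h01⟩, h10, h11⟩ := h.entries
  have e : mob g x - x = (g 0 1 + (g 0 0 - 1) * x - g 1 0 * x ^ 2 - (g 1 1 - 1) * x) /
      (g 1 0 * x + g 1 1) := by
    rw [mob, eq_div_iff (by linarith), sub_mul, div_mul_cancel₀ _ (by linarith)]; ring
  rw [e, abs_div, abs_of_pos (by linarith : 0 < g 1 0 * x + g 1 1), div_le_iff₀ (by linarith)]
  have hx2 : x ^ 2 ≤ 1 := by nlinarith
  have e1 : |(g 0 0 - 1) * x| ≤ 1 / 1000 := by
    rw [abs_mul, abs_of_nonneg hx]; nlinarith [abs_nonneg (g 0 0 - 1)]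
  have e2 : |(g 1 1 - 1) * x| ≤ 1 / 1000 := by
    rw [abs_mul, abs_of_nonneg hx]; nlinarith [abs_nonneg (g 1 1 - 1)]
  have e3 : |g 1 0 * x ^ 2| ≤ 1 / 1000 := by
    rw [abs_mul, abs_of_nonneg (sq_nonneg x)]; nlinarith [abs_nonneg (g 1 0)]
  rw [abs_le] at e1 e2 e3 h01 ⊢
  constructor <;> linarith

/-- Near the identity, a Möbius map has slope between `1 / 2` and `2` on `[0, 1]`. -/
theorem mob_slope {g : M2R} (h : NearOne g) (hd : g.det = 1) {x y : ℝ} (hx : 0 ≤ x) (hxy : x ≤ y)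
    (hy : y ≤ 1) : (y - x) / 2 ≤ mob g y - mob g x ∧ mob g y - mob g x ≤ 2 * (y - x) := by
  obtain ⟨h1, h2⟩ := mob_den h hx (hxy.trans hy)
  obtain ⟨h3, h4⟩ := mob_den h (hx.trans hxy) hy
  rw [Matrix.det_fin_two] at hd
  have e : mob g y - mob g x = (y - x) / ((g 1 0 * y + g 1 1) * (g 1 0 * x + g 1 1)) := by
    rw [mob, mob, div_sub_div _ _ (by linarith) (by linarith)]
    congr 1
    linear_combination (y - x) * hd
  have l1 : 1 / 2 ≤ (g 1 0 * y + g 1 1) * (g 1 0 * x + g 1 1) := by nlinarith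
  have l2 : (g 1 0 * y + g 1 1) * (g 1 0 * x + g 1 1) ≤ 2 := by nlinarith
  rw [e, le_div_iff₀ (by linarith), div_le_iff₀ (by linarith)]
  constructor <;> nlinarith

theorem hv_rho {N : ℕ} (hN : 0 < N) {G : ℝ → ℝ} (hG : Step N G) {g : M2R} (hd : g.det = 1) (x : ℝ) :
    (rho g (hG.hv hN)).1 (x, 1) = |g 1 0 * x + g 1 1|⁻¹ * G (mob g x) := by
  rw [rho_apply, Step.hv, lift_apply, hd]
  simp [mob]

theorem hv_one {N : ℕ} (hN : 0 < N) {G : ℝ → ℝ} (hG : Step N G) (x : ℝ) :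
    (hG.hv hN).1 (x, 1) = G x := by
  rw [Step.hv, lift_apply]
  simp

theorem UU_ge (S : Finset M2Z) (hS0 : 0 < S.card) (f h : HV) (B : ℝ)
    (hB : ∀ s ∈ S, ∀ s' ∈ S, B ≤ ip (rho (toR (s * s'.adjugate)) f) h) :
    B ≤ ip (UU S 1 f) h := by
  have hc : (0 : ℝ) < (S.card : ℝ) ^ 2 := by positivity
  rw [ip_UU_left, pow_one, le_inv_mul_iff₀ hc, pw_one, Multiset.map_map]
  refine le_trans (le_of_eq ?_) (Finset.card_nsmul_le_sum (S ×ˢ S)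
    (fun z : M2Z × M2Z => ip (rho (toR (z.1 * z.2.adjugate)) f) h) B fun z hz => ?_)
  · rw [Finset.card_product, nsmul_eq_mul]; push_cast; ring
  · rw [Finset.mem_product] at hz
    exact hB _ hz.1 _ hz.2

/-- If all translates of `A` by multiples of the block length lie in `B`, then no block carries
much more than its share of `A`. -/
theorem block_card (K m n : ℕ) (hm : 0 < m) (hn1 : (K - 1) * m ≤ n) (hn2 : n ≤ K * m)
    (A B : Finset ℤ) (hA : A ⊆ Finset.Ico 0 (n : ℤ))
    (H1 : ∀ i ∈ A, ∀ j : ℤ, |j| ≤ K → i + j * m ∈ Finset.Ico 0 (n : ℤ) → i + j * m ∈ B) (k : ℤ) :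
    (K - 1) * (A.filter fun i => i / (m : ℤ) = k).card ≤ B.card := by
  have hmz : (0 : ℤ) < m := by exact_mod_cast hm
  rw [show (K - 1) * (A.filter fun i => i / (m : ℤ) = k).card =
    (Finset.range (K - 1) ×ˢ A.filter fun i => i / (m : ℤ) = k).card by
      rw [Finset.card_product, Finset.card_range]]
  have hdiv : ∀ z ∈ Finset.range (K - 1) ×ˢ A.filter fun i => i / (m : ℤ) = k,
      (z.2 + ((z.1 : ℤ) - k) * m) / m = z.1 := by
    intro z hz
    rw [Finset.mem_product, Finset.mem_filter] at hz
    rw [Int.add_mul_ediv_right _ _ hmz.ne', hz.2.2]; ring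
  refine Finset.card_le_card_of_injOn (fun z => z.2 + ((z.1 : ℤ) - k) * m) (fun z hz => ?_) ?_
  · have hz' := hdiv z hz
    rw [Finset.mem_coe, Finset.mem_product, Finset.mem_filter, Finset.mem_range] at hz
    have h2 := Finset.mem_Ico.mp (hA hz.2.1)
    have hk0 : 0 ≤ k := by rw [← hz.2.2]; exact Int.ediv_nonneg h2.1 hmz.le
    have hkK : k < K := by
      rw [← hz.2.2]
      refine Int.ediv_lt_of_lt_mul hmz ?_
      have : (n : ℤ) ≤ K * m := by exact_mod_cast hn2
      omega
    refine H1 _ hz.2.1 _ ?_ ?_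
    · rw [abs_le]; omega
    · rw [Finset.mem_Ico]
      constructor
      · rw [← Int.ediv_nonneg_iff_of_pos hmz, hz']; positivity
      · have h3 : z.2 + ((z.1 : ℤ) - k) * m < (z.1 + 1) * m := by
          rw [← Int.ediv_lt_iff_lt_mul hmz, hz']; omega
        have h4 : ((z.1 + 1) * m : ℕ) ≤ n := (Nat.mul_le_mul_right m (by omega)).trans hn1
        have h5 : (((z.1 + 1) * m : ℕ) : ℤ) ≤ n := by exact_mod_cast h4
        push_cast at h5
        linarith
  · intro z hz w hw h
    have h1 := hdiv z hz
    have h2 := hdiv w hw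
    simp only at h
    rw [h, h2] at h1
    have h3 : w.1 = z.1 := by exact_mod_cast h1
    rw [h3] at h
    exact Prod.ext h3.symm (by linarith)

/-- If no block carries more than `M` points of `A`, the blocks near both ends carry few points of `A`. -/
theorem ends_card (K m n q M : ℕ) (hm : 0 < m) (hq : 2 * q + 1 ≤ K) (hn2 : n ≤ K * m)
    (A : Finset ℤ) (hA : A ⊆ Finset.Ico 0 (n : ℤ))
    (hM : ∀ k : ℤ, (A.filter fun i => i / (m : ℤ) = k).card ≤ M) :
    A.card ≤ (A.filter fun i => (q : ℤ) * m ≤ i ∧ i < ((K : ℤ) - 1 - q) * m).card + (2 * q + 1) * M := by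
  have hmz : (0 : ℤ) < m := by exact_mod_cast hm
  set T : Finset ℤ := Finset.Ico 0 (q : ℤ) ∪ Finset.Ico ((K : ℤ) - 1 - q) K with hT
  have hTc : T.card ≤ 2 * q + 1 := by
    refine (Finset.card_union_le _ _).trans ?_
    rw [Int.card_Ico, Int.card_Ico]; omega
  have hsub : A ⊆ (A.filter fun i => (q : ℤ) * m ≤ i ∧ i < ((K : ℤ) - 1 - q) * m) ∪
      T.biUnion fun k => A.filter fun i => i / (m : ℤ) = k := by
    intro i hi
    have h2 := Finset.mem_Ico.mp (hA hi)
    rw [Finset.mem_union, Finset.mem_filter, Finset.mem_biUnion]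
    by_cases h : (q : ℤ) * m ≤ i ∧ i < ((K : ℤ) - 1 - q) * m
    · exact Or.inl ⟨hi, h⟩
    · right
      refine ⟨i / m, ?_, Finset.mem_filter.mpr ⟨hi, rfl⟩⟩
      have hk0 : 0 ≤ i / m := Int.ediv_nonneg h2.1 hmz.le
      have hkK : i / m < K := by
        refine Int.ediv_lt_of_lt_mul hmz ?_
        have : (n : ℤ) ≤ K * m := by exact_mod_cast hn2
        omega
      rw [← Int.le_ediv_iff_mul_le hmz, ← Int.ediv_lt_iff_lt_mul hmz] at h
      rw [hT, Finset.mem_union, Finset.mem_Ico, Finset.mem_Ico]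
      omega
  refine (Finset.card_le_card hsub).trans ((Finset.card_union_le _ _).trans ?_)
  refine Nat.add_le_add_left ?_ _
  refine (Finset.card_biUnion_le_card_mul _ _ M fun k _ => hM k).trans ?_
  exact Nat.mul_le_mul_right _ hTc

/-! ### Expansion of sets of cells -/

/-- The indicator function of a finite set of cells of the partition of the line into intervals
of length `1 / N`. -/
noncomputable def ind (N : ℕ) (A : Finset ℤ) (x : ℝ) : ℝ := if ⌊(N : ℝ) * x⌋ ∈ A then 1 else 0

theorem ind_step {N : ℕ} {A : Finset ℤ} (hA : A ⊆ Finset.Ico 0 (N : ℤ)) : Step N (ind N A) :=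
  ⟨fun k => if k ∈ A then 1 else 0, fun _ => rfl, fun _ hk => if_neg fun h => hk (hA h)⟩

theorem ind_nonneg (N : ℕ) (A : Finset ℤ) (x : ℝ) : 0 ≤ ind N A x := by
  rw [ind]; split_ifs <;> norm_num

theorem ind_integral {N : ℕ} (hN : 0 < N) (A : Finset ℤ) : ∫ x, ind N A x = A.card / N := by
  have := step_sq_integral N hN A (fun k => if k ∈ A then 1 else 0) fun k hk => if_neg hk
  rw [Finset.sum_congr rfl fun k hk => if_pos hk] at this
  rw [Finset.sum_const, nsmul_eq_mul, mul_one] at this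
  exact this

theorem ind_sq (N : ℕ) (A : Finset ℤ) (x : ℝ) : ind N A x ^ 2 = ind N A x := by
  rw [ind]; split_ifs <;> norm_num

theorem cE_ind {K m : ℕ} (hK : 0 < K) (hm : 0 < m) (A : Finset ℤ) (x : ℝ) :
    cE K (ind (K * m) A) x =
      K * ((A.filter fun i => i / (m : ℤ) = ⌊(K : ℝ) * x⌋).card / ((K * m : ℕ) : ℝ)) := by
  rw [cE, ← ind_integral (Nat.mul_pos hK hm), ← integral_indicator measurableSet_Ico]
  congr 2; ext y
  by_cases hy : ⌊(K : ℝ) * y⌋ = ⌊(K : ℝ) * x⌋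
  · rw [Set.indicator_of_mem ((floor_cell K hK y _).mp hy), ind, ind]
    rw [floor_mul_coarse K m hm] at hy
    simp only [Finset.mem_filter, hy, and_true]
  · rw [Set.indicator_of_notMem fun h => hy ((floor_cell K hK y _).mpr h), ind, if_neg]
    rw [floor_mul_coarse K m hm] at hy
    exact fun h => hy (Finset.mem_filter.mp h).2

theorem UU_self_le (p : ℕ) (hp : p ≠ 0) (S : Finset M2Z) (hS : SepSet p S) (hS0 : 0 < S.card)
    (f : HV) : ip (UU S 1 f) f ≤ ip f f := by
  refine (le_abs_self _).trans (UU_abs_le S hS0 f f _ fun s hs s' hs' => ?_)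
  rw [← rho_sg p hp]
  refine (ip_abs_le _ _).trans (le_of_eq ?_)
  rw [ip_rho _ (by rw [sg_det p hp S hS hs hs']; norm_num), Real.mul_self_sqrt (ip_nonneg f)]

theorem UU_nonneg (p : ℕ) (hp : p ≠ 0) (S : Finset M2Z) (hS : SepSet p S) (f : HV) :
    0 ≤ ip (UU S 1 f) f := by
  rw [ip_UU_one p hp S hS]
  exact ip_nonneg _

set_option maxHeartbeats 1000000 in
/-- If `A ⊆ {0, …, n - 1}` has at most `n / 2` elements and its images under the translations by multiples
of the block length `m` and under the rounded Möbius maps lie in `B`, as far as they stay inside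
`{0, …, n - 1}`, then `B` has at least `11 / 10` times as many elements as `A`. -/
theorem core (p : ℕ) (hp : p ≠ 0) (S : Finset M2Z) (hS : SepSet p S) (hS0 : 0 < S.card)
    (hnear : ∀ s ∈ S, ∀ s' ∈ S, NearOne (sg p s s')) (K m : ℕ) (hK : 1000 ≤ K) (hm : 0 < m)
    (hN : 0 < K * m)
    (hgap : ∀ (F : ℝ → ℝ) (hF : Step (K * m) F), ZeroMean K F →
      ip (UU S 1 (hF.hv hN)) (hF.hv hN) ≤ 1 / 100 * ∫ x, F x ^ 2)
    (n : ℕ) (hn1 : (K - 1) * m ≤ n) (hn2 : n ≤ K * m)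
    (A B : Finset ℤ) (hA : A ⊆ Finset.Ico 0 (n : ℤ)) (hB : B ⊆ Finset.Ico 0 (n : ℤ))
    (hA0 : 0 < A.card) (hAn : 2 * A.card ≤ n)
    (H1 : ∀ i ∈ A, ∀ j : ℤ, |j| ≤ K → i + j * m ∈ Finset.Ico 0 (n : ℤ) → i + j * m ∈ B)
    (H2 : ∀ s ∈ S, ∀ s' ∈ S, ∀ i ∈ A, ∀ j : ℕ, j < 3 →
      ⌊((K * m : ℕ) : ℝ) * mob (sg p s s') (i / ((K * m : ℕ) : ℝ))⌋ + j ∈ Finset.Ico 0 (n : ℤ) →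
      ⌊((K * m : ℕ) : ℝ) * mob (sg p s s') (i / ((K * m : ℕ) : ℝ))⌋ + j ∈ B) :
    11 * A.card ≤ 10 * B.card := by
  by_contra! hlt
  set N := K * m with hNdef
  have hNr : (0 : ℝ) < (N : ℝ) := by exact_mod_cast hN
  have hKr : (1000 : ℝ) ≤ K := by exact_mod_cast hK
  have hmr : (0 : ℝ) < m := by exact_mod_cast hm
  have hNK : (N : ℝ) = K * m := by rw [hNdef]; push_cast; ring
  have hnN : Finset.Ico 0 (n : ℤ) ⊆ Finset.Ico 0 (N : ℤ) :=
    Finset.Ico_subset_Ico_right (by exact_mod_cast hn2)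
  have sF : Step N (ind N A) := ind_step (hA.trans hnN)
  have sG : Step N (ind N B) := ind_step (hB.trans hnN)
  have hK0 : 0 < K := by omega
  set E := cE K (ind N A) with hE
  have sE' : Step K E := cE_step hK0 hN sF
  have sE : Step N E := sE'.refine hm
  have sH : Step N (fun x => ind N A x - E x) := sF.sub sE
  set α : ℝ := A.card / N with hα
  set β : ℝ := B.card / N with hβ
  have hA0r : (0 : ℝ) < A.card := by exact_mod_cast hA0
  have hα0 : 0 < α := by positivity
  have hβ0 : 0 ≤ β := by positivity
  have hαβ : β ≤ 11 / 10 * α := by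
    rw [hβ, hα, ← mul_div_assoc]
    refine div_le_div_of_nonneg_right ?_ hNr.le
    have : (10 * B.card : ℝ) < 11 * A.card := by exact_mod_cast hlt
    linarith
  have hα2 : α ≤ 1 / 2 := by
    rw [hα, div_le_iff₀ hNr]
    have : (2 * A.card : ℝ) ≤ n := by exact_mod_cast hAn
    have : (n : ℝ) ≤ N := by exact_mod_cast hn2
    linarith
  have hblock := block_card K m n hm hn1 hn2 A B hA H1
  -- the conditional averages of the indicator of `A` are bounded pointwise
  set L : ℝ := 1000 / 999 * β with hL
  have hE0 : ∀ x, 0 ≤ E x := fun x => by rw [hE, cE_ind hK0 hm]; positivity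
  have hEL : ∀ x, E x ≤ L := by
    intro x
    rw [hE, cE_ind hK0 hm, hL, hβ, ← mul_div_assoc, ← mul_div_assoc]
    refine div_le_div_of_nonneg_right ?_ hNr.le
    have h1 : (((K - 1 : ℕ) : ℝ)) * (A.filter fun i => i / (m : ℤ) = ⌊(K : ℝ) * x⌋).card ≤ B.card := by
      exact_mod_cast hblock ⌊(K : ℝ) * x⌋
    rw [Nat.cast_sub (by omega), Nat.cast_one] at h1
    have h2 : (0 : ℝ) ≤ (A.filter fun i => i / (m : ℤ) = ⌊(K : ℝ) * x⌋).card := by positivity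
    nlinarith
  have hL1 : L ≤ 1 := by rw [hL]; linarith
  -- Points of `A` away from the ends are mapped into `B` by every Möbius map, whence a
  -- lower bound for the correlation of the indicators of `A` and `B`.
  set q := K / 100 with hq
  set A' := A.filter fun i => (q : ℤ) * m ≤ i ∧ i < ((K : ℤ) - 1 - q) * m with hA'
  have hAA' : 97 / 100 * α ≤ A'.card / N := by
    have h1 : A.card ≤ A'.card + (2 * q + 1) * (B.card / (K - 1)) := ends_card K m n q (B.card / (K - 1)) hm (by omega) hn2 A hA fun k => by
      rw [Nat.le_div_iff_mul_le (by omega), mul_comm]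
      exact hblock k
    have h2 : (2 * q + 1) * (B.card / (K - 1)) * 40 ≤ B.card := by
      calc (2 * q + 1) * (B.card / (K - 1)) * 40 = ((2 * q + 1) * 40) * (B.card / (K - 1)) := by ring
        _ ≤ (K - 1) * (B.card / (K - 1)) := Nat.mul_le_mul_right _ (by omega)
        _ ≤ B.card := Nat.mul_div_le _ _
    have h3 : 97 * A.card ≤ 100 * A'.card := by omega
    have h4 : (97 : ℝ) * A.card ≤ 100 * A'.card := by exact_mod_cast h3
    rw [hα, ← mul_div_assoc]
    refine div_le_div_of_nonneg_right ?_ hNr.le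
    linarith
  have hq1 : (K : ℝ) / 200 ≤ q := by
    have : K ≤ 200 * q := by omega
    have : (K : ℝ) ≤ 200 * q := by exact_mod_cast this
    linarith
  have hlow : 500 / 501 * (97 / 100 * α) ≤ ip (UU S 1 (sG.hv hN)) (sF.hv hN) := by
    refine UU_ge S hS0 _ _ _ fun s hs s' hs' => ?_
    rw [← rho_sg p hp]
    set g := sg p s s' with hg
    have hd : g.det = 1 := sg_det p hp S hS hs hs'
    have hgn : NearOne g := hnear s hs s' hs'
    refine (mul_le_mul_of_nonneg_left hAA' (by norm_num)).trans ?_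
    rw [← ind_integral hN, ← integral_const_mul, ip_def]
    refine integral_mono ?_ (hv_int_mul _ _) fun x => ?_
    · exact ((ind_step ((Finset.filter_subset _ _).trans (hA.trans hnN))).integrable hN).const_mul _
    · simp only [hv_rho hN sG hd, hv_one]
      by_cases hx : ⌊(N : ℝ) * x⌋ ∈ A'
      · have hxA' := hx
        rw [hA', Finset.mem_filter] at hx
        obtain ⟨hxA, hx1, hx2⟩ := hx
        set i := ⌊(N : ℝ) * x⌋ with hi
        have i1 : (i : ℝ) ≤ N * x := Int.floor_le _
        have i2 : N * x < i + 1 := Int.lt_floor_add_one _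
        have i3 : (q : ℝ) * m ≤ i := by exact_mod_cast hx1
        have i4 : (i : ℝ) + 1 ≤ (K - 1 - q) * m := by exact_mod_cast hx2
        have x1 : 1 / 200 ≤ x := by
          by_contra! h
          have : N * x < N * (1 / 200) := by nlinarith
          rw [hNK] at this i1
          nlinarith
        have x2 : K * x < K - 1 - q := by
          have : m * (K * x) < m * (K - 1 - q) := by
            calc m * (K * x) = N * x := by rw [hNK]; ring
              _ < m * (K - 1 - q) := by linarith
          exact lt_of_mul_lt_mul_left this hmr.le
        have x3 : x ≤ 1 := by
          by_contra! h
          have hq0 : (0 : ℝ) ≤ q := by positivity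
          nlinarith
        have hm1 := abs_le.mp (mob_near hgn (by linarith : 0 ≤ x) x3)
        have hin : ⌊(N : ℝ) * mob g x⌋ ∈ Finset.Ico 0 (n : ℤ) := by
          rw [Finset.mem_Ico, Int.floor_nonneg, Int.floor_lt]
          refine ⟨mul_nonneg hNr.le (by linarith), ?_⟩
          have h1 : (((K - 1) * m : ℕ) : ℝ) ≤ n := by exact_mod_cast hn1
          rw [Nat.cast_mul, Nat.cast_sub (by omega), Nat.cast_one] at h1
          rw [Int.cast_natCast]
          refine lt_of_lt_of_le ?_ h1
          rw [hNK, mul_comm (K : ℝ), mul_assoc, mul_comm _ (m : ℝ)]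
          refine mul_lt_mul_of_pos_left ?_ hmr
          nlinarith
        have hi0 : (0 : ℝ) ≤ i / N := by
          have : (0 : ℝ) ≤ q * m := by positivity
          exact div_nonneg (by linarith) hNr.le
        have hix : (i : ℝ) / N ≤ x := by rw [div_le_iff₀ hNr]; linarith
        obtain ⟨s1, s2⟩ := mob_slope hgn hd hi0 hix x3
        have s3 : N * (x - i / N) < 1 := by
          rw [mul_sub, mul_div_cancel₀ _ hNr.ne']; linarith
        have f1 : ⌊(N : ℝ) * mob g (i / N)⌋ ≤ ⌊(N : ℝ) * mob g x⌋ :=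
          Int.floor_le_floor (mul_le_mul_of_nonneg_left (by linarith) hNr.le)
        have f2 : ⌊(N : ℝ) * mob g x⌋ < ⌊(N : ℝ) * mob g (i / N)⌋ + 3 := by
          rw [Int.floor_lt]
          have := Int.lt_floor_add_one ((N : ℝ) * mob g (i / N))
          push_cast
          nlinarith
        have hjB := H2 s hs s' hs' i hxA (⌊(N : ℝ) * mob g x⌋ - ⌊(N : ℝ) * mob g (i / N)⌋).toNat
          (by omega)
        rw [Int.toNat_of_nonneg (by omega), ← hg, add_sub_cancel] at hjB
        obtain ⟨d1, d2⟩ := mob_den hgn (by linarith : 0 ≤ x) x3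
        rw [ind, ind, ind, if_pos hxA', if_pos hxA, if_pos (hjB hin), mul_one, mul_one, mul_one,
          abs_of_pos (by linarith), show (500 / 501 : ℝ) = (501 / 500)⁻¹ by norm_num]
        exact inv_anti₀ (by linarith) d2
      · rw [ind, if_neg hx, mul_zero]
        exact mul_nonneg (mul_nonneg (by positivity) (ind_nonneg _ _ _)) (ind_nonneg _ _ _)
  -- contribution of the conditional averages
  have hmain : ip (UU S 1 (sG.hv hN)) (sE.hv hN) ≤ 500 / 499 * L * β := by
    rw [ip_UU_symm p hp S hS, ip_comm]
    refine (le_abs_self _).trans (UU_abs_le S hS0 _ _ _ fun s hs s' hs' => ?_)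
    rw [← rho_sg p hp]
    have hd := sg_det p hp S hS hs hs'
    have hgn := hnear s hs s' hs'
    rw [hβ, ← ind_integral hN, ← integral_const_mul, ip_def]
    rw [← Real.norm_eq_abs]
    refine norm_integral_le_of_norm_le ((sG.integrable hN).const_mul _)
      (Filter.Eventually.of_forall fun x => ?_)
    rw [hv_rho hN sE hd, hv_one]
    by_cases hx : x ∈ Set.Ico (0 : ℝ) 1
    · obtain ⟨d1, d2⟩ := mob_den hgn hx.1 hx.2.le
      rw [Real.norm_eq_abs, abs_of_nonneg (mul_nonneg (mul_nonneg (by positivity) (hE0 _))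
        (ind_nonneg _ _ _)), abs_of_pos (by linarith)]
      refine mul_le_mul_of_nonneg_right ?_ (ind_nonneg _ _ _)
      refine mul_le_mul ?_ (hEL _) (hE0 _) (by norm_num)
      rw [show (500 / 499 : ℝ) = (499 / 500)⁻¹ by norm_num]
      exact inv_anti₀ (by norm_num) d1
    · rw [sG.zero_off hN hx, mul_zero, mul_zero, norm_zero]
  -- contribution of the mean-zero part
  have hFz := cE_zeroMean hK0 hN sF
  have hEint : ∫ x, E x = α := by
    have := hFz fun _ => 1
    simp only [mul_one] at this
    rw [integral_sub (sF.integrable hN) (sE.integrable hN), ind_integral hN] at this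
    linarith
  have hH2 : ∫ x, (ind N A x - E x) ^ 2 ≤ 2 * α := by
    have e : 2 * α = ∫ x, (ind N A x + E x) := by
      rw [integral_add (sF.integrable hN) (sE.integrable hN), hEint, ind_integral hN]; ring
    rw [e]
    refine integral_mono (sH.integrable_sq hN) ((sF.integrable hN).add (sE.integrable hN)) fun x => ?_
    have h1 := hE0 x
    have h2 := (hEL x).trans hL1
    have h3 := ind_sq N A x
    have h4 := ind_nonneg N A x
    show (ind N A x - E x) ^ 2 ≤ ind N A x + E x
    nlinarith [mul_nonneg h4 h1]
  have herr : ip (UU S 1 (sG.hv hN)) (sH.hv hN) ≤ 15 / 100 * α := by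
    refine (le_abs_self _).trans ((UU_cs p hp S hS _ _).trans ?_)
    rw [← Real.sqrt_mul' _ (UU_nonneg p hp S hS _)]
    refine Real.sqrt_le_iff.mpr ⟨by positivity, ?_⟩
    have e1 : ip (UU S 1 (sG.hv hN)) (sG.hv hN) ≤ β := by
      refine (UU_self_le p hp S hS hS0 _).trans (le_of_eq ?_)
      rw [hv_ip_self]
      simp only [ind_sq]
      exact ind_integral hN B
    have e2 : ip (UU S 1 (sH.hv hN)) (sH.hv hN) ≤ 1 / 50 * α := by
      refine (hgap _ sH hFz).trans ?_
      linarith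
    refine (mul_le_mul e1 e2 (UU_nonneg p hp S hS _) hβ0).trans ?_
    nlinarith
  have hsplit : sF.hv hN = sE.hv hN + sH.hv hN := by
    apply Subtype.ext
    funext w
    show (sF.hv hN).1 w = (sE.hv hN).1 w + (sH.hv hN).1 w
    simp only [Step.hv, lift_apply]
    ring
  rw [hsplit, map_add] at hlow
  have hβ2 : β * β ≤ 121 / 200 * α := by nlinarith
  rw [hL] at hmain
  nlinarith

/-! ### The monotone maps -/

/-- Passage from partial maps on `{0, …, n - 1} ⊆ ℤ`, given by a domain predicate and a formula,
to partial maps on `{1, …, n} ⊆ ℕ`. -/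
theorem transfer {ι : Type} {k n : ℕ} (e : Fin k ≃ ι) (D : ι → ℤ → Prop) (φ : ι → ℤ → ℤ)
    (hmono : ∀ i, ∀ x y : ℤ, 0 ≤ x → x < y → y < n → D i x → D i y → φ i x < φ i y)
    (hexp : ∀ A B : Finset ℤ, A ⊆ Finset.Ico 0 (n : ℤ) → B ⊆ Finset.Ico 0 (n : ℤ) →
      0 < A.card → 2 * A.card ≤ n →
      (∀ i, ∀ x ∈ A, D i x → φ i x ∈ Finset.Ico 0 (n : ℤ) → φ i x ∈ B) →
      11 * A.card ≤ 10 * B.card) :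
    ∃ (dom : Fin k → Finset ℕ) (f : Fin k → ℕ → ℕ),
      (∀ i, dom i ⊆ Finset.Icc 1 n) ∧
      (∀ i, ∀ x ∈ dom i, f i x ∈ Finset.Icc 1 n) ∧
      (∀ i, ∀ x ∈ dom i, ∀ y ∈ dom i, x < y → f i x < f i y) ∧
      (∀ A ⊆ Finset.Icc 1 n, (A.card : ℝ) ≤ (n : ℝ) / 2 →
        (1 + 1 / 10) * (A.card : ℝ) ≤
          ((Finset.univ.biUnion fun i => (A ∩ dom i).image (f i)).card : ℝ)) := by
  classical
  have hdom : ∀ i x, x ∈ (Finset.Icc 1 n).filter (fun x : ℕ => D (e i) ((x : ℤ) - 1) ∧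
      φ (e i) ((x : ℤ) - 1) ∈ Finset.Ico 0 (n : ℤ)) ↔ (1 ≤ x ∧ x ≤ n) ∧ D (e i) ((x : ℤ) - 1) ∧
      0 ≤ φ (e i) ((x : ℤ) - 1) ∧ φ (e i) ((x : ℤ) - 1) < n := by
    intro i x
    rw [Finset.mem_filter, Finset.mem_Icc, Finset.mem_Ico]
  refine ⟨fun i => (Finset.Icc 1 n).filter (fun x : ℕ => D (e i) ((x : ℤ) - 1) ∧
      φ (e i) ((x : ℤ) - 1) ∈ Finset.Ico 0 (n : ℤ)), fun i x => (φ (e i) ((x : ℤ) - 1)).toNat + 1,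
    fun i => Finset.filter_subset _ _, fun i x hx => ?_, fun i x hx y hy hxy => ?_,
    fun A hA hAn => ?_⟩
  · rw [hdom] at hx
    rw [Finset.mem_Icc]
    show 1 ≤ (φ (e i) ((x : ℤ) - 1)).toNat + 1 ∧ (φ (e i) ((x : ℤ) - 1)).toNat + 1 ≤ n
    omega
  · rw [hdom] at hx hy
    have := hmono (e i) ((x : ℤ) - 1) ((y : ℤ) - 1) (by omega) (by omega) (by omega) hx.2.1 hy.2.1
    show (φ (e i) ((x : ℤ) - 1)).toNat + 1 < (φ (e i) ((y : ℤ) - 1)).toNat + 1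
    omega
  · set B := Finset.univ.biUnion fun i => (A ∩ (Finset.Icc 1 n).filter (fun x : ℕ =>
      D (e i) ((x : ℤ) - 1) ∧ φ (e i) ((x : ℤ) - 1) ∈ Finset.Ico 0 (n : ℤ))).image
        (fun x : ℕ => (φ (e i) ((x : ℤ) - 1)).toNat + 1) with hB
    have hBmem : ∀ y ∈ B, 1 ≤ y ∧ y ≤ n := by
      intro y hy
      rw [hB, Finset.mem_biUnion] at hy
      obtain ⟨i, -, hy⟩ := hy
      rw [Finset.mem_image] at hy
      obtain ⟨x, hx, rfl⟩ := hy
      have := (hdom i x).mp (Finset.mem_inter.mp hx).2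
      omega
    have hinj : Function.Injective fun x : ℕ => (x : ℤ) - 1 := fun x y h => by
      simp only at h; omega
    have key := hexp (A.image fun x : ℕ => (x : ℤ) - 1) (B.image fun x : ℕ => (x : ℤ) - 1)
    rw [Finset.card_image_of_injective _ hinj, Finset.card_image_of_injective _ hinj] at key
    rcases Nat.eq_zero_or_pos A.card with h0 | h0
    · rw [h0]; simp
    · have := key (fun z hz => ?_) (fun z hz => ?_) h0 ?_ (fun i z hz hD hφ => ?_)
      · have : (11 : ℝ) * A.card ≤ 10 * B.card := by exact_mod_cast this
        linarith
      · obtain ⟨x, hx, rfl⟩ := Finset.mem_image.mp hz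
        have := Finset.mem_Icc.mp (hA hx)
        rw [Finset.mem_Ico]; omega
      · obtain ⟨x, hx, rfl⟩ := Finset.mem_image.mp hz
        have := hBmem x hx
        rw [Finset.mem_Ico]; omega
      · have : (2 : ℝ) * A.card ≤ n := by linarith
        exact_mod_cast this
      · obtain ⟨x, hx, rfl⟩ := Finset.mem_image.mp hz
        have hx1 := Finset.mem_Icc.mp (hA hx)
        have hφ' := Finset.mem_Ico.mp hφ
        refine Finset.mem_image.mpr ⟨(φ i ((x : ℤ) - 1)).toNat + 1, ?_, by omega⟩
        rw [hB, Finset.mem_biUnion]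
        refine ⟨e.symm i, Finset.mem_univ _, Finset.mem_image.mpr ⟨x, ?_, by rw [e.apply_symm_apply]⟩⟩
        rw [Finset.mem_inter, hdom, e.apply_symm_apply]
        have key := hφ'
        exact ⟨hx, hx1, hD, key⟩

/-- **Existence of discrete bipartite monotone expanders.**
There exist `c > 0` and a positive integer `k` such that for every positive `n`
there are `k` partial maps on `{1,…,n}`, each strictly increasing on its domain,
such that every `A ⊆ {1,…,n}` with `|A| ≤ n/2` has union of images of
cardinality at least `(1 + c)·|A|`. -/
theorem discrete_monotone_expander_exists :
    ∃ c : ℝ, 0 < c ∧ ∃ k : ℕ, 0 < k ∧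
      ∀ n : ℕ, 0 < n →
        ∃ (dom : Fin k → Finset ℕ) (f : Fin k → ℕ → ℕ),
          (∀ i, dom i ⊆ Finset.Icc 1 n) ∧
          (∀ i, ∀ x ∈ dom i, f i x ∈ Finset.Icc 1 n) ∧
          (∀ i, ∀ x ∈ dom i, ∀ y ∈ dom i, x < y → f i x < f i y) ∧
          (∀ A ⊆ Finset.Icc 1 n, (A.card : ℝ) ≤ (n : ℝ) / 2 →
            (1 + c) * (A.card : ℝ) ≤
              ((Finset.univ.biUnion fun i => (A ∩ dom i).image (f i)).card : ℝ)) := by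
  obtain ⟨p, S, b, K0, hp, hS, hS0, hb, hnear, hgap⟩ := gap (1 / 100) (by norm_num) 66000 (by norm_num)
  have hnear' : ∀ s ∈ S, ∀ s' ∈ S, NearOne (sg p s s') := fun s hs s' hs' i j =>
    (hnear s hs s' hs' i j).trans (by norm_num)
  set K1 := max K0 1000 with hK1
  have hK1p : 0 < K1 := by omega
  -- The maps: all single-point maps on the first `K1` points (needed for small `n`), translations by
  -- multiples of a block, and rounded Möbius maps with an offset in `{0, 1, 2}`, restricted to a
  -- parity class because slope at least `1 / 2` separates the rounded values only of points at
  -- distance at least two.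
  set ι := (Fin K1 × Fin K1) ⊕ (Fin (2 * (K1 * b) + 1) ⊕ ((S × S) × (Fin 3 × Fin 2))) with hι
  refine ⟨1 / 10, by norm_num, Fintype.card ι, ?_, fun n hn => ?_⟩
  · exact Fintype.card_pos_iff.mpr ⟨Sum.inl (⟨0, hK1p⟩, ⟨0, hK1p⟩)⟩
  have e : Fin (Fintype.card ι) ≃ ι := (Fintype.equivFin ι).symm
  rcases lt_or_ge n K1 with hnK | hnK
  · refine transfer e (fun i x => match i with
      | Sum.inl (a, _) => x = a.1
      | Sum.inr _ => False) (fun i _ => match i with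
      | Sum.inl (_, a) => a.1
      | Sum.inr _ => 0) ?_ ?_
    · rintro (⟨a, a'⟩ | _) x y h0 h1 h2 h3 h4
      · simp only at h3 h4; omega
      · exact h3.elim
    · intro A B hA hB hA0 hAn H
      obtain ⟨x, hx⟩ := Finset.card_pos.mp hA0
      have hx1 := Finset.mem_Ico.mp (hA hx)
      have : Finset.Ico 0 (n : ℤ) ⊆ B := by
        intro y hy
        have hy1 := Finset.mem_Ico.mp hy
        have := H (Sum.inl (⟨x.toNat, by omega⟩, ⟨y.toNat, by omega⟩)) x hx
          (by simp only; omega)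
        simp only [Int.toNat_of_nonneg hy1.1] at this
        exact this hy
      have := Finset.card_le_card this
      rw [Int.card_Ico] at this
      omega
  · -- the block length is the largest power of `b` such that there are at least `K1` blocks
    set t := Nat.log b (n / K1) with ht
    set m := b ^ t with hm
    have hm0 : 0 < m := by positivity
    have hq : n / K1 ≠ 0 := (Nat.div_pos hnK hK1p).ne'
    have hm1 : K1 * m ≤ n := by
      rw [mul_comm]
      exact (Nat.le_div_iff_mul_le hK1p).mp (Nat.pow_log_le_self b hq)
    have hm2 : n < K1 * b * m := by
      have h1 := Nat.lt_pow_succ_log_self (by omega : 1 < b) (n / K1)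
      rw [Nat.div_lt_iff_lt_mul hK1p] at h1
      calc n < b ^ (t + 1) * K1 := h1
        _ = K1 * b * m := by rw [hm, pow_succ]; ring
    set K := (n + m - 1) / m with hK
    have hKn : n ≤ K * m := by
      have := Nat.lt_div_mul_add (a := n + m - 1) hm0
      rw [← hK] at this
      omega
    have hKn1 : (K - 1) * m ≤ n := by
      have := Nat.div_mul_le_self (n + m - 1) m
      rw [← hK] at this
      rw [Nat.sub_mul]; omega
    have hKK : K1 ≤ K := by
      by_contra! h
      have := Nat.mul_le_mul_right m (by omega : K + 1 ≤ K1)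
      rw [add_mul] at this
      omega
    have hKb : K ≤ K1 * b := by
      by_contra! h
      have := Nat.mul_le_mul_right m (by omega : K1 * b ≤ K - 1)
      omega
    have hN : 0 < K * m := Nat.mul_pos (by omega) hm0
    have hNr : (0 : ℝ) < ((K * m : ℕ) : ℝ) := by exact_mod_cast hN
    refine transfer e (fun i x => match i with
      | Sum.inl _ => False
      | Sum.inr (Sum.inl _) => True
      | Sum.inr (Sum.inr z) => x % 2 = z.2.2.1) (fun i x => match i with
      | Sum.inl _ => 0
      | Sum.inr (Sum.inl j) => x + ((j.1 : ℤ) - (K1 * b : ℕ)) * m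
      | Sum.inr (Sum.inr z) => ⌊((K * m : ℕ) : ℝ) * mob (sg p z.1.1.1 z.1.2.1)
          (x / ((K * m : ℕ) : ℝ))⌋ + (z.2.1.1 : ℕ)) ?_ ?_
    · rintro (_ | _ | ⟨⟨⟨s, hs⟩, ⟨s', hs'⟩⟩, j, r⟩) x y h0 h1 h2 h3 h4
      · exact h3.elim
      · simp only; omega
      · simp only at h3 h4 ⊢
        have h5 : x + 2 ≤ y := by omega
        have h5r : (x : ℝ) + 2 ≤ y := by exact_mod_cast h5
        have h0r : (0 : ℝ) ≤ x := by exact_mod_cast h0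
        have h6 : y ≤ ((K * m : ℕ) : ℤ) := by
          have : (n : ℤ) ≤ ((K * m : ℕ) : ℤ) := by exact_mod_cast hKn
          omega
        have h6r : (y : ℝ) ≤ ((K * m : ℕ) : ℝ) := by exact_mod_cast h6
        have hs := (mob_slope (hnear' s hs s' hs') (sg_det p hp S hS hs hs')
          (x := x / ((K * m : ℕ) : ℝ)) (y := y / ((K * m : ℕ) : ℝ)) (by positivity)
          (div_le_div_of_nonneg_right (by linarith) hNr.le) ((div_le_one hNr).mpr h6r)).1
        have h7 : ⌊((K * m : ℕ) : ℝ) * mob (sg p s s') (x / ((K * m : ℕ) : ℝ))⌋ + 1 ≤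
            ⌊((K * m : ℕ) : ℝ) * mob (sg p s s') (y / ((K * m : ℕ) : ℝ))⌋ := by
          rw [← Int.floor_add_one]
          refine Int.floor_le_floor ?_
          have h8 := mul_le_mul_of_nonneg_left hs hNr.le
          rw [← sub_div, ← mul_div_assoc, mul_div_cancel₀ _ hNr.ne', mul_sub] at h8
          linarith
        omega
    · intro A B hA hB hA0 hAn H
      refine core p hp S hS hS0 hnear' K m (by omega) hm0 hN
        (fun F hF hz => hgap K (by omega) t hN F hF hz) n hKn1 hKn A B hA hB hA0 hAn ?_ ?_
      · intro i hi j hj hij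
        rw [abs_le] at hj
        have hKbz : (K : ℤ) ≤ (K1 * b : ℕ) := by exact_mod_cast hKb
        have hj' : ((j + (K1 * b : ℕ)).toNat : ℤ) - (K1 * b : ℕ) = j := by
          rw [Int.toNat_of_nonneg (by omega)]; ring
        have := H (Sum.inr (Sum.inl ⟨(j + (K1 * b : ℕ)).toNat, by omega⟩)) i hi trivial
        simp only [hj'] at this
        exact this hij
      · intro s hs s' hs' i hi j hj hij
        exact H (Sum.inr (Sum.inr ((⟨s, hs⟩, ⟨s', hs'⟩), (⟨j, hj⟩, ⟨(i % 2).toNat, by omega⟩)))) i hi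
          (by simp only; omega) hij
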